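/- For every integer d ≥ 6 and every positive integer n, there exists a compact, simply connected topological d-dimensional manifold M without boundary (a compact Hausdorff space locally homeomorphic to ℝ^d) such that the second homotopy group π_2(M) is isomorphic, as a group, to ℤ/nℤ. -/

import Mathlib

open Topology

/-!
Write `d = m + 6`. The manifold `M` is obtained from `S² × S^(m+4)` by surgery on an embedded
2-sphere `Σ` that represents `n` times a generator of `π₂(S² × S^(m+4)) ≅ ℤ`. Such a sphere is a
graph: `Σ = {(p(w), w)}` with `w` in a great 2-sphere of `S^(m+4)` and `p : S² → S²` of degree `n`.
Thus `M = A ∪ B`, where `A` is the complement of `Σ`, the handle `B` is the product of a ball of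
radius `1 / 2` in `ℝ³` with `S^(m+3)`, and `B` is glued to `A` along the complement of the core
`0 × S^(m+3)`, onto a punctured tubular neighbourhood of `Σ`.

`A` is simply connected with `π₂(A) ≅ ℤ`, detected by the degree of the first factor: pulled back
along the Hopf map, `A` becomes the complement of a closed set of codimension at least four, where
cubes of dimension at most two can be coned off in general position. Every cube of dimension at
most two in `M` can be pushed off the core of `B`, hence into `A`. So `M` is simply connected, and
`π₂(M)` is generated by the generator `γ` of `π₂(A)`, with `γ ^ n = 1` because `Σ` bounds a ball
in `B`.

That the order of `γ` is exactly `n` is seen by an additive 2-cocycle on singular squares of `M`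
with values in `ℝ / ℤ`. On `A` it is the degree cocycle divided by `n`. On the overlap this is the
degree cocycle of `p`, divided by `n`, which is modulo `ℤ` the coboundary of a path cochain; since
`ℝ / ℤ` is divisible, that cochain extends to the paths of `B`, and its coboundary continues the
cocycle over `M`. Evaluation on `π₂(M)` is injective, with image generated by `1 / n`.
-/

noncomputable section

namespace SphereSurgery

open unitInterval

/-! ### Cochains on singular cubes and their subdivision -/

section Subdivision

variable {Q X Y D K K' : Type*}

/-- All the pieces `s ∘ e k` of `s` satisfy `p`. -/
def EveryPiece (e : K → Q → Q) (p : (Q → X) → Prop) : (Q → X) → Prop := fun s => ∀ k, p (s ∘ e k)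

theorem EveryPiece.iterate_mono {e : K → Q → Q} {p : (Q → X) → Prop}
    (hp : ∀ s, p s → EveryPiece e p s) {N M : ℕ} (hNM : N ≤ M) {s : Q → X}
    (hs : (EveryPiece e)^[N] p s) : (EveryPiece e)^[M] p s := by
  have succ : ∀ N s, (EveryPiece e)^[N] p s → (EveryPiece e)^[N + 1] p s := by
    intro N
    induction N with
    | zero => exact hp
    | succ N ih =>
      intro s hs
      rw [Function.iterate_succ_apply'] at hs ⊢
      exact fun k => ih _ (hs k)
  induction M, hNM using Nat.le_induction with
  | base => exact hs
  | succ M _ ih => exact succ M s ih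

variable [Fintype K] [Fintype K'] [AddCommMonoid D]

/-- The sum of a cochain `c` over the pieces `s ∘ e k` of a singular cube `s`. -/
def subdivisionSum (e : K → Q → Q) (c : (Q → X) → D) : (Q → X) → D := fun s => ∑ k, c (s ∘ e k)

theorem subdivisionSum_iterate_congr (e : K → Q → Q) {p : (Q → X) → Prop} {c c' : (Q → X) → D}
    (h : ∀ s, p s → c s = c' s) (N : ℕ) {s : Q → X} (hs : (EveryPiece e)^[N] p s) :
    (subdivisionSum e)^[N] c s = (subdivisionSum e)^[N] c' s := by
  induction N generalizing s with
  | zero => exact h s hs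
  | succ N ih =>
    rw [Function.iterate_succ_apply'] at hs ⊢
    rw [Function.iterate_succ_apply']
    exact Finset.sum_congr rfl fun k _ => ih (hs k)

theorem subdivisionSum_iterate_zero (e : K → Q → Q) (N : ℕ) (s : Q → X) :
    (subdivisionSum e)^[N] (fun _ => (0 : D)) s = 0 := by
  induction N generalizing s with
  | zero => rfl
  | succ N ih =>
    rw [Function.iterate_succ_apply']
    exact Finset.sum_eq_zero fun k _ => ih _

theorem subdivisionSum_iterate_stable {e : K → Q → Q} {p : (Q → X) → Prop} {c : (Q → X) → D}
    (hp : ∀ s, p s → EveryPiece e p s) (h : ∀ s, p s → c s = subdivisionSum e c s) {N M : ℕ}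
    (hNM : N ≤ M) {s : Q → X} (hs : (EveryPiece e)^[N] p s) :
    (subdivisionSum e)^[M] c s = (subdivisionSum e)^[N] c s := by
  induction M, hNM using Nat.le_induction with
  | base => rfl
  | succ M hM ih =>
    rw [← ih, Function.iterate_succ_apply]
    exact (subdivisionSum_iterate_congr e h M (EveryPiece.iterate_mono hp hM hs)).symm

/-- The value at `s` of the cochain that extends `c` from small cubes: the sum of `c` over
the `N`-fold subdivision of `s`, for some `N` making all pieces satisfy `p` (and `0` if there is
none). -/
def subdividedValue (e : K → Q → Q) (p : (Q → X) → Prop) (c : (Q → X) → D) (s : Q → X) : D :=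
  open Classical in
  if h : ∃ N, (EveryPiece e)^[N] p s then (subdivisionSum e)^[h.choose] c s else 0

section SmallCubes

variable {e : K → Q → Q} {p : (Q → X) → Prop} {c : (Q → X) → D}
  (hp : ∀ s, p s → EveryPiece e p s) (hc : ∀ s, p s → c s = subdivisionSum e c s)

include hp hc

theorem subdividedValue_eq {N : ℕ} {s : Q → X} (hs : (EveryPiece e)^[N] p s) :
    subdividedValue e p c s = (subdivisionSum e)^[N] c s := by
  have h : ∃ N, (EveryPiece e)^[N] p s := ⟨N, hs⟩
  rw [subdividedValue, dif_pos h,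
    ← subdivisionSum_iterate_stable hp hc (le_max_left h.choose N) h.choose_spec,
    ← subdivisionSum_iterate_stable hp hc (le_max_right h.choose N) hs]

theorem subdividedValue_eq_subdivisionSum {e' : K' → Q → Q}
    (he' : ∀ s, p s → c s = subdivisionSum e' c s)
    (hcomm : Function.Commute (subdivisionSum e : ((Q → X) → D) → _) (subdivisionSum e'))
    {s : Q → X} (hs : ∃ N, (EveryPiece e)^[N] p s)
    (hs' : EveryPiece e' (fun s => ∃ N, (EveryPiece e)^[N] p s) s) :
    subdividedValue e p c s = subdivisionSum e' (subdividedValue e p c) s := by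
  obtain ⟨N, hN⟩ := hs
  choose N' hN' using hs'
  let M := max N (Finset.univ.sup N')
  have hM : (EveryPiece e)^[M] p s := EveryPiece.iterate_mono hp (le_max_left _ _) hN
  have hM' (k : K') : (EveryPiece e)^[M] p (s ∘ e' k) :=
    EveryPiece.iterate_mono hp ((Finset.le_sup (Finset.mem_univ k)).trans (le_max_right _ _))
      (hN' k)
  rw [subdividedValue_eq hp hc hM, subdivisionSum_iterate_congr e he' M hM, hcomm.iterate_left M c]
  exact Finset.sum_congr rfl fun k _ => (subdividedValue_eq hp hc (hM' k)).symm

end SmallCubes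

variable [TopologicalSpace Q] [TopologicalSpace X] [TopologicalSpace Y]

/-- `s` is a continuous singular cube in `U`. -/
def IsCubeIn (U : Set X) (s : Q → X) : Prop := Continuous s ∧ ∀ q, s q ∈ U

/-- On the singular cubes in `U`, the cochain `c` is unchanged by the subdivision `e`. -/
def AdditiveOn (e : K → Q → Q) (U : Set X) (c : (Q → X) → D) : Prop :=
  ∀ s, IsCubeIn U s → c s = subdivisionSum e c s

theorem IsCubeIn.comp_continuousOn {U : Set X} {V : Set Y} {s : Q → X} (hs : IsCubeIn U s)
    {f : X → Y} (hf : ContinuousOn f U) (hfU : Set.MapsTo f U V) : IsCubeIn V (f ∘ s) :=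
  ⟨hf.comp_continuous hs.1 hs.2, fun q => hfU (hs.2 q)⟩

theorem IsCubeIn.comp {Q' : Type*} [TopologicalSpace Q'] {U : Set X} {s : Q → X}
    (hs : IsCubeIn U s) {g : Q' → Q} (hg : Continuous g) : IsCubeIn U (s ∘ g) :=
  ⟨hs.1.comp hg, fun q => hs.2 (g q)⟩

theorem IsCubeIn.mono {U V : Set X} (hUV : U ⊆ V) {s : Q → X} (hs : IsCubeIn U s) : IsCubeIn V s :=
  ⟨hs.1, fun q => hUV (hs.2 q)⟩

theorem AdditiveOn.mono {e : K → Q → Q} {U V : Set X} {c : (Q → X) → D} (h : AdditiveOn e V c)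
    (hUV : U ⊆ V) : AdditiveOn e U c :=
  fun s hs => h s (hs.mono hUV)

theorem AdditiveOn.pullback {e : K → Q → Q} {U : Set X} {V : Set Y} {c : (Q → Y) → D}
    (h : AdditiveOn e V c) {f : X → Y} (hf : ContinuousOn f U) (hfU : Set.MapsTo f U V) :
    AdditiveOn e U (fun s => c (f ∘ s)) :=
  fun s hs => h (f ∘ s) (hs.comp_continuousOn hf hfU)

theorem AdditiveOn.congr {e : K → Q → Q} (he : ∀ k, Continuous (e k)) {U : Set X}
    {c c' : (Q → X) → D} (h : AdditiveOn e U c) (hc : ∀ s, IsCubeIn U s → c' s = c s) :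
    AdditiveOn e U c' := fun s hs =>
  (hc s hs).trans <| (h s hs).trans <|
    Finset.sum_congr rfl fun k _ => (hc _ (hs.comp (he k))).symm

end Subdivision

section LebesgueNumber

universe v

variable {Q X D : Type*} {K : Type v} [PseudoMetricSpace Q] {e : K → Q → Q}

theorem everyPiece_iterate_of_dist_le (he : ∀ k x y, dist (e k x) (e k y) ≤ dist x y / 2)
    {p : (Q → X) → Prop} (s : Q → X) (N : ℕ) {C : ℝ} {g : Q → Q} (hC : 0 ≤ C)
    (hg : ∀ x y, dist (g x) (g y) ≤ C * dist x y)
    (hp : ∀ g' : Q → Q, (∀ x y, dist (g' x) (g' y) ≤ C / 2 ^ N * dist x y) → p (s ∘ g')) :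
    (EveryPiece e)^[N] p (s ∘ g) := by
  induction N generalizing C g with
  | zero => exact hp g (by simpa using hg)
  | succ N ih =>
    rw [Function.iterate_succ_apply']
    refine fun k => ih (C := C / 2) (g := g ∘ e k) (by positivity) (fun x y => ?_) fun g' hg' => ?_
    · calc dist (g (e k x)) (g (e k y)) ≤ C * dist (e k x) (e k y) := hg _ _
        _ ≤ C * (dist x y / 2) := mul_le_mul_of_nonneg_left (he k x y) hC
        _ = C / 2 * dist x y := by ring
    · refine hp g' fun x y => (hg' x y).trans_eq ?_
      rw [pow_succ]
      field_simp

theorem continuous_of_dist_le_half (he : ∀ k x y, dist (e k x) (e k y) ≤ dist x y / 2) (k : K) :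
    Continuous (e k) :=
  (LipschitzWith.of_dist_le_mul (K := 1 / 2) fun x y => (he k x y).trans_eq <| by
    push_cast; ring).continuous

theorem exists_everyPiece_iterate_isCubeIn [TopologicalSpace X] [CompactSpace Q]
    (he : ∀ k x y, dist (e k x) (e k y) ≤ dist x y / 2) {U V : Set X} (hU : IsOpen U)
    (hV : IsOpen V) {s : Q → X} (hs : IsCubeIn (U ∪ V) s) :
    ∃ N, (EveryPiece e)^[N] (fun s => IsCubeIn U s ∨ IsCubeIn V s) s := by
  obtain ⟨δ, hδ, hball⟩ := lebesgue_number_lemma_of_metric (s := Set.univ)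
    (c := fun b : Bool => s ⁻¹' (bif b then U else V)) isCompact_univ
    (by rintro (_ | _); exacts [hV.preimage hs.1, hU.preimage hs.1])
    (fun q _ => Set.mem_iUnion.2 <| (hs.2 q).elim (fun h => ⟨true, h⟩) fun h => ⟨false, h⟩)
  obtain ⟨R, hR0, hR⟩ : ∃ R > 0, ∀ x y : Q, dist x y ≤ R := by
    obtain ⟨R, hR⟩ := Metric.isBounded_iff.1 (isCompact_univ (X := Q)).isBounded
    exact ⟨max R 1, by positivity, fun x y => (hR trivial trivial).trans (le_max_left _ _)⟩
  obtain ⟨N, hN⟩ := exists_pow_lt_of_lt_one (div_pos hδ hR0) (show (1 / 2 : ℝ) < 1 by norm_num)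
  refine ⟨N, everyPiece_iterate_of_dist_le he s N (g := id) zero_le_one (by simp) fun g hg => ?_⟩
  have hgc : Continuous g :=
    (LipschitzWith.of_dist_le_mul (K := ⟨1 / 2 ^ N, by positivity⟩) hg).continuous
  rcases isEmpty_or_nonempty Q with hQ | ⟨⟨q₀⟩⟩
  · exact Or.inl ⟨hs.1.comp hgc, fun q => hQ.elim q⟩
  have hsmall (q : Q) : g q ∈ Metric.ball (g q₀) δ := by
    calc dist (g q) (g q₀) ≤ 1 / 2 ^ N * dist q q₀ := hg _ _
      _ ≤ (1 / 2) ^ N * R := by rw [one_div_pow]; gcongr; exact hR _ _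
      _ < δ := (lt_div_iff₀ hR0).1 hN
  obtain ⟨_ | _, hi⟩ := hball (g q₀) trivial
  · exact Or.inr ⟨hs.1.comp hgc, fun q => hi (hsmall q)⟩
  · exact Or.inl ⟨hs.1.comp hgc, fun q => hi (hsmall q)⟩

variable [Fintype K] [AddCommMonoid D] [TopologicalSpace X] [CompactSpace Q]
  (he : ∀ k x y, dist (e k x) (e k y) ≤ dist x y / 2)

include he

theorem AdditiveOn.eq_zero_of_cover {U V : Set X} (hU : IsOpen U) (hV : IsOpen V)
    {c : (Q → X) → D} (hc : AdditiveOn e (U ∪ V) c) (hcU : ∀ s, IsCubeIn U s → c s = 0)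
    (hcV : ∀ s, IsCubeIn V s → c s = 0) {s : Q → X} (hs : IsCubeIn (U ∪ V) s) : c s = 0 := by
  obtain ⟨N, hN⟩ := exists_everyPiece_iterate_isCubeIn he hU hV hs
  calc c s = (subdivisionSum e)^[N] c s := (subdivisionSum_iterate_stable (N := 0)
        (fun s hs k => hs.comp (continuous_of_dist_le_half he k)) hc (Nat.zero_le N) hs).symm
    _ = (subdivisionSum e)^[N] (fun _ => 0) s :=
        subdivisionSum_iterate_congr e (fun s h => h.elim (hcU s) (hcV s)) N hN
    _ = 0 := subdivisionSum_iterate_zero e N s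

/-- Mayer–Vietoris for additive cochains. The second subdivision `e'` accounts for cochains
that are additive in several directions. -/
theorem AdditiveOn.exists_glue {U V : Set X} (hU : IsOpen U) (hV : IsOpen V)
    {b b' : (Q → X) → D} (hb : AdditiveOn e U b) (hb' : AdditiveOn e V b')
    (hbb' : ∀ s, IsCubeIn U s → IsCubeIn V s → b s = b' s) :
    ∃ β : (Q → X) → D, (∀ s, IsCubeIn U s → β s = b s) ∧ (∀ s, IsCubeIn V s → β s = b' s) ∧
      ∀ {K' : Type v} [Fintype K'] {e' : K' → Q → Q}, (∀ k, Continuous (e' k)) →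
        AdditiveOn e' U b → AdditiveOn e' V b' →
        Function.Commute (subdivisionSum e : ((Q → X) → D) → _) (subdivisionSum e') →
        AdditiveOn e' (U ∪ V) β := by
  classical
  let c : (Q → X) → D := fun s => if IsCubeIn U s then b s else b' s
  let p : (Q → X) → Prop := fun s => IsCubeIn U s ∨ IsCubeIn V s
  have hcU (s) (hs : IsCubeIn U s) : c s = b s := if_pos hs
  have hcV (s) (hs : IsCubeIn V s) : c s = b' s := by
    by_cases h : IsCubeIn U s
    · rw [hcU s h, hbb' s h hs]
    · exact if_neg h
  have hc {K' : Type v} [Fintype K'] {e' : K' → Q → Q} (he' : ∀ k, Continuous (e' k))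
      (h : AdditiveOn e' U b) (h' : AdditiveOn e' V b') (s) (hs : p s) :
      c s = subdivisionSum e' c s :=
    hs.elim (h.congr he' hcU s) (h'.congr he' hcV s)
  have hecont := continuous_of_dist_le_half he
  have hp (s) (hs : p s) : EveryPiece e p s := fun k =>
    hs.imp (fun h => h.comp (hecont k)) fun h => h.comp (hecont k)
  have hβ (s) (hs : p s) : subdividedValue e p c s = c s :=
    subdividedValue_eq hp (hc hecont hb hb') (N := 0) hs
  refine ⟨subdividedValue e p c, fun s hs => (hβ s (.inl hs)).trans (hcU s hs),
    fun s hs => (hβ s (.inr hs)).trans (hcV s hs), fun {K'} _ e' he' h h' hcomm s hs => ?_⟩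
  exact subdividedValue_eq_subdivisionSum hp (hc hecont hb hb') (hc he' h h') hcomm
    (exists_everyPiece_iterate_isCubeIn he hU hV hs)
    fun k => exists_everyPiece_iterate_isCubeIn he hU hV (hs.comp (he' k))

end LebesgueNumber

/-! ### Additive cochains on paths and squares -/

section Halving

/-- The affine map of the unit interval onto its lower (`false`) or upper (`true`) half. -/
def half (b : Bool) (t : I) : I :=
  ⟨((t : ℝ) + (bif b then 1 else 0)) / 2, by
    have := t.2.1; have := t.2.2
    cases b <;> simp <;> constructor <;> linarith⟩

theorem half_false_zero : half false 0 = 0 := by ext; simp [half]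

theorem half_true_one : half true 1 = 1 := by ext; simp [half]

theorem half_true_zero : half true 0 = half false 1 := by ext; simp [half]

theorem dist_half_le (b : Bool) (x y : I) : dist (half b x) (half b y) ≤ dist x y / 2 := by
  rw [Subtype.dist_eq, Subtype.dist_eq, Real.dist_eq, Real.dist_eq]
  simp only [half]
  rw [← sub_div, add_sub_add_right_eq_sub, abs_div, abs_two]

@[fun_prop]
theorem continuous_half (b : Bool) : Continuous (half b) := by
  unfold half
  fun_prop

/-- Halving of the unit square in the first direction. -/
def halfFst (b : Bool) : I × I → I × I := Prod.map (half b) id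

/-- Halving of the unit square in the second direction. -/
def halfSnd (b : Bool) : I × I → I × I := Prod.map id (half b)

/-- Subdivision of the unit square into four squares. -/
def halfSquare (b : Bool × Bool) : I × I → I × I := Prod.map (half b.1) (half b.2)

/-- Subdivision of the unit cube into eight cubes. -/
def halfCube (b : Bool × Bool × Bool) : I × I × I → I × I × I :=
  Prod.map (half b.1) (halfSquare b.2)

@[fun_prop]
theorem continuous_halfFst (b : Bool) : Continuous (halfFst b) := by unfold halfFst; fun_prop

@[fun_prop]
theorem continuous_halfSnd (b : Bool) : Continuous (halfSnd b) := by unfold halfSnd; fun_prop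

theorem dist_prodMap_le {X Y : Type*} [PseudoMetricSpace X] [PseudoMetricSpace Y] {f : X → X}
    {g : Y → Y} (hf : ∀ x y, dist (f x) (f y) ≤ dist x y / 2)
    (hg : ∀ x y, dist (g x) (g y) ≤ dist x y / 2) (x y : X × Y) :
    dist (Prod.map f g x) (Prod.map f g y) ≤ dist x y / 2 := by
  simp only [Prod.dist_eq, Prod.map_fst, Prod.map_snd]
  refine max_le ((hf _ _).trans ?_) ((hg _ _).trans ?_)
  · gcongr; exact le_max_left _ _
  · gcongr; exact le_max_right _ _

theorem dist_halfSquare_le (b : Bool × Bool) (x y : I × I) :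
    dist (halfSquare b x) (halfSquare b y) ≤ dist x y / 2 :=
  dist_prodMap_le (dist_half_le b.1) (dist_half_le b.2) x y

theorem dist_halfCube_le (b : Bool × Bool × Bool) (x y : I × I × I) :
    dist (halfCube b x) (halfCube b y) ≤ dist x y / 2 :=
  dist_prodMap_le (dist_half_le b.1) (dist_halfSquare_le b.2) x y

variable {Q X D : Type*} [AddCommMonoid D]

theorem subdivisionSum_bool (e : Bool → Q → Q) (c : (Q → X) → D) (s : Q → X) :
    subdivisionSum e c s = c (s ∘ e false) + c (s ∘ e true) := by
  simp [subdivisionSum, add_comm]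

theorem subdivisionSum_halfSquare (c : (I × I → X) → D) :
    subdivisionSum halfSquare c = subdivisionSum halfFst (subdivisionSum halfSnd c) := by
  ext s
  simp only [subdivisionSum, Fintype.sum_prod_type]
  rfl

theorem subdivisionSum_halfSquare' (c : (I × I → X) → D) :
    subdivisionSum halfSquare c = subdivisionSum halfSnd (subdivisionSum halfFst c) := by
  ext s
  simp only [subdivisionSum, Fintype.sum_prod_type]
  rw [Finset.sum_comm]
  rfl

theorem commute_halfSquare_halfFst : Function.Commute
    (subdivisionSum halfSquare : ((I × I → X) → D) → _) (subdivisionSum halfFst) := fun c => by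
  rw [subdivisionSum_halfSquare, subdivisionSum_halfSquare']

theorem commute_halfSquare_halfSnd : Function.Commute
    (subdivisionSum halfSquare : ((I × I → X) → D) → _) (subdivisionSum halfSnd) := fun c => by
  rw [subdivisionSum_halfSquare', subdivisionSum_halfSquare]

end Halving

section Cochains

variable {X Y D : Type*} [AddCommGroup D]

/-- The coboundary of a cochain on paths. -/
def pathCoboundary (b : (I → X) → D) (s : I × I → X) : D :=
  (b (fun t => s (1, t)) - b (fun t => s (0, t))) - (b (fun t => s (t, 1)) - b (fun t => s (t, 0)))

/-- The coboundary of a cochain on squares. -/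
def squareCoboundary (c : (I × I → X) → D) (k : I × I × I → X) : D :=
  (c (fun t => k (1, t.1, t.2)) - c (fun t => k (0, t.1, t.2)))
  - (c (fun t => k (t.1, 1, t.2)) - c (fun t => k (t.1, 0, t.2)))
  + (c (fun t => k (t.1, t.2, 1)) - c (fun t => k (t.1, t.2, 0)))

theorem squareCoboundary_pathCoboundary (b : (I → X) → D) (k : I × I × I → X) :
    squareCoboundary (pathCoboundary b) k = 0 := by
  simp only [squareCoboundary, pathCoboundary]
  abel

variable [TopologicalSpace X] [TopologicalSpace Y]

/-- The cochain `b` is additive under concatenation of the paths in `U`. -/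
abbrev PathAdditiveOn (U : Set X) (b : (I → X) → D) : Prop := AdditiveOn half U b

/-- The cochain `c` is additive under halving of the squares in `U` in both directions. -/
structure SquareAdditiveOn (U : Set X) (c : (I × I → X) → D) : Prop where
  halfFst : AdditiveOn halfFst U c
  halfSnd : AdditiveOn halfSnd U c

/-- The coboundary of `c` vanishes on the cubes in `U`. -/
def IsCocycleOn (U : Set X) (c : (I × I → X) → D) : Prop :=
  ∀ k, IsCubeIn U k → squareCoboundary c k = 0

variable {U V : Set X}

theorem pathCoboundary_congr {b b' : (I → X) → D} (h : ∀ γ, IsCubeIn U γ → b γ = b' γ)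
    {s : I × I → X} (hs : IsCubeIn U s) : pathCoboundary b s = pathCoboundary b' s := by
  have edge (g : I → I × I) (hg : Continuous g) : b (fun t => s (g t)) = b' fun t => s (g t) :=
    h _ (hs.comp hg)
  rw [pathCoboundary, pathCoboundary, edge _ (by fun_prop), edge _ (by fun_prop),
    edge _ (by fun_prop), edge _ (by fun_prop)]

theorem PathAdditiveOn.eq_add {b : (I → X) → D} (h : PathAdditiveOn U b) {γ : I → X}
    (hγ : IsCubeIn U γ) : b γ = b (γ ∘ half false) + b (γ ∘ half true) :=
  (h γ hγ).trans (subdivisionSum_bool _ _ _)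

theorem PathAdditiveOn.apply_const {b : (I → X) → D} (h : PathAdditiveOn U b) {x : X}
    (hx : x ∈ U) : b (fun _ => x) = 0 := by
  simpa [Function.comp_def] using h.eq_add ⟨continuous_const (y := x), fun _ => hx⟩

theorem PathAdditiveOn.add {b b' : (I → X) → D} (h : PathAdditiveOn U b)
    (h' : PathAdditiveOn U b') : PathAdditiveOn U (fun γ => b γ + b' γ) := fun γ hγ => by
  simp only [subdivisionSum_bool, h.eq_add hγ, h'.eq_add hγ]
  abel

theorem PathAdditiveOn.squareAdditiveOn_pathCoboundary {b : (I → X) → D}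
    (h : PathAdditiveOn U b) : SquareAdditiveOn U (pathCoboundary b) := by
  have edge₁ {s : I × I → X} (hs : IsCubeIn U s) (x : I) :=
    h.eq_add (hs.comp (g := fun t => (x, t)) (by fun_prop))
  have edge₂ {s : I × I → X} (hs : IsCubeIn U s) (x : I) :=
    h.eq_add (hs.comp (g := fun t => (t, x)) (by fun_prop))
  simp only [Function.comp_def] at edge₁ edge₂
  constructor <;> intro s hs <;>
    simp only [subdivisionSum_bool, pathCoboundary, halfFst, halfSnd, Function.comp_def,
      Prod.map_apply, id, half_false_zero, half_true_one, half_true_zero]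
  · rw [edge₂ hs 1, edge₂ hs 0]; abel
  · rw [edge₁ hs 1, edge₁ hs 0]; abel

namespace SquareAdditiveOn

variable {c c' : (I × I → X) → D}

theorem pullback {V : Set Y} {c : (I × I → Y) → D} (h : SquareAdditiveOn V c) {f : X → Y}
    (hf : ContinuousOn f U) (hfU : Set.MapsTo f U V) : SquareAdditiveOn U (fun s => c (f ∘ s)) :=
  ⟨h.1.pullback hf hfU, h.2.pullback hf hfU⟩

theorem map {E : Type*} [AddCommGroup E] (h : SquareAdditiveOn U c) (f : D →+ E) :
    SquareAdditiveOn U (fun s => f (c s)) :=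
  ⟨fun s hs => by simp only [h.1 s hs, subdivisionSum, map_sum],
    fun s hs => by simp only [h.2 s hs, subdivisionSum, map_sum]⟩

theorem sub (h : SquareAdditiveOn U c) (h' : SquareAdditiveOn U c') :
    SquareAdditiveOn U (fun s => c s - c' s) := by
  constructor <;> intro s hs
  · simp only [h.1 s hs, h'.1 s hs, subdivisionSum_bool]; abel
  · simp only [h.2 s hs, h'.2 s hs, subdivisionSum_bool]; abel

theorem additiveOn_halfSquare (h : SquareAdditiveOn U c) : AdditiveOn halfSquare U c :=
  fun s hs => by
    rw [subdivisionSum_halfSquare, h.1 s hs]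
    exact Finset.sum_congr rfl fun k _ => h.2 _ (hs.comp (continuous_halfFst k))

theorem apply_comp_fst (h : SquareAdditiveOn U c) {γ : I → X} (hγ : IsCubeIn U γ) :
    c (fun t => γ t.1) = 0 := by
  have := h.halfSnd _ (hγ.comp continuous_fst)
  rw [subdivisionSum_bool] at this
  simpa [Function.comp_def, SphereSurgery.halfSnd] using this

theorem eq_zero_of_cover (hU : IsOpen U) (hV : IsOpen V) (h : SquareAdditiveOn (U ∪ V) c)
    (hcU : ∀ s, IsCubeIn U s → c s = 0) (hcV : ∀ s, IsCubeIn V s → c s = 0) {s : I × I → X}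
    (hs : IsCubeIn (U ∪ V) s) : c s = 0 :=
  h.additiveOn_halfSquare.eq_zero_of_cover dist_halfSquare_le hU hV hcU hcV hs

end SquareAdditiveOn

namespace IsCocycleOn

theorem pullback {V : Set Y} {c : (I × I → Y) → D} (h : IsCocycleOn V c) {f : X → Y}
    (hf : ContinuousOn f U) (hfU : Set.MapsTo f U V) : IsCocycleOn U (fun s => c (f ∘ s)) :=
  fun k hk => h (f ∘ k) (hk.comp_continuousOn hf hfU)

theorem map {E : Type*} [AddCommGroup E] {c : (I × I → X) → D} (h : IsCocycleOn U c)
    (f : D →+ E) : IsCocycleOn U (fun s => f (c s)) := fun k hk => by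
  simpa [squareCoboundary] using congrArg f (h k hk)

theorem congr {c c' : (I × I → X) → D} (h : IsCocycleOn U c)
    (hc : ∀ s, IsCubeIn U s → c' s = c s) : IsCocycleOn U c' := fun k hk => by
  have face (g : I × I → I × I × I) (hg : Continuous g) :
      c' (fun t => k (g t)) = c fun t => k (g t) :=
    hc _ (hk.comp hg)
  rw [← h k hk, squareCoboundary, squareCoboundary, face _ (by fun_prop), face _ (by fun_prop),
    face _ (by fun_prop), face _ (by fun_prop), face _ (by fun_prop), face _ (by fun_prop)]

end IsCocycleOn

theorem isCocycleOn_pathCoboundary (b : (I → X) → D) : IsCocycleOn U (pathCoboundary b) :=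
  fun k _ => squareCoboundary_pathCoboundary b k

theorem SquareAdditiveOn.additiveOn_squareCoboundary {c : (I × I → X) → D}
    (hc : SquareAdditiveOn U c) : AdditiveOn halfCube U (squareCoboundary c) := by
  intro k hk
  have face (g : I × I → I × I × I) (hg : Continuous g) :=
    hc.additiveOn_halfSquare _ (hk.comp hg)
  simp only [subdivisionSum, Fintype.sum_prod_type, Fintype.sum_bool, Function.comp_def,
    halfSquare] at face
  simp only [subdivisionSum, Fintype.sum_prod_type, Fintype.sum_bool, squareCoboundary, halfCube,
    halfSquare, Function.comp_def, Prod.map_apply, half_false_zero, half_true_one, half_true_zero]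
  rw [face (fun t => (1, t.1, t.2)) (by fun_prop), face (fun t => (0, t.1, t.2)) (by fun_prop),
    face (fun t => (t.1, 1, t.2)) (by fun_prop), face (fun t => (t.1, 0, t.2)) (by fun_prop),
    face (fun t => (t.1, t.2, 1)) (by fun_prop), face (fun t => (t.1, t.2, 0)) (by fun_prop)]
  simp only [Prod.map_fst, Prod.map_snd]
  abel

theorem IsCocycleOn.union (hU : IsOpen U) (hV : IsOpen V) {c : (I × I → X) → D}
    (hc : SquareAdditiveOn (U ∪ V) c) (hcU : IsCocycleOn U c) (hcV : IsCocycleOn V c) :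
    IsCocycleOn (U ∪ V) c :=
  fun _ hk => hc.additiveOn_squareCoboundary.eq_zero_of_cover dist_halfCube_le hU hV hcU hcV hk

theorem PathAdditiveOn.exists_glue (hU : IsOpen U) (hV : IsOpen V) {b b' : (I → X) → D}
    (hb : PathAdditiveOn U b) (hb' : PathAdditiveOn V b')
    (hbb' : ∀ γ, IsCubeIn U γ → IsCubeIn V γ → b γ = b' γ) :
    ∃ β : (I → X) → D, PathAdditiveOn (U ∪ V) β ∧ (∀ γ, IsCubeIn U γ → β γ = b γ) ∧
      ∀ γ, IsCubeIn V γ → β γ = b' γ := by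
  obtain ⟨β, hβU, hβV, hβ⟩ := AdditiveOn.exists_glue dist_half_le hU hV hb hb' hbb'
  exact ⟨β, hβ continuous_half hb hb' (.refl _), hβU, hβV⟩

theorem SquareAdditiveOn.exists_glue (hU : IsOpen U) (hV : IsOpen V) {c c' : (I × I → X) → D}
    (hc : SquareAdditiveOn U c) (hc' : SquareAdditiveOn V c')
    (hcc' : ∀ s, IsCubeIn U s → IsCubeIn V s → c s = c' s) :
    ∃ ω : (I × I → X) → D, SquareAdditiveOn (U ∪ V) ω ∧ (∀ s, IsCubeIn U s → ω s = c s) ∧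
      ∀ s, IsCubeIn V s → ω s = c' s := by
  obtain ⟨ω, hωU, hωV, hω⟩ := AdditiveOn.exists_glue dist_halfSquare_le hU hV
    hc.additiveOn_halfSquare hc'.additiveOn_halfSquare hcc'
  exact ⟨ω, ⟨hω continuous_halfFst hc.1 hc'.1 commute_halfSquare_halfFst,
    hω continuous_halfSnd hc.2 hc'.2 commute_halfSquare_halfSnd⟩, hωU, hωV⟩

theorem SquareAdditiveOn.exists_glue_cocycle (hU : IsOpen U) (hV : IsOpen V)
    {c c' : (I × I → X) → D} (hc : SquareAdditiveOn U c) (hc' : SquareAdditiveOn V c')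
    (hcU : IsCocycleOn U c) (hcV : IsCocycleOn V c')
    (hcc' : ∀ s, IsCubeIn U s → IsCubeIn V s → c s = c' s) :
    ∃ ω : (I × I → X) → D, SquareAdditiveOn (U ∪ V) ω ∧ IsCocycleOn (U ∪ V) ω ∧
      (∀ s, IsCubeIn U s → ω s = c s) ∧ ∀ s, IsCubeIn V s → ω s = c' s := by
  obtain ⟨ω, hω, hωU, hωV⟩ := hc.exists_glue hU hV hc' hcc'
  exact ⟨ω, hω, .union hU hV hω (hcU.congr hωU) (hcV.congr hωV), hωU, hωV⟩

end Cochains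

/-! ### Extension of additive path cochains -/

theorem exists_linearMap_comp_eq {M N D : Type*} [AddCommGroup M] [AddCommGroup N]
    [AddCommGroup D] [DivisibleBy D ℤ] (f : M →ₗ[ℤ] N) (φ : M →ₗ[ℤ] D)
    (h : LinearMap.ker f ≤ LinearMap.ker φ) : ∃ g : N →ₗ[ℤ] D, g ∘ₗ f = φ := by
  obtain ⟨g, hg⟩ := (Module.Baer.of_divisible D).extension_property
    ((LinearMap.ker f).liftQ f le_rfl)
    (LinearMap.ker_eq_bot.1 (Submodule.ker_liftQ_eq_bot _ _ _ le_rfl)) ((LinearMap.ker f).liftQ φ h)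
  exact ⟨g, LinearMap.ext fun m => by simpa using LinearMap.congr_fun hg (Submodule.Quotient.mk m)⟩

section Subdivide

variable {P K D : Type*} [Fintype K] (h : K → P → P)

/-- The endomorphism of formal sums induced by the subdivision of `γ` into the pieces `h k γ`. -/
def subdivideLinear : (P →₀ ℤ) →ₗ[ℤ] (P →₀ ℤ) := ∑ k, Finsupp.lmapDomain ℤ ℤ (h k)

theorem subdivideLinear_single (γ : P) :
    subdivideLinear h (Finsupp.single γ 1) = ∑ k, Finsupp.single (h k γ) 1 := by
  simp [subdivideLinear, Finsupp.mapDomain_single]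

theorem exists_mem_support_of_subdivideLinear_ne_zero {y : P →₀ ℤ} {γ : P}
    (hγ : subdivideLinear h y γ ≠ 0) : ∃ γ' ∈ y.support, ∃ k, h k γ' = γ := by
  classical
  simp only [subdivideLinear, LinearMap.sum_apply, Finsupp.finsetSum_apply] at hγ
  obtain ⟨k, -, hk⟩ := Finset.exists_ne_zero_of_sum_ne_zero hγ
  obtain ⟨γ', hγ', rfl⟩ := Finset.mem_image.1
    (Finsupp.mapDomain_support (Finsupp.mem_support_iff.2 hk))
  exact ⟨γ', hγ', k, rfl⟩

variable {h} {V : Set P} (hV : ∀ k, ∀ γ ∈ V, h k γ ∈ V)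
  (hacyclic : ∀ γ ∉ V, ¬ Relation.TransGen (fun γ γ' => ∃ k, h k γ = γ') γ γ)

include hV hacyclic

/- The finitely many elements of the support outside `V` would each have a parent among
themselves, hence some element would be its own ancestor. -/
theorem mem_supported_of_sub_subdivideLinear_mem {y : P →₀ ℤ}
    (hy : y - subdivideLinear h y ∈ Finsupp.supported ℤ ℤ V) : y ∈ Finsupp.supported ℤ ℤ V := by
  let S := {γ : P // γ ∈ y.support ∧ γ ∉ V}
  have : Finite S := (y.support.finite_toSet.subset fun γ hγ => hγ.1 : {γ | _ ∧ _}.Finite)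
  let r : S → S → Prop := fun γ γ' => Relation.TransGen (fun γ γ' => ∃ k, h k γ = γ') γ.1 γ'.1
  have : IsTrans S r := ⟨fun _ _ _ => .trans⟩
  have : Std.Irrefl r := ⟨fun γ => hacyclic γ.1 γ.2.2⟩
  by_contra hyV
  obtain ⟨γ₀, hγ₀, hγ₀V⟩ := Set.not_subset.1 hyV
  obtain ⟨⟨γ, hγ, hγV⟩, -, hmin⟩ :=
    (Finite.wellFounded_of_trans_of_irrefl r).has_min Set.univ ⟨⟨γ₀, hγ₀, hγ₀V⟩, trivial⟩
  have hγ0 : (y - subdivideLinear h y) γ = 0 := by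
    by_contra h0
    exact hγV (hy (Finsupp.mem_support_iff.2 h0))
  rw [Finsupp.sub_apply, sub_eq_zero] at hγ0
  obtain ⟨γ', hγ', k, rfl⟩ := exists_mem_support_of_subdivideLinear_ne_zero h
    (hγ0 ▸ Finsupp.mem_support_iff.1 hγ)
  exact hmin ⟨γ', hγ', fun h' => hγV (hV k γ' h')⟩ trivial (.single ⟨k, rfl⟩)

theorem exists_additive_extension [AddCommGroup D] [DivisibleBy D ℤ] {b : P → D}
    (hb : ∀ γ ∈ V, b γ = ∑ k, b (h k γ)) :
    ∃ b' : P → D, (∀ γ, b' γ = ∑ k, b' (h k γ)) ∧ ∀ γ ∈ V, b' γ = b γ := by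
  let B : (P →₀ ℤ) →ₗ[ℤ] D := Finsupp.lift D ℤ P b
  have hB (γ : P) : B (Finsupp.single γ 1) = b γ := by simp [B, Finsupp.lift_apply]
  let W := Finsupp.supported ℤ ℤ V
  have hBW : Set.EqOn (B ∘ₗ subdivideLinear h) B W := by
    rw [show W = _ from Finsupp.supported_eq_span_single ℤ V]
    refine LinearMap.eqOn_span ?_
    rintro _ ⟨γ, hγ, rfl⟩
    simp only [LinearMap.comp_apply, subdivideLinear_single, map_sum, hB, hb γ hγ]
  let f : (W × (P →₀ ℤ)) →ₗ[ℤ] (P →₀ ℤ) := W.subtype.coprod (LinearMap.id - subdivideLinear h)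
  let φ : (W × (P →₀ ℤ)) →ₗ[ℤ] D := (B ∘ₗ W.subtype).coprod 0
  have hker : LinearMap.ker f ≤ LinearMap.ker φ := by
    rintro ⟨⟨w, hw⟩, y⟩ h0
    have hwy : w + (y - subdivideLinear h y) = 0 := by simpa [f] using h0
    have hy : y ∈ W := mem_supported_of_sub_subdivideLinear_mem hV hacyclic
      (eq_neg_of_add_eq_zero_right hwy ▸ W.neg_mem hw)
    have hBy : B (subdivideLinear h y) = B y := hBW hy
    have hBw : B w = 0 := by simp [eq_neg_of_add_eq_zero_left hwy, hBy]
    simpa [φ] using hBw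
  obtain ⟨g, hg⟩ := exists_linearMap_comp_eq f φ hker
  refine ⟨fun γ => g (Finsupp.single γ 1), fun γ => ?_, fun γ hγ => ?_⟩
  · have hgγ := LinearMap.congr_fun hg (0, Finsupp.single γ 1)
    rw [← map_sum, ← subdivideLinear_single, ← sub_eq_zero, ← map_sub]
    simpa [f, φ] using hgγ
  · simpa [f, φ, hB] using
      LinearMap.congr_fun hg (⟨_, Finsupp.single_mem_supported ℤ 1 hγ⟩, 0)

end Subdivide

section Paths

variable {X D : Type*} [TopologicalSpace X] [T2Space X]

theorem apply_eq_of_comp_contracting_eq {M : Type*} [MetricSpace M] [CompleteSpace M] {δ : M → X}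
    (hδ : Continuous δ) {w : M → M} {K : NNReal} (hw : ContractingWith K w) (h : δ ∘ w = δ)
    (x y : M) : δ x = δ y := by
  have : Nonempty M := ⟨x⟩
  have hiter (j : ℕ) (x : M) : δ (w^[j] x) = δ x :=
    (Function.Semiconj.iterate_right (f := δ) (gb := id) (congrFun h) j x).trans
      (congrFun (Function.iterate_id j) _)
  have hfixed (x : M) : δ x = δ (hw.fixedPoint w) :=
    tendsto_nhds_unique (tendsto_const_nhds.congr fun j => (hiter j x).symm)
      ((hδ.tendsto _).comp (hw.tendsto_iterate_fixedPoint x))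
  rw [hfixed x, hfixed y]

theorem contractingWith_half (b : Bool) : ContractingWith (1 / 2) (half b) :=
  ⟨by norm_num, LipschitzWith.of_dist_le_mul fun x y => (dist_half_le b x y).trans_eq <| by
    push_cast; ring⟩

theorem exists_contractingWith_of_transGen_half {Y : Type*} {γ γ' : I → Y}
    (h : Relation.TransGen (fun γ γ' : I → Y => ∃ k, γ ∘ half k = γ') γ γ') :
    ∃ w : I → I, ContractingWith (1 / 2) w ∧ γ' = γ ∘ w := by
  induction h with
  | single h =>
    obtain ⟨k, rfl⟩ := h
    exact ⟨half k, contractingWith_half k, rfl⟩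
  | tail _ h ih =>
    obtain ⟨k, rfl⟩ := h
    obtain ⟨w, hw, rfl⟩ := ih
    refine ⟨w ∘ half k, ⟨hw.1, ?_⟩, rfl⟩
    exact (hw.2.comp (contractingWith_half k).2).weaken (mul_le_of_le_one_right' (by norm_num))

theorem PathAdditiveOn.exists_extension [AddCommGroup D] [DivisibleBy D ℤ] {U : Set X}
    {b : (I → X) → D} (hb : PathAdditiveOn U b) :
    ∃ b' : (I → X) → D, PathAdditiveOn Set.univ b' ∧ ∀ γ, IsCubeIn U γ → b' γ = b γ := by
  classical
  let h (k : Bool) (γ : C(I, X)) : C(I, X) := γ.comp ⟨half k, continuous_half k⟩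
  let V : Set C(I, X) := {γ | (∀ t, γ t ∈ U) ∨ ∀ s t, γ s = γ t}
  have hV (k : Bool) (γ : C(I, X)) (hγ : γ ∈ V) : h k γ ∈ V :=
    hγ.imp (fun hU t => hU _) fun hconst s t => hconst _ _
  have hacyclic (γ) (hγ : γ ∉ V) : ¬ Relation.TransGen (fun γ γ' => ∃ k, h k γ = γ') γ γ := by
    intro hγγ
    obtain ⟨w, hw, hγw⟩ := exists_contractingWith_of_transGen_half
      (hγγ.lift (fun γ : C(I, X) => (γ : I → X)) fun _ _ ⟨k, hk⟩ => ⟨k, congrArg DFunLike.coe hk⟩)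
    exact hγ (.inr (apply_eq_of_comp_contracting_eq γ.continuous hw hγw.symm))
  let b₀ (γ : C(I, X)) : D := if ∀ t, γ t ∈ U then b γ else 0
  have hb₀ (γ) (hγ : γ ∈ V) : b₀ γ = ∑ k, b₀ (h k γ) := by
    by_cases hU : ∀ t, γ t ∈ U
    · simp only [b₀, if_pos hU, show ∀ k t, h k γ t ∈ U from fun _ _ => hU _, implies_true,
        if_true]
      exact hb γ ⟨γ.continuous, hU⟩
    · have hh (k : Bool) : h k γ = γ := ContinuousMap.ext fun t => hγ.resolve_left hU _ _
      have hb₀γ : b₀ γ = 0 := if_neg hU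
      rw [Fintype.sum_bool, hh, hh, hb₀γ, add_zero]
  obtain ⟨b', hb', hb'V⟩ := exists_additive_extension hV hacyclic hb₀
  refine ⟨fun γ => if hγ : Continuous γ then b' ⟨γ, hγ⟩ else 0, fun γ hγ => ?_, fun γ hγ => ?_⟩
  · have hhalf (k : Bool) : Continuous (γ ∘ half k) := hγ.1.comp (continuous_half k)
    simp only [subdivisionSum, dif_pos hγ.1, dif_pos (hhalf _)]
    exact hb' ⟨γ, hγ.1⟩
  · simp only [dif_pos hγ.1]
    exact (hb'V ⟨γ, hγ.1⟩ (.inl hγ.2)).trans (if_pos hγ.2)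

end Paths

/-! ### Homotopies of singular cubes -/

section HomotopicThrough

variable {Q X : Type*} [TopologicalSpace Q] [TopologicalSpace X]

/-- The maps `f` and `g` are homotopic through maps satisfying `P`; the unbundled form of
`ContinuousMap.HomotopicWith`. -/
def HomotopicThrough (P : (Q → X) → Prop) (f g : Q → X) : Prop :=
  ∃ H : I × Q → X, Continuous H ∧ (∀ t, H (0, t) = f t) ∧ (∀ t, H (1, t) = g t) ∧
    ∀ s, P (fun t => H (s, t))

namespace HomotopicThrough

variable {P P' : (Q → X) → Prop} {f g h : Q → X}

theorem left (H : HomotopicThrough P f g) : P f ∧ Continuous f := by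
  obtain ⟨H, hH, h0, -, hP⟩ := H
  obtain rfl : (fun t => H (0, t)) = f := funext h0
  exact ⟨hP 0, by fun_prop⟩

theorem symm (H : HomotopicThrough P f g) : HomotopicThrough P g f := by
  obtain ⟨H, hH, h0, h1, hP⟩ := H
  exact ⟨fun p => H (σ p.1, p.2), by fun_prop, by simp [h1], by simp [h0], fun s => hP (σ s)⟩

theorem right (H : HomotopicThrough P f g) : P g ∧ Continuous g := H.symm.left

theorem mono (H : HomotopicThrough P f g) (h : ∀ f, P f → P' f) : HomotopicThrough P' f g := by
  obtain ⟨H, hH, h0, h1, hP⟩ := H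
  exact ⟨H, hH, h0, h1, fun s => h _ (hP s)⟩

theorem iff_homotopicWith (hf : Continuous f) (hg : Continuous g) :
    HomotopicThrough P f g ↔ ContinuousMap.HomotopicWith ⟨f, hf⟩ ⟨g, hg⟩ (fun k => P k) := by
  constructor
  · rintro ⟨H, hH, h0, h1, hP⟩
    exact ⟨⟨⟨⟨H, hH⟩, h0, h1⟩, hP⟩⟩
  · rintro ⟨H⟩
    exact ⟨H, H.continuous, H.apply_zero, H.apply_one, H.prop⟩

theorem trans (H : HomotopicThrough P f g) (K : HomotopicThrough P g h) :
    HomotopicThrough P f h := by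
  have hf := H.left.2
  have hg := H.right.2
  have hh := K.right.2
  rw [iff_homotopicWith hf hg] at H
  rw [iff_homotopicWith hg hh] at K
  rw [iff_homotopicWith hf hh]
  obtain ⟨H⟩ := H
  obtain ⟨K⟩ := K
  exact ⟨H.trans K⟩

theorem map {Y : Type*} [TopologicalSpace Y] {U : Set X} {F : X → Y} (hF : ContinuousOn F U)
    {P' : (Q → Y) → Prop} (H : HomotopicThrough P f g) (hU : ∀ f, P f → ∀ t, f t ∈ U)
    (h : ∀ f, P f → P' (F ∘ f)) : HomotopicThrough P' (F ∘ f) (F ∘ g) := by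
  obtain ⟨H, hH, h0, h1, hP⟩ := H
  exact ⟨F ∘ H, hF.comp_continuous hH fun p => hU _ (hP p.1) p.2, by simp [h0], by simp [h1],
    fun s => h _ (hP s)⟩

end HomotopicThrough

end HomotopicThrough

section Clamp

/-- The retraction of the real line onto the unit interval. -/
def clamp (r : ℝ) : I := Set.projIcc 0 1 zero_le_one r

@[fun_prop] theorem continuous_clamp : Continuous clamp := continuous_projIcc (h := zero_le_one)

theorem clamp_coe (t : I) : clamp t = t := Set.projIcc_val _ t

theorem clamp_of_nonpos {r : ℝ} (h : r ≤ 0) : clamp r = 0 := Set.projIcc_of_le_left _ h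

theorem clamp_of_one_le {r : ℝ} (h : 1 ≤ r) : clamp r = 1 := Set.projIcc_of_right_le _ h

end Clamp

section Cube

variable {N X : Type*}

/-- The map `f` of the cube sends the whole boundary to `x`. -/
def IsBasedAt (x : X) (f : (N → I) → X) : Prop := ∀ t ∈ Cube.boundary N, f t = x

/-- The map `f` of the cube collapses the boundary to some point. -/
def IsConstOnBoundary (f : (N → I) → X) : Prop :=
  ∀ t ∈ Cube.boundary N, ∀ t' ∈ Cube.boundary N, f t = f t'

theorem IsBasedAt.isConstOnBoundary {x : X} {f : (N → I) → X} (h : IsBasedAt x f) :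
    IsConstOnBoundary f :=
  fun t ht t' ht' => (h t ht).trans (h t' ht').symm

theorem IsBasedAt.comp {Y : Type*} {x : X} {f : (N → I) → X} (hb : IsBasedAt x f) (F : X → Y) :
    IsBasedAt (F x) (F ∘ f) :=
  fun t ht => congrArg F (hb t ht)

/-- The self-map `w` of the cube preserves each face. -/
def PreservesFaces (w : (N → I) → N → I) : Prop :=
  ∀ t i, (t i = 0 → w t i = 0) ∧ (t i = 1 → w t i = 1)

theorem PreservesFaces.mem_boundary {w : (N → I) → N → I} (hw : PreservesFaces w) {t : N → I}
    (ht : t ∈ Cube.boundary N) : w t ∈ Cube.boundary N := by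
  obtain ⟨i, hi⟩ := ht
  exact ⟨i, hi.imp (hw t i).1 (hw t i).2⟩

/-- The self-map of the cube that expands the middle third cube onto the whole cube and collapses
the complement to the boundary. -/
def expandCore (t : N → I) : N → I := fun i => clamp (3 * (t i : ℝ) - 1)

@[fun_prop] theorem continuous_expandCore : Continuous (expandCore : (N → I) → N → I) := by
  unfold expandCore; fun_prop

theorem homotopicThrough_expandCore :
    HomotopicThrough PreservesFaces id (expandCore : (N → I) → N → I) := by
  refine ⟨fun p i => clamp ((1 - p.1) * p.2 i + p.1 * expandCore p.2 i), ?_, ?_, ?_, ?_⟩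
  · have (i : N) : Continuous fun p : I × (N → I) => expandCore p.2 i :=
      (continuous_apply i).comp (continuous_expandCore.comp continuous_snd)
    fun_prop
  · simp [clamp_coe]
  · simp [clamp_coe]
  · refine fun s t i => ⟨fun h => ?_, fun h => ?_⟩
    · have : expandCore t i = 0 := clamp_of_nonpos (by simp [h])
      exact clamp_of_nonpos (by simp [this, h])
    · have : expandCore t i = 1 := clamp_of_one_le (by simp [h]; norm_num)
      exact clamp_of_one_le (by simp [this, h])

variable [Fintype N]

/-- The sup-norm distance to the centre of the cube, scaled to equal `1` on the boundary of the
middle third cube. -/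
def coreNorm (t : N → I) : ℝ := ‖fun i => 6 * (t i : ℝ) - 3‖

/-- The collar coordinate: `0` on the middle third cube, `1` on the boundary of the cube. -/
def collarCoord (t : N → I) : I := clamp ((coreNorm t - 1) / 2)

@[fun_prop] theorem continuous_coreNorm : Continuous (coreNorm : (N → I) → ℝ) := by
  unfold coreNorm; fun_prop

@[fun_prop] theorem continuous_collarCoord : Continuous (collarCoord : (N → I) → I) := by
  unfold collarCoord; fun_prop

theorem expandCore_mem_boundary {t : N → I} (h : 1 ≤ coreNorm t) :
    expandCore t ∈ Cube.boundary N := by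
  obtain ⟨i, hi⟩ : ∃ i, 1 ≤ ‖6 * (t i : ℝ) - 3‖ := by
    by_contra! hlt
    exact absurd ((pi_norm_lt_iff one_pos).2 hlt) (not_lt.2 h)
  refine ⟨i, ?_⟩
  rcases le_abs.1 hi with hi | hi
  · exact .inr (clamp_of_one_le (by linarith))
  · exact .inl (clamp_of_nonpos (by linarith))

theorem three_le_coreNorm {t : N → I} (h : t ∈ Cube.boundary N) : 3 ≤ coreNorm t := by
  obtain ⟨i, hi⟩ := h
  refine le_trans ?_ (norm_le_pi_norm (fun i => 6 * (t i : ℝ) - 3) i)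
  rcases hi with hi | hi <;> norm_num [hi]

theorem collarCoord_of_mem_boundary {t : N → I} (h : t ∈ Cube.boundary N) : collarCoord t = 1 :=
  clamp_of_one_le (by linarith [three_le_coreNorm h])

theorem collarCoord_of_coreNorm_le {t : N → I} (h : coreNorm t ≤ 1) : collarCoord t = 0 :=
  clamp_of_nonpos (by linarith)

variable [TopologicalSpace X]

omit [Fintype N] in
/- The trace of the boundary under the free homotopy is inserted in the collar, and then pulled
back to its starting point. -/
theorem IsBasedAt.homotopicThrough_const [Finite N] [Nonempty N] {x y : X} {f : (N → I) → X}
    {A : Set X} (hf : IsBasedAt x f)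
    (H : HomotopicThrough (fun f => IsConstOnBoundary f ∧ ∀ t, f t ∈ A) f (fun _ => y)) :
    HomotopicThrough (fun f => IsBasedAt x f ∧ ∀ t, f t ∈ A) f (fun _ => x) := by
  cases nonempty_fintype N
  have hfc := H.left.2
  have hfA := H.left.1.2
  obtain ⟨H, hH, h0, h1, hP⟩ := H
  have hA (p) : H p ∈ A := (hP p.1).2 p.2
  have hcorner : (fun _ => 0 : N → I) ∈ Cube.boundary N := ⟨Classical.arbitrary N, .inl rfl⟩
  let α : I → X := fun s => H (s, fun _ => 0)
  have hα (s t) (ht : t ∈ Cube.boundary N) : H (s, t) = α s := (hP s).1 t ht _ hcorner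
  have hα0 : α 0 = x := (h0 _).trans (hf _ hcorner)
  have hα1 : α 1 = y := h1 _
  have expand : HomotopicThrough (fun f => IsBasedAt x f ∧ ∀ t, f t ∈ A) f (f ∘ expandCore) :=
    homotopicThrough_expandCore.map hfc.continuousOn (U := Set.univ) (fun _ _ _ => trivial)
      fun w hw => ⟨fun t ht => hf _ (hw.mem_boundary ht), fun t => hfA _⟩
  have contract : HomotopicThrough (fun f => IsBasedAt x f ∧ ∀ t, f t ∈ A) (f ∘ expandCore)
      (fun t => α (σ (collarCoord t))) := by
    refine ⟨fun p => H (p.1 * σ (collarCoord p.2), expandCore p.2), by fun_prop, by simp [h0],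
      fun t => ?_, fun s => ⟨fun t ht => ?_, fun t => hA _⟩⟩
    · rcases le_total 1 (coreNorm t) with h | h
      · simpa using hα _ _ (expandCore_mem_boundary h)
      · simp [collarCoord_of_coreNorm_le h, h1, hα1]
    · simp [collarCoord_of_mem_boundary ht, h0,
        hf _ (expandCore_mem_boundary (by linarith [three_le_coreNorm ht] : 1 ≤ coreNorm t))]
  have retract : HomotopicThrough (fun f => IsBasedAt x f ∧ ∀ t, f t ∈ A)
      (fun t : N → I => α (σ (collarCoord t))) (fun _ => x) :=
    ⟨fun p => α (σ (collarCoord p.2) * σ p.1), by fun_prop, by simp, by simp [hα0],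
      fun s => ⟨fun t ht => by simp [collarCoord_of_mem_boundary ht, hα0], fun t => hA _⟩⟩
  exact (expand.trans contract).trans retract

omit [Fintype N] in
theorem IsBasedAt.exists_homotopicThrough_of_path [Finite N] {x y : X} {f : (N → I) → X}
    (hf : IsBasedAt y f) (hfc : Continuous f) (α : Path x y) :
    ∃ f' : (N → I) → X, IsBasedAt x f' ∧ HomotopicThrough IsConstOnBoundary f' f := by
  cases nonempty_fintype N
  let G : I × (N → I) → X := fun p =>
    if coreNorm p.2 ≤ 1 then f (expandCore p.2) else α (σ (σ p.1 * collarCoord p.2))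
  have hG : Continuous G := by
    refine Continuous.if_le (by fun_prop) (by fun_prop) (by fun_prop) continuous_const ?_
    intro p hp
    simp [hf _ (expandCore_mem_boundary hp.ge), collarCoord_of_coreNorm_le hp.le]
  have hGα (s t) (ht : t ∈ Cube.boundary N) : G (s, t) = α s := by
    have : ¬ coreNorm t ≤ 1 := by linarith [three_le_coreNorm ht]
    simp [G, this, collarCoord_of_mem_boundary ht]
  have hG1 : (fun t => G (1, t)) = f ∘ expandCore := by
    ext t
    by_cases h : coreNorm t ≤ 1
    · simp [G, h]
    · simp [G, h, hf _ (expandCore_mem_boundary (not_le.1 h).le)]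
  have slide : HomotopicThrough IsConstOnBoundary (fun t => G (0, t)) (f ∘ expandCore) :=
    ⟨G, hG, fun _ => rfl, congrFun hG1,
      fun s t ht t' ht' => by simp only [hGα s t ht, hGα s t' ht']⟩
  have expand : HomotopicThrough IsConstOnBoundary f (f ∘ expandCore) :=
    homotopicThrough_expandCore.map hfc.continuousOn (U := Set.univ) (fun _ _ _ => trivial)
      fun w hw => (show IsBasedAt y (f ∘ w) from
        fun t ht => hf _ (hw.mem_boundary ht)).isConstOnBoundary
  exact ⟨_, fun t ht => by simp [hGα 0 t ht], slide.trans expand.symm⟩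

end Cube

/-! ### Evaluation of cocycles on the second homotopy group -/

section Evaluation

variable {X D : Type*}

/-- The singular square given by a map of the 2-cube. -/
def toSquare (f : (Fin 2 → I) → X) : I × I → X := fun t => f ![t.1, t.2]

theorem continuous_vecCons : Continuous fun t : I × I => (![t.1, t.2] : Fin 2 → I) :=
  continuous_pi <| Fin.forall_fin_two.2 ⟨continuous_fst, continuous_snd⟩

theorem mem_boundary_fst {s b : I} (h : b = 0 ∨ b = 1) :
    (![b, s] : Fin 2 → I) ∈ Cube.boundary (Fin 2) :=
  ⟨0, h⟩

theorem mem_boundary_snd {s b : I} (h : b = 0 ∨ b = 1) :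
    (![s, b] : Fin 2 → I) ∈ Cube.boundary (Fin 2) :=
  ⟨1, h⟩

variable [TopologicalSpace X]

theorem continuous_toSquare {f : (Fin 2 → I) → X} (hf : Continuous f) : Continuous (toSquare f) :=
  hf.comp continuous_vecCons

theorem apply_toSquare_eq_of_homotopicThrough [AddCommGroup D] {U : Set X} {c : (I × I → X) → D}
    (hadd : SquareAdditiveOn U c) (hcocycle : IsCocycleOn U c) {f g : (Fin 2 → I) → X}
    (H : HomotopicThrough (fun f => IsConstOnBoundary f ∧ ∀ t, f t ∈ U) f g) :
    c (toSquare f) = c (toSquare g) := by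
  obtain ⟨H, hH, h0, h1, hP⟩ := H
  have hU (p) : H p ∈ U := (hP p.1).2 p.2
  let α : I → X := fun s => H (s, ![0, 0])
  have hα (s t) (ht : t ∈ Cube.boundary (Fin 2)) : H (s, t) = α s :=
    (hP s).1 t ht _ (mem_boundary_fst (.inl rfl))
  have hside : c (fun t => α t.1) = 0 := hadd.apply_comp_fst ⟨by fun_prop, fun _ => hU _⟩
  have hcube := hcocycle (fun t => H (t.1, ![t.2.1, t.2.2]))
    ⟨hH.comp (continuous_fst.prodMk (continuous_vecCons.comp continuous_snd)), fun _ => hU _⟩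
  simp only [squareCoboundary, hα _ _ (mem_boundary_fst (.inl rfl)),
    hα _ _ (mem_boundary_fst (.inr rfl)), hα _ _ (mem_boundary_snd (.inl rfl)),
    hα _ _ (mem_boundary_snd (.inr rfl)), h0, h1, sub_self, hside, sub_zero, add_zero] at hcube
  exact (sub_eq_zero.1 hcube).symm

theorem toSquare_transAt_comp_halfFst_false {x : X} (f g : GenLoop (Fin 2) X x) :
    toSquare (GenLoop.transAt 0 f g) ∘ halfFst false = toSquare f := by
  ext t
  have hhalf : ((half false t.1 : I) : ℝ) = t.1 / 2 := by simp [half]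
  have hclamp : Set.projIcc (0 : ℝ) 1 zero_le_one t.1 = t.1 := clamp_coe t.1
  simp only [toSquare, Function.comp, halfFst, GenLoop.transAt, GenLoop.coe_copy]
  rw [if_pos (by simp [hhalf]; linarith [t.1.2.2])]
  congr 1
  ext i
  fin_cases i
  · simp [hhalf, mul_div_cancel₀, hclamp]
  · simp

theorem toSquare_transAt_comp_halfFst_true {x : X} (f g : GenLoop (Fin 2) X x) :
    toSquare (GenLoop.transAt 0 f g) ∘ halfFst true = toSquare g := by
  ext t
  have hhalf : ((half true t.1 : I) : ℝ) = (t.1 + 1) / 2 := by simp [half]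
  have hclamp : Set.projIcc (0 : ℝ) 1 zero_le_one t.1 = t.1 := clamp_coe t.1
  simp only [toSquare, Function.comp, halfFst, GenLoop.transAt, GenLoop.coe_copy]
  split_ifs with h
  · have ht : t.1 = 0 := by
      ext
      simp [hhalf] at h
      exact le_antisymm (by simpa using by linarith) t.1.2.1
    refine (f.2 _ ⟨0, .inr ?_⟩).trans (g.2 _ ⟨0, .inl ?_⟩).symm
    · rw [ht] at hhalf
      simp [ht, hhalf]
    · simp [ht]
  · congr 1
    ext i
    fin_cases i
    · simp [hhalf, mul_div_cancel₀, hclamp]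
    · simp

theorem genLoop_homotopic_iff {N : Type*} {x : X} (f g : GenLoop N X x) :
    GenLoop.Homotopic f g ↔ HomotopicThrough (IsBasedAt x) (f : (N → I) → X) g := by
  refine Iff.trans ?_ (HomotopicThrough.iff_homotopicWith f.1.continuous g.1.continuous).symm
  constructor
  · rintro ⟨H⟩
    exact ⟨⟨H.toHomotopy, fun s t ht => (H.prop s t ht).trans (f.2 t ht)⟩⟩
  · rintro ⟨H⟩
    exact ⟨⟨H.toHomotopy, fun s t ht => (H.prop s t ht).trans (f.2 t ht).symm⟩⟩

/-- The homomorphism on `π₂` given by evaluation of an additive cocycle on squares. -/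
def piTwoEval [AddCommGroup D] {c : (I × I → X) → D} (hadd : SquareAdditiveOn Set.univ c)
    (hcocycle : IsCocycleOn Set.univ c) (x : X) : π_ 2 X x →* Multiplicative D :=
  MonoidHom.mk'
    (Quotient.lift (fun f : GenLoop (Fin 2) X x => Multiplicative.ofAdd (c (toSquare f)))
      fun f g h => congrArg Multiplicative.ofAdd <|
        apply_toSquare_eq_of_homotopicThrough hadd hcocycle
          (((genLoop_homotopic_iff f g).1 h).mono
            fun _ hf => ⟨hf.isConstOnBoundary, fun _ => Set.mem_univ _⟩))
    (by
      refine fun a b => Quotient.inductionOn₂ a b fun f g => ?_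
      refine (congrArg (Quotient.lift _ _)
        (HomotopyGroup.mul_spec (N := Fin 2) (i := 0) (p := f) (q := g))).trans ?_
      refine (congrArg Multiplicative.ofAdd ?_).trans (ofAdd_add _ _)
      rw [hadd.halfFst (toSquare (GenLoop.transAt 0 g f))
          ⟨continuous_toSquare (GenLoop.transAt 0 g f).1.continuous, fun _ => Set.mem_univ _⟩,
        subdivisionSum_bool, toSquare_transAt_comp_halfFst_false,
        toSquare_transAt_comp_halfFst_true, add_comm])

end Evaluation

/-! ### The winding cochain -/

section Logarithm

theorem exists_log_of_retract {Q V : Type*} [TopologicalSpace Q] [NormedAddCommGroup V]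
    [NormedSpace ℝ V] {i : Q → V} {r : V → Q} (hi : Continuous i) (hr : Continuous r)
    (hri : Function.LeftInverse r i) {g : Q → ℂ} (hg : IsCubeIn {0}ᶜ g) :
    ∃ ℓ : Q → ℂ, Continuous ℓ ∧ ∀ q, Complex.exp (ℓ q) = g q := by
  have : IsSimplyConnected (Set.univ : Set V) := by
    have := convex_univ.contractibleSpace (Set.univ_nonempty (α := V))
    change SimplyConnectedSpace _
    infer_instance
  obtain ⟨f, hf, hfg⟩ := Complex.exists_continuousOn_eqOn_exp_comp this isOpen_univ
    (hg.1.comp hr).continuousOn (by rintro ⟨x, -, hx⟩; exact hg.2 _ hx)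
  refine ⟨f ∘ i, (continuousOn_univ.1 hf).comp hi, fun q => ?_⟩
  simpa [hri q] using hfg (Set.mem_univ (i q))

theorem exists_log_path {g : I → ℂ} (hg : IsCubeIn {0}ᶜ g) :
    ∃ ℓ : I → ℂ, Continuous ℓ ∧ ∀ q, Complex.exp (ℓ q) = g q :=
  exists_log_of_retract continuous_subtype_val continuous_clamp clamp_coe hg

theorem exists_log_square {g : I × I → ℂ} (hg : IsCubeIn {0}ᶜ g) :
    ∃ ℓ : I × I → ℂ, Continuous ℓ ∧ ∀ q, Complex.exp (ℓ q) = g q :=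
  exists_log_of_retract (i := Prod.map ((↑) : I → ℝ) ((↑) : I → ℝ)) (r := Prod.map clamp clamp)
    (continuous_subtype_val.prodMap continuous_subtype_val)
    (continuous_clamp.prodMap continuous_clamp)
    (fun t => Prod.ext (clamp_coe t.1) (clamp_coe t.2)) hg

theorem sub_eq_sub_of_exp_eq {Q : Type*} [TopologicalSpace Q] [PreconnectedSpace Q] {ℓ ℓ' : Q → ℂ}
    (h : Continuous ℓ) (h' : Continuous ℓ') (he : ∀ t, Complex.exp (ℓ t) = Complex.exp (ℓ' t))
    (s t : Q) : ℓ s - ℓ t = ℓ' s - ℓ' t := by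
  have hdiff (t : Q) : ∃ n : ℤ, ℓ t - ℓ' t = n * (2 * Real.pi * Complex.I) := by
    obtain ⟨n, hn⟩ := Complex.exp_eq_exp_iff_exists_int.1 (he t)
    exact ⟨n, by rw [hn]; ring⟩
  choose k hk using hdiff
  have hk_im (t : Q) : (k t : ℝ) = (ℓ t - ℓ' t).im / (2 * Real.pi) := by
    rw [hk, eq_div_iff (by positivity)]
    simp
  have hkc : Continuous k := by
    refine Int.isClosedEmbedding_coe_real.isInducing.continuous_iff.2 ?_
    simp only [Function.comp_def, hk_im]
    fun_prop
  have hks := hk s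
  rw [PreconnectedSpace.constant inferInstance hkc (y := t)] at hks
  linear_combination hks - hk t

end Logarithm

open Classical in
/-- The total change of the argument along a path in `ℂ ∖ {0}`, in units of full turns. -/
def winding (γ : I → ℂ) : ℝ :=
  if h : IsCubeIn {0}ᶜ γ then
    ((exists_log_path h).choose 1 - (exists_log_path h).choose 0).im / (2 * Real.pi) else 0

theorem winding_eq_of_exp_eq {γ ℓ : I → ℂ} (hℓ : Continuous ℓ)
    (he : ∀ t, Complex.exp (ℓ t) = γ t) : winding γ = (ℓ 1 - ℓ 0).im / (2 * Real.pi) := by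
  obtain rfl : (fun t => Complex.exp (ℓ t)) = γ := funext he
  have hγ : IsCubeIn {0}ᶜ fun t => Complex.exp (ℓ t) :=
    ⟨by fun_prop, fun t => Complex.exp_ne_zero _⟩
  obtain ⟨hlog, hexp⟩ := (exists_log_path hγ).choose_spec
  rw [winding, dif_pos hγ, sub_eq_sub_of_exp_eq hlog hℓ hexp]

theorem pathAdditiveOn_winding : PathAdditiveOn {0}ᶜ winding := by
  intro γ hγ
  obtain ⟨ℓ, hℓ, he⟩ := exists_log_path hγ
  have hpiece (b : Bool) : winding (γ ∘ half b) = _ :=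
    winding_eq_of_exp_eq (hℓ.comp (continuous_half b)) fun t => he _
  rw [subdivisionSum_bool, winding_eq_of_exp_eq hℓ he, hpiece, hpiece]
  simp only [Function.comp, half_true_one, half_false_zero, half_true_zero, Complex.sub_im]
  ring

theorem winding_mul {γ γ' : I → ℂ} (h : IsCubeIn {0}ᶜ γ) (h' : IsCubeIn {0}ᶜ γ') :
    winding (fun t => γ t * γ' t) = winding γ + winding γ' := by
  obtain ⟨ℓ, hℓ, he⟩ := exists_log_path h
  obtain ⟨ℓ', hℓ', he'⟩ := exists_log_path h'
  rw [winding_eq_of_exp_eq hℓ he, winding_eq_of_exp_eq hℓ' he',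
    winding_eq_of_exp_eq (hℓ.add hℓ') fun t => by rw [Pi.add_apply, Complex.exp_add, he, he']]
  simp only [Complex.sub_im, Pi.add_apply, Complex.add_im]
  ring

theorem winding_ofReal {r : I → ℝ} (hr : Continuous r) (h : ∀ t, 0 < r t) :
    winding (fun t => (r t : ℂ)) = 0 := by
  rw [winding_eq_of_exp_eq (ℓ := fun t => ((Real.log (r t) : ℝ) : ℂ))
    (Complex.continuous_ofReal.comp (hr.log fun t => (h t).ne'))
    fun t => by rw [← Complex.ofReal_exp, Real.exp_log (h t)]]
  simp

theorem winding_const {z : ℂ} (hz : z ≠ 0) : winding (fun _ => z) = 0 :=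
  pathAdditiveOn_winding.apply_const hz

theorem winding_pow {γ : I → ℂ} (h : IsCubeIn {0}ᶜ γ) (n : ℕ) :
    winding (fun t => γ t ^ n) = n * winding γ := by
  induction n with
  | zero => simp [winding_const]
  | succ k ih =>
    have hk : IsCubeIn {0}ᶜ fun t => γ t ^ k := ⟨h.1.pow k, fun t => pow_ne_zero _ (h.2 t)⟩
    simp only [pow_succ]
    rw [winding_mul hk h, ih]
    push_cast
    ring

theorem winding_exp_mul (a : ℂ) :
    winding (fun t : I => Complex.exp (a * (t : ℝ))) = a.im / (2 * Real.pi) := by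
  rw [winding_eq_of_exp_eq (ℓ := fun t : I => a * ((t : ℝ) : ℂ)) (by fun_prop) fun t => rfl]
  simp

theorem pathCoboundary_winding {s : I × I → ℂ} (hs : IsCubeIn {0}ᶜ s) :
    pathCoboundary winding s = 0 := by
  obtain ⟨ℓ, hℓ, he⟩ := exists_log_square hs
  have hedge (g : I → I × I) (hg : Continuous g) : winding (fun t => s (g t)) = _ :=
    winding_eq_of_exp_eq (hℓ.comp hg) fun t => he _
  simp only [pathCoboundary]
  rw [hedge (fun t => (1, t)) (by fun_prop), hedge (fun t => (0, t)) (by fun_prop),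
    hedge (fun t => (t, 1)) (by fun_prop), hedge (fun t => (t, 0)) (by fun_prop)]
  simp only [Function.comp, Complex.sub_im]
  ring

/-- The argument of a complex number, in units of full turns. -/
def turns (z : ℂ) : UnitAddCircle := ((Complex.arg z / (2 * Real.pi) : ℝ) : UnitAddCircle)

theorem turns_exp (w : ℂ) :
    turns (Complex.exp w) = ((w.im / (2 * Real.pi) : ℝ) : UnitAddCircle) := by
  obtain ⟨n, hn⟩ := Complex.exp_eq_exp_iff_exists_int.1 (Complex.exp_log (Complex.exp_ne_zero w))
  have him : Complex.arg (Complex.exp w) = w.im + n * (2 * Real.pi) := by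
    rw [← Complex.log_im, hn]
    simp
  rw [turns, him, ← sub_eq_zero, ← AddCircle.coe_sub, AddCircle.coe_eq_zero_iff]
  refine ⟨n, ?_⟩
  rw [zsmul_one, add_div, mul_div_cancel_right₀ _ (by positivity)]
  ring

theorem coe_winding {γ : I → ℂ} (h : IsCubeIn {0}ᶜ γ) :
    (winding γ : UnitAddCircle) = turns (γ 1) - turns (γ 0) := by
  obtain ⟨ℓ, hℓ, he⟩ := exists_log_path h
  rw [winding_eq_of_exp_eq hℓ he, ← he, ← he, turns_exp, turns_exp, ← AddCircle.coe_sub,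
    Complex.sub_im, sub_div]

theorem exists_winding_eq_intCast {γ : I → ℂ} (h : IsCubeIn {0}ᶜ γ) (hloop : γ 1 = γ 0) :
    ∃ m : ℤ, winding γ = m := by
  obtain ⟨m, hm⟩ := AddCircle.coe_eq_zero_iff (p := (1 : ℝ)) |>.1
    ((coe_winding h).trans (by rw [hloop, sub_self]))
  exact ⟨m, by rw [← hm]; simp⟩

section NormPow

/-- The `n`-th power, rescaled to preserve norms. -/
def normPow (n : ℕ) (z : ℂ) : ℂ := z ^ n * (((‖z‖ ^ (n - 1))⁻¹ : ℝ) : ℂ)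

theorem normPow_mul (n : ℕ) (z w : ℂ) : normPow n (z * w) = normPow n z * normPow n w := by
  simp only [normPow, norm_mul, mul_pow, mul_inv]
  push_cast
  ring

theorem normPow_conj (n : ℕ) (z : ℂ) :
    normPow n (starRingEnd ℂ z) = starRingEnd ℂ (normPow n z) := by
  simp only [normPow, map_mul, map_pow, RCLike.norm_conj, Complex.conj_ofReal]

variable {n : ℕ} (hn : 0 < n)

include hn

theorem norm_normPow (z : ℂ) : ‖normPow n z‖ = ‖z‖ := by
  obtain ⟨k, rfl⟩ := Nat.exists_eq_succ_of_ne_zero hn.ne'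
  rcases eq_or_ne z 0 with rfl | hz
  · simp [normPow]
  · have : ‖z‖ ≠ 0 := norm_ne_zero_iff.2 hz
    simp [normPow, pow_succ]
    field_simp

theorem normPow_ne_zero_iff {z : ℂ} : normPow n z ≠ 0 ↔ z ≠ 0 := by
  rw [← norm_ne_zero_iff, norm_normPow hn, norm_ne_zero_iff]

theorem normPow_ofReal {r : ℝ} (hr : 0 ≤ r) : normPow n (r : ℂ) = r := by
  obtain ⟨k, rfl⟩ := Nat.exists_eq_succ_of_ne_zero hn.ne'
  rcases hr.eq_or_lt with rfl | hr
  · simp [normPow]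
  · have : (r : ℂ) ≠ 0 := by exact_mod_cast hr.ne'
    simp only [normPow, Complex.norm_real, Real.norm_eq_abs, abs_of_pos hr, Nat.succ_sub_one]
    push_cast
    field_simp
    exact pow_succ _ _

theorem continuous_normPow : Continuous (normPow n) := by
  rw [continuous_iff_continuousAt]
  intro z
  rcases eq_or_ne z 0 with rfl | hz
  · have h0 : normPow n 0 = 0 := by simp [normPow, hn.ne']
    rw [ContinuousAt, h0, tendsto_zero_iff_norm_tendsto_zero]
    simp only [norm_normPow hn]
    exact tendsto_norm_zero
  · have hinv : ContinuousAt (fun z : ℂ => (‖z‖ ^ (n - 1))⁻¹) z :=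
      ContinuousAt.inv₀ (by fun_prop) (pow_ne_zero _ (norm_ne_zero_iff.2 hz))
    exact (continuousAt_id.pow n).mul (Complex.continuous_ofReal.continuousAt.comp hinv)

omit hn in
theorem winding_normPow (n : ℕ) {γ : I → ℂ} (h : IsCubeIn {0}ᶜ γ) :
    winding (fun t => normPow n (γ t)) = n * winding γ := by
  have hpos (t : I) : 0 < ‖γ t‖ ^ (n - 1) := pow_pos (norm_pos_iff.2 (h.2 t)) _
  have hcont : Continuous fun t => (‖γ t‖ ^ (n - 1))⁻¹ :=
    (h.1.norm.pow _).inv₀ fun t => (hpos t).ne'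
  have hscale : IsCubeIn {0}ᶜ fun t => (((‖γ t‖ ^ (n - 1))⁻¹ : ℝ) : ℂ) :=
    ⟨Complex.continuous_ofReal.comp hcont,
      fun t => Complex.ofReal_ne_zero.2 (inv_pos.2 (hpos t)).ne'⟩
  have hpow : IsCubeIn {0}ᶜ fun t => γ t ^ n := ⟨h.1.pow n, fun t => pow_ne_zero _ (h.2 t)⟩
  unfold normPow
  rw [winding_mul hpow hscale, winding_pow h,
    winding_ofReal hcont fun t => inv_pos.2 (hpos t), add_zero]

end NormPow

/-! ### The degree cocycle -/

section DegreeCocycle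

/-- The complement in `ℂ × ℝ ≅ ℝ³` of the closed lower half of the vertical axis. -/
def northDomain : Set (ℂ × ℝ) := {v | v.1 ≠ 0 ∨ 0 < v.2}

/-- The complement in `ℂ × ℝ ≅ ℝ³` of the closed upper half of the vertical axis. -/
def southDomain : Set (ℂ × ℝ) := {v | v.1 ≠ 0 ∨ v.2 < 0}

theorem isOpen_northDomain : IsOpen northDomain :=
  (isOpen_ne_fun continuous_fst continuous_const).union (isOpen_lt continuous_const continuous_snd)

theorem isOpen_southDomain : IsOpen southDomain :=
  (isOpen_ne_fun continuous_fst continuous_const).union (isOpen_lt continuous_snd continuous_const)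

theorem northDomain_union_southDomain : northDomain ∪ southDomain = {0}ᶜ := by
  ext ⟨z, h⟩
  simp only [northDomain, southDomain, Set.mem_union, Set.mem_ofPred_eq, Set.mem_compl_iff,
    Set.mem_singleton_iff, Prod.mk_eq_zero, not_and_or, ← ne_eq, ne_iff_lt_or_gt (a := h)]
  tauto

theorem fst_ne_zero_of_mem_northDomain_of_mem_southDomain {v : ℂ × ℝ} (hN : v ∈ northDomain)
    (hS : v ∈ southDomain) : v.1 ≠ 0 :=
  hN.elim id fun h => hS.elim id fun h' => absurd h h'.not_gt

theorem pathAdditiveOn_winding_fst {Y : Type*} [TopologicalSpace Y] :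
    PathAdditiveOn {v : ℂ × Y | v.1 ≠ 0} fun γ => winding fun t => (γ t).1 :=
  pathAdditiveOn_winding.pullback (f := Prod.fst) continuousOn_fst fun _ hv => hv

theorem exists_axisWinding : ∃ φ : (I → ℂ × ℝ) → ℝ, PathAdditiveOn Set.univ φ ∧
    ∀ γ, IsCubeIn {v : ℂ × ℝ | v.1 ≠ 0} γ → φ γ = winding fun t => (γ t).1 :=
  pathAdditiveOn_winding_fst.exists_extension

/-- The winding around the vertical axis of `ℂ × ℝ`, extended to an additive cochain on all
paths. -/
def axisWinding : (I → ℂ × ℝ) → ℝ := exists_axisWinding.choose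

theorem pathAdditiveOn_axisWinding : PathAdditiveOn Set.univ axisWinding :=
  exists_axisWinding.choose_spec.1

theorem axisWinding_eq {γ : I → ℂ × ℝ} (h : IsCubeIn {v : ℂ × ℝ | v.1 ≠ 0} γ) :
    axisWinding γ = winding fun t => (γ t).1 :=
  exists_axisWinding.choose_spec.2 γ h

theorem exists_degreeCocycle : ∃ ω : (I × I → ℂ × ℝ) → ℝ, SquareAdditiveOn {0}ᶜ ω ∧
    IsCocycleOn {0}ᶜ ω ∧ (∀ s, IsCubeIn northDomain s → ω s = pathCoboundary axisWinding s) ∧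
    ∀ s, IsCubeIn southDomain s → ω s = 0 := by
  rw [← northDomain_union_southDomain]
  refine SquareAdditiveOn.exists_glue_cocycle isOpen_northDomain isOpen_southDomain
    (PathAdditiveOn.squareAdditiveOn_pathCoboundary
      (pathAdditiveOn_axisWinding.mono (Set.subset_univ _)))
    (c' := fun _ => 0) ⟨fun s _ => by simp [subdivisionSum], fun s _ => by simp [subdivisionSum]⟩
    (isCocycleOn_pathCoboundary _) (fun k _ => by simp [squareCoboundary]) fun s hN hS => ?_
  have hs : IsCubeIn {v : ℂ × ℝ | v.1 ≠ 0} s :=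
    ⟨hN.1, fun t => fst_ne_zero_of_mem_northDomain_of_mem_southDomain (hN.2 t) (hS.2 t)⟩
  rw [pathCoboundary_congr (fun γ => axisWinding_eq) hs]
  exact pathCoboundary_winding ⟨hs.1.fst, hs.2⟩

/-- A cocycle on the squares in `ℝ³ ∖ 0` whose value on a sphere is the degree of the sphere. It
is `δ axisWinding` on `northDomain` and zero on `southDomain`. -/
def degreeCocycle : (I × I → ℂ × ℝ) → ℝ := exists_degreeCocycle.choose

theorem squareAdditiveOn_degreeCocycle : SquareAdditiveOn {0}ᶜ degreeCocycle :=
  exists_degreeCocycle.choose_spec.1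

theorem isCocycleOn_degreeCocycle : IsCocycleOn {0}ᶜ degreeCocycle :=
  exists_degreeCocycle.choose_spec.2.1

theorem degreeCocycle_of_northDomain {s : I × I → ℂ × ℝ} (hs : IsCubeIn northDomain s) :
    degreeCocycle s = pathCoboundary axisWinding s :=
  exists_degreeCocycle.choose_spec.2.2.1 s hs

theorem degreeCocycle_of_southDomain {s : I × I → ℂ × ℝ} (hs : IsCubeIn southDomain s) :
    degreeCocycle s = 0 :=
  exists_degreeCocycle.choose_spec.2.2.2 s hs

end DegreeCocycle

section Hopf

/-- The Hopf map `ℂ² → ℝ³`, mapping unit vectors to unit vectors. -/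
def hopfMap (ξ : ℂ × ℂ) : ℂ × ℝ := (2 * ξ.2 * starRingEnd ℂ ξ.1, ‖ξ.1‖ ^ 2 - ‖ξ.2‖ ^ 2)

@[fun_prop]
theorem continuous_hopfMap : Continuous hopfMap := by unfold hopfMap; fun_prop

theorem fst_ne_zero_union_snd_ne_zero :
    {ξ : ℂ × ℂ | ξ.1 ≠ 0} ∪ {ξ | ξ.2 ≠ 0} = {0}ᶜ := by
  ext ξ
  simp [Prod.ext_iff, imp_iff_not_or]

theorem isOpen_fst_ne_zero : IsOpen {ξ : ℂ × ℂ | ξ.1 ≠ 0} :=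
  isOpen_ne_fun continuous_fst continuous_const

theorem isOpen_snd_ne_zero : IsOpen {ξ : ℂ × ℂ | ξ.2 ≠ 0} :=
  isOpen_ne_fun continuous_snd continuous_const

theorem hopfMap_mem_northDomain {ξ : ℂ × ℂ} (h : ξ.1 ≠ 0) : hopfMap ξ ∈ northDomain := by
  rcases eq_or_ne ξ.2 0 with h2 | h2
  · exact Or.inr (by simp [hopfMap, h2, h])
  · exact Or.inl (by simp [hopfMap, h, h2])

theorem hopfMap_mem_southDomain {ξ : ℂ × ℂ} (h : ξ.2 ≠ 0) : hopfMap ξ ∈ southDomain := by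
  rcases eq_or_ne ξ.1 0 with h1 | h1
  · exact Or.inr (by simp [hopfMap, h1, h])
  · exact Or.inl (by simp [hopfMap, h, h1])

theorem mapsTo_hopfMap : Set.MapsTo hopfMap {0}ᶜ {0}ᶜ := by
  rw [← northDomain_union_southDomain, ← fst_ne_zero_union_snd_ne_zero]
  exact fun _ => Or.imp hopfMap_mem_northDomain hopfMap_mem_southDomain

-- Where both coordinates are nonzero, `2 ξ₂ conj ξ₁ · ξ₁` is a positive multiple of `ξ₂`.
theorem axisWinding_hopfMap_add_winding {γ : I → ℂ × ℂ} (h1 : IsCubeIn {ξ : ℂ × ℂ | ξ.1 ≠ 0} γ)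
    (h2 : IsCubeIn {ξ : ℂ × ℂ | ξ.2 ≠ 0} γ) :
    axisWinding (hopfMap ∘ γ) + winding (fun t => (γ t).1) = winding fun t => (γ t).2 := by
  have hγ := h1.1
  have h1' : IsCubeIn {0}ᶜ fun t => (γ t).1 := ⟨by fun_prop, h1.2⟩
  have h2' : IsCubeIn {0}ᶜ fun t => (γ t).2 := ⟨by fun_prop, h2.2⟩
  have hH : IsCubeIn {v : ℂ × ℝ | v.1 ≠ 0} (hopfMap ∘ γ) :=
    ⟨by fun_prop, fun t => by simpa [hopfMap] using ⟨h2.2 t, h1.2 t⟩⟩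
  have hpos (t : I) : 0 < 2 * ‖(γ t).1‖ ^ 2 := by
    have := norm_pos_iff.2 (h1.2 t)
    positivity
  have hmul (t : I) : (hopfMap (γ t)).1 * (γ t).1 = (γ t).2 * ((2 * ‖(γ t).1‖ ^ 2 : ℝ) : ℂ) := by
    have := Complex.conj_mul' (γ t).1
    simp only [hopfMap]
    push_cast
    linear_combination 2 * (γ t).2 * this
  rw [axisWinding_eq hH, ← winding_mul ⟨hH.1.fst, hH.2⟩ h1']
  simp only [Function.comp_apply, hmul]
  rw [winding_mul h2' ⟨by fun_prop, fun t => Complex.ofReal_ne_zero.2 (hpos t).ne'⟩,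
    winding_ofReal (by fun_prop) hpos, add_zero]

theorem exists_hopfCochain : ∃ β : (I → ℂ × ℂ) → ℝ, PathAdditiveOn {0}ᶜ β ∧
    (∀ γ, IsCubeIn {ξ : ℂ × ℂ | ξ.1 ≠ 0} γ →
      β γ = axisWinding (hopfMap ∘ γ) + winding fun t => (γ t).1) ∧
    ∀ γ, IsCubeIn {ξ : ℂ × ℂ | ξ.2 ≠ 0} γ → β γ = winding fun t => (γ t).2 := by
  rw [← fst_ne_zero_union_snd_ne_zero]
  refine PathAdditiveOn.exists_glue isOpen_fst_ne_zero isOpen_snd_ne_zero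
    (PathAdditiveOn.add ?_ pathAdditiveOn_winding_fst) ?_ fun γ => axisWinding_hopfMap_add_winding
  · exact pathAdditiveOn_axisWinding.pullback continuous_hopfMap.continuousOn fun _ _ => trivial
  · exact pathAdditiveOn_winding.pullback (f := Prod.snd) continuousOn_snd fun _ hξ => hξ

/-- A path cochain on `ℂ² ∖ 0` whose coboundary is the pullback of the degree cocycle along the
Hopf map. -/
def hopfCochain : (I → ℂ × ℂ) → ℝ := exists_hopfCochain.choose

theorem pathAdditiveOn_hopfCochain : PathAdditiveOn {0}ᶜ hopfCochain :=
  exists_hopfCochain.choose_spec.1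

theorem hopfCochain_of_fst_ne_zero {γ : I → ℂ × ℂ} (hγ : IsCubeIn {ξ : ℂ × ℂ | ξ.1 ≠ 0} γ) :
    hopfCochain γ = axisWinding (hopfMap ∘ γ) + winding fun t => (γ t).1 :=
  exists_hopfCochain.choose_spec.2.1 γ hγ

theorem hopfCochain_of_snd_ne_zero {γ : I → ℂ × ℂ} (hγ : IsCubeIn {ξ : ℂ × ℂ | ξ.2 ≠ 0} γ) :
    hopfCochain γ = winding fun t => (γ t).2 :=
  exists_hopfCochain.choose_spec.2.2 γ hγ

theorem degreeCocycle_hopfMap_comp {s : I × I → ℂ × ℂ} (hs : IsCubeIn {0}ᶜ s) :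
    degreeCocycle (hopfMap ∘ s) = pathCoboundary hopfCochain s := by
  have hadd : SquareAdditiveOn {0}ᶜ fun s : I × I → ℂ × ℂ =>
      degreeCocycle (hopfMap ∘ s) - pathCoboundary hopfCochain s :=
    (squareAdditiveOn_degreeCocycle.pullback continuous_hopfMap.continuousOn mapsTo_hopfMap).sub
      pathAdditiveOn_hopfCochain.squareAdditiveOn_pathCoboundary
  rw [← fst_ne_zero_union_snd_ne_zero] at hadd hs
  refine sub_eq_zero.1 (hadd.eq_zero_of_cover isOpen_fst_ne_zero isOpen_snd_ne_zero
    (fun s hs => sub_eq_zero.2 ?_) (fun s hs => sub_eq_zero.2 ?_) hs)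
  · have hw := pathCoboundary_winding (s := fun t => (s t).1) ⟨hs.1.fst, hs.2⟩
    rw [degreeCocycle_of_northDomain ⟨continuous_hopfMap.comp hs.1,
        fun t => hopfMap_mem_northDomain (hs.2 t)⟩,
      pathCoboundary_congr (fun γ => hopfCochain_of_fst_ne_zero) hs]
    simp only [pathCoboundary, Function.comp_def] at hw ⊢
    linear_combination -hw
  · rw [degreeCocycle_of_southDomain ⟨continuous_hopfMap.comp hs.1,
        fun t => hopfMap_mem_southDomain (hs.2 t)⟩,
      pathCoboundary_congr (fun γ => hopfCochain_of_snd_ne_zero) hs]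
    exact (pathCoboundary_winding (s := fun t => (s t).2) ⟨hs.1.snd, hs.2⟩).symm

end Hopf

section PowerMap

variable {n : ℕ}

/-- A self-map of `ℝ³` preserving norms, of degree `n` on the unit sphere. -/
def powerMap (n : ℕ) (v : ℂ × ℝ) : ℂ × ℝ := (normPow n v.1, v.2)

/-- The lift of `powerMap n` along the Hopf map. -/
def powerLift (n : ℕ) (ξ : ℂ × ℂ) : ℂ × ℂ := (normPow n ξ.1, normPow n ξ.2)

/-- The degree cocycle divided by `n`, with values in `ℝ/ℤ`. -/
def degreeCocycleMod (n : ℕ) (s : I × I → ℂ × ℝ) : UnitAddCircle :=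
  ((degreeCocycle s / n : ℝ) : UnitAddCircle)

theorem squareAdditiveOn_degreeCocycleMod : SquareAdditiveOn {0}ᶜ (degreeCocycleMod n) :=
  squareAdditiveOn_degreeCocycle.map
    ((QuotientAddGroup.mk' _).comp (AddMonoidHom.mulRight (n : ℝ)⁻¹))

theorem isCocycleOn_degreeCocycleMod : IsCocycleOn {0}ᶜ (degreeCocycleMod n) :=
  isCocycleOn_degreeCocycle.map ((QuotientAddGroup.mk' _).comp (AddMonoidHom.mulRight (n : ℝ)⁻¹))

open Classical in
/-- The argument of the complex coordinate, in full turns, with value `0` on the vertical axis. -/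
def axisTurns (v : ℂ × ℝ) : UnitAddCircle := if v.1 = 0 then 0 else turns v.1

variable (hn : 0 < n)

include hn

theorem continuous_powerMap : Continuous (powerMap n) := by
  have := continuous_normPow hn
  unfold powerMap; fun_prop

theorem continuous_powerLift : Continuous (powerLift n) := by
  have := continuous_normPow hn
  unfold powerLift; fun_prop

theorem hopfMap_powerLift (ξ : ℂ × ℂ) : hopfMap (powerLift n ξ) = powerMap n (hopfMap ξ) := by
  have h2 : normPow n 2 = 2 := by simpa using normPow_ofReal hn zero_le_two
  simp only [hopfMap, powerLift, powerMap, normPow_mul, norm_normPow hn, normPow_conj, h2]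

theorem powerMap_mem_northDomain_iff {v : ℂ × ℝ} :
    powerMap n v ∈ northDomain ↔ v ∈ northDomain := by
  simp only [northDomain, powerMap, Set.mem_ofPred_eq, normPow_ne_zero_iff hn]

theorem powerMap_mem_southDomain_iff {v : ℂ × ℝ} :
    powerMap n v ∈ southDomain ↔ v ∈ southDomain := by
  simp only [southDomain, powerMap, Set.mem_ofPred_eq, normPow_ne_zero_iff hn]

theorem mapsTo_powerMap : Set.MapsTo (powerMap n) {0}ᶜ {0}ᶜ := by
  rw [← northDomain_union_southDomain]
  exact fun _ => Or.imp (powerMap_mem_northDomain_iff hn).2 (powerMap_mem_southDomain_iff hn).2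

theorem mapsTo_powerLift : Set.MapsTo (powerLift n) {0}ᶜ {0}ᶜ := by
  rw [← fst_ne_zero_union_snd_ne_zero]
  exact fun _ => Or.imp (normPow_ne_zero_iff hn).2 (normPow_ne_zero_iff hn).2

theorem coe_axisWinding_powerMap_div {γ : I → ℂ × ℝ} (h : IsCubeIn {v : ℂ × ℝ | v.1 ≠ 0} γ) :
    ((axisWinding (powerMap n ∘ γ) / n : ℝ) : UnitAddCircle) =
      axisTurns (γ 1) - axisTurns (γ 0) := by
  have h' : IsCubeIn {0}ᶜ fun t => (γ t).1 := ⟨h.1.fst, h.2⟩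
  rw [axisWinding_eq
    ⟨(continuous_powerMap hn).comp h.1, fun t => (normPow_ne_zero_iff hn).2 (h.2 t)⟩]
  simp only [Function.comp, powerMap]
  rw [winding_normPow n h', mul_div_cancel_left₀ _ (by exact_mod_cast hn.ne'), coe_winding h',
    axisTurns, axisTurns, if_neg (h.2 1), if_neg (h.2 0)]

theorem exists_powerCochain : ∃ b : (I → ℂ × ℝ) → UnitAddCircle, PathAdditiveOn {0}ᶜ b ∧
    (∀ γ, IsCubeIn northDomain γ → b γ =
      ((axisWinding (powerMap n ∘ γ) / n : ℝ) : UnitAddCircle) -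
        (axisTurns (γ 1) - axisTurns (γ 0))) ∧
    ∀ γ, IsCubeIn southDomain γ → b γ = 0 := by
  rw [← northDomain_union_southDomain]
  refine PathAdditiveOn.exists_glue isOpen_northDomain isOpen_southDomain (fun γ hγ => ?_)
    (b' := fun _ => 0) (fun γ _ => by simp [subdivisionSum]) fun γ hN hS => sub_eq_zero.2 ?_
  · have hφ := pathAdditiveOn_axisWinding.eq_add
      (γ := powerMap n ∘ γ) ⟨(continuous_powerMap hn).comp hγ.1, fun _ => trivial⟩
    simp only [subdivisionSum_bool, Function.comp_apply, half_false_zero, half_true_one,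
      half_true_zero, hφ, Function.comp_assoc, add_div, AddCircle.coe_add]
    abel
  · exact coe_axisWinding_powerMap_div hn
      ⟨hN.1, fun t => fst_ne_zero_of_mem_northDomain_of_mem_southDomain (hN.2 t) (hS.2 t)⟩

/-- A path cochain on `ℝ³ ∖ 0` whose coboundary is the pullback of `degreeCocycleMod n` along
`powerMap n`. -/
def powerCochain : (I → ℂ × ℝ) → UnitAddCircle := (exists_powerCochain hn).choose

theorem pathAdditiveOn_powerCochain : PathAdditiveOn {0}ᶜ (powerCochain hn) :=
  (exists_powerCochain hn).choose_spec.1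

theorem powerCochain_of_northDomain {γ : I → ℂ × ℝ} (hγ : IsCubeIn northDomain γ) :
    powerCochain hn γ = ((axisWinding (powerMap n ∘ γ) / n : ℝ) : UnitAddCircle) -
      (axisTurns (γ 1) - axisTurns (γ 0)) :=
  (exists_powerCochain hn).choose_spec.2.1 γ hγ

theorem powerCochain_of_southDomain {γ : I → ℂ × ℝ} (hγ : IsCubeIn southDomain γ) :
    powerCochain hn γ = 0 :=
  (exists_powerCochain hn).choose_spec.2.2 γ hγ

theorem degreeCocycleMod_powerMap_comp {s : I × I → ℂ × ℝ} (hs : IsCubeIn {0}ᶜ s) :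
    degreeCocycleMod n (powerMap n ∘ s) = pathCoboundary (powerCochain hn) s := by
  have hpow := continuous_powerMap hn
  have hadd : SquareAdditiveOn {0}ᶜ fun s : I × I → ℂ × ℝ =>
      degreeCocycleMod n (powerMap n ∘ s) - pathCoboundary (powerCochain hn) s :=
    (squareAdditiveOn_degreeCocycleMod.pullback hpow.continuousOn (mapsTo_powerMap hn)).sub
      (pathAdditiveOn_powerCochain hn).squareAdditiveOn_pathCoboundary
  rw [← northDomain_union_southDomain] at hadd hs
  refine sub_eq_zero.1 (hadd.eq_zero_of_cover isOpen_northDomain isOpen_southDomain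
    (fun s hs => sub_eq_zero.2 ?_) (fun s hs => sub_eq_zero.2 ?_) hs)
  · rw [degreeCocycleMod, degreeCocycle_of_northDomain
        ⟨hpow.comp hs.1, fun t => (powerMap_mem_northDomain_iff hn).2 (hs.2 t)⟩,
      pathCoboundary_congr (fun γ => powerCochain_of_northDomain hn) hs]
    simp only [pathCoboundary, Function.comp_def, sub_div, AddCircle.coe_sub]
    abel
  · rw [degreeCocycleMod, degreeCocycle_of_southDomain
        ⟨hpow.comp hs.1, fun t => (powerMap_mem_southDomain_iff hn).2 (hs.2 t)⟩,
      pathCoboundary_congr (fun γ => powerCochain_of_southDomain hn) hs]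
    simp [pathCoboundary]

end PowerMap

section HopfSquare

/-- A square in `ℂ² ∖ 0` whose image under the Hopf map is a sphere of degree one. -/
def hopfSquare (t : I × I) : ℂ × ℂ :=
  (((t.1 : ℝ) * (1 - t.1) * (t.2 * (1 - t.2)) : ℝ),
    ((1 - (t.1 : ℝ) : ℝ) : ℂ) +
      ((t.1 : ℝ) : ℂ) * Complex.exp (2 * Real.pi * Complex.I * ((t.2 : ℝ) : ℂ)))

@[fun_prop]
theorem continuous_hopfSquare : Continuous hopfSquare := by unfold hopfSquare; fun_prop

theorem hopfSquare_zero_left (t : I) : hopfSquare (0, t) = (0, 1) := by simp [hopfSquare]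

theorem hopfSquare_one_left (t : I) :
    hopfSquare (1, t) = (0, Complex.exp (2 * Real.pi * Complex.I * ((t : ℝ) : ℂ))) := by
  simp [hopfSquare]

theorem hopfSquare_zero_right (t : I) : hopfSquare (t, 0) = (0, 1) := by simp [hopfSquare]

theorem hopfSquare_one_right (t : I) : hopfSquare (t, 1) = (0, 1) := by simp [hopfSquare]

theorem isCubeIn_hopfSquare : IsCubeIn {0}ᶜ hopfSquare := by
  refine ⟨continuous_hopfSquare, fun ⟨a, b⟩ h => ?_⟩
  have hcorner : a = 0 ∨ a = 1 ∨ b = 0 ∨ b = 1 := by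
    have hone (c : I) : (1 : ℂ) = ((c : ℝ) : ℂ) ↔ c = 1 := by
      rw [eq_comm, Complex.ofReal_eq_one, Set.Icc.coe_eq_one]
    simpa [hopfSquare, sub_eq_zero, hone, or_assoc] using congrArg Prod.fst h
  rcases hcorner with rfl | rfl | rfl | rfl
  · simp [hopfSquare_zero_left] at h
  · simp [hopfSquare_one_left] at h
  · simp [hopfSquare_zero_right] at h
  · simp [hopfSquare_one_right] at h

theorem degreeCocycle_powerMap_hopfMap_hopfSquare {n : ℕ} (hn : 0 < n) :
    degreeCocycle (fun t => powerMap n (hopfMap (hopfSquare t))) = n := by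
  have h1 : normPow n 1 = 1 := by simpa using normPow_ofReal hn zero_le_one
  have h0 : normPow n 0 = 0 := by simpa using normPow_ofReal hn le_rfl
  have hc : ((0 : ℂ), (1 : ℂ)) ∈ ({0}ᶜ : Set (ℂ × ℂ)) := by simp
  have hcircle : IsCubeIn {0}ᶜ fun t : I => Complex.exp (2 * Real.pi * Complex.I * ((t : ℝ) : ℂ)) :=
    ⟨by fun_prop, fun t => Complex.exp_ne_zero _⟩
  have hs : IsCubeIn {0}ᶜ (powerLift n ∘ hopfSquare) :=
    isCubeIn_hopfSquare.comp_continuousOn (continuous_powerLift hn).continuousOn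
      (mapsTo_powerLift hn)
  have hβ : hopfCochain (fun t : I => (0,
      normPow n (Complex.exp (2 * Real.pi * Complex.I * ((t : ℝ) : ℂ))))) = n := by
    have := continuous_normPow hn
    rw [hopfCochain_of_snd_ne_zero
        ⟨by fun_prop, fun t => (normPow_ne_zero_iff hn).2 (Complex.exp_ne_zero _)⟩,
      winding_normPow n hcircle, winding_exp_mul]
    simp [Real.pi_ne_zero]
  calc degreeCocycle (fun t => powerMap n (hopfMap (hopfSquare t)))
      = degreeCocycle (hopfMap ∘ powerLift n ∘ hopfSquare) := by
        simp only [Function.comp_def, hopfMap_powerLift hn]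
    _ = pathCoboundary hopfCochain (powerLift n ∘ hopfSquare) := degreeCocycle_hopfMap_comp hs
    _ = n := by
        simp only [pathCoboundary, Function.comp_apply, hopfSquare_zero_left, hopfSquare_one_left,
          hopfSquare_zero_right, hopfSquare_one_right, powerLift, h1, h0, hβ,
          pathAdditiveOn_hopfCochain.apply_const hc, sub_zero]

end HopfSquare

/-! ### Lifting along the Hopf map -/

section SqNorm

variable {E F : Type*} [NormedAddCommGroup E] [NormedAddCommGroup F]

/-- The square of the Euclidean norm on a product of two spaces; the norm of `E × F` itself is the
supremum norm. -/
def sqNorm (v : E × F) : ℝ := ‖v.1‖ ^ 2 + ‖v.2‖ ^ 2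

@[fun_prop]
theorem continuous_sqNorm : Continuous (sqNorm : E × F → ℝ) := by unfold sqNorm; fun_prop

theorem sqNorm_nonneg (v : E × F) : 0 ≤ sqNorm v := by unfold sqNorm; positivity

theorem sqNorm_eq_zero_iff {v : E × F} : sqNorm v = 0 ↔ v = 0 := by
  rw [sqNorm, add_eq_zero_iff_of_nonneg (by positivity) (by positivity), sq_eq_zero_iff,
    sq_eq_zero_iff, norm_eq_zero, norm_eq_zero, Prod.ext_iff]
  rfl

theorem sqNorm_pos_iff {v : E × F} : 0 < sqNorm v ↔ v ≠ 0 := by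
  rw [(sqNorm_nonneg v).lt_iff_ne', ne_eq, sqNorm_eq_zero_iff]

theorem ne_zero_of_sqNorm_eq_one {v : E × F} (h : sqNorm v = 1) : v ≠ 0 :=
  sqNorm_pos_iff.1 (h ▸ one_pos)

theorem sqNorm_le (v : E × F) : sqNorm v ≤ 2 * ‖v‖ ^ 2 := by
  have h1 := pow_le_pow_left₀ (norm_nonneg _) (norm_fst_le v) 2
  have h2 := pow_le_pow_left₀ (norm_nonneg _) (norm_snd_le v) 2
  rw [sqNorm]
  linarith

theorem sqNorm_smul {𝕜 : Type*} [NormedField 𝕜] [NormedSpace 𝕜 E] [NormedSpace 𝕜 F] (c : 𝕜)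
    (v : E × F) : sqNorm (c • v) = ‖c‖ ^ 2 * sqNorm v := by
  simp only [sqNorm, Prod.smul_fst, Prod.smul_snd, norm_smul]
  ring

/-- The Euclidean norm on a product of two spaces. -/
def euclNorm (v : E × F) : ℝ := √(sqNorm v)

@[fun_prop]
theorem continuous_euclNorm : Continuous (euclNorm : E × F → ℝ) := by unfold euclNorm; fun_prop

theorem sq_euclNorm (v : E × F) : euclNorm v ^ 2 = sqNorm v := Real.sq_sqrt (sqNorm_nonneg v)

theorem euclNorm_pos_iff {v : E × F} : 0 < euclNorm v ↔ v ≠ 0 := by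
  rw [euclNorm, Real.sqrt_pos, sqNorm_pos_iff]

theorem euclNorm_eq_one_iff {v : E × F} : euclNorm v = 1 ↔ sqNorm v = 1 := Real.sqrt_eq_one

theorem euclNorm_eq_norm_toLp (v : E × F) : euclNorm v = ‖WithLp.toLp 2 v‖ :=
  (WithLp.prod_norm_eq_of_L2 _).symm

variable [NormedSpace ℝ E] [NormedSpace ℝ F]

theorem euclNorm_smul {r : ℝ} (hr : 0 ≤ r) (v : E × F) : euclNorm (r • v) = r * euclNorm v := by
  rw [euclNorm, sqNorm_smul, Real.sqrt_mul (sq_nonneg _), Real.sqrt_sq (norm_nonneg r),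
    Real.norm_of_nonneg hr, euclNorm]

/-- Radial projection to the Euclidean unit sphere. -/
def radialProj (v : E × F) : E × F := (euclNorm v)⁻¹ • v

theorem continuousOn_radialProj : ContinuousOn (radialProj : E × F → E × F) {0}ᶜ :=
  (continuous_euclNorm.continuousOn.inv₀ fun _ hv => (euclNorm_pos_iff.2 hv).ne').smul
    continuousOn_id

theorem euclNorm_smul_radialProj (v : E × F) : euclNorm v • radialProj v = v := by
  rcases eq_or_ne v 0 with rfl | h
  · simp [radialProj]
  · rw [radialProj, smul_inv_smul₀ (euclNorm_pos_iff.2 h).ne']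

theorem sqNorm_radialProj {v : E × F} (h : v ≠ 0) : sqNorm (radialProj v) = 1 := by
  rw [radialProj, sqNorm_smul, norm_inv, inv_pow, Real.norm_eq_abs, sq_abs, sq_euclNorm,
    inv_mul_cancel₀ (sqNorm_pos_iff.2 h).ne']

theorem radialProj_eq_self {v : E × F} (h : sqNorm v = 1) : radialProj v = v := by
  rw [radialProj, euclNorm_eq_one_iff.2 h, inv_one, one_smul]

end SqNorm

theorem hopfMap_smul (c : ℂ) (ξ : ℂ × ℂ) : hopfMap (c • ξ) = (‖c‖ ^ 2) • hopfMap ξ := by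
  simp only [hopfMap, Prod.smul_fst, Prod.smul_snd, smul_eq_mul, map_mul, norm_mul, Prod.smul_mk]
  refine Prod.ext ?_ (by ring)
  simp only [Complex.real_smul]
  push_cast
  linear_combination (2 * ξ.2 * starRingEnd ℂ ξ.1) * Complex.mul_conj' c

theorem sqNorm_hopfMap (ξ : ℂ × ℂ) : sqNorm (hopfMap ξ) = sqNorm ξ ^ 2 := by
  simp only [sqNorm, hopfMap, norm_mul, RCLike.norm_conj, Complex.norm_ofNat, Real.norm_eq_abs,
    sq_abs]
  ring

section LineProj

/-- The orthogonal projection of `ℂ²` onto the complex line over the unit vector `v`. -/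
def lineProj (v : ℂ × ℝ) (ξ : ℂ × ℂ) : ℂ × ℂ :=
  (((1 + v.2 : ℝ) * ξ.1 + starRingEnd ℂ v.1 * ξ.2) / 2,
    (v.1 * ξ.1 + ((1 - v.2 : ℝ) : ℂ) * ξ.2) / 2)

theorem norm_sq_eq_re_sq_add_im_sq (z : ℂ) : ‖z‖ ^ 2 = z.re ^ 2 + z.im ^ 2 := by
  rw [← Complex.normSq_eq_norm_sq, Complex.normSq_apply]
  ring

theorem lineProj_mk (a b h c d e f : ℝ) : lineProj (⟨a, b⟩, h) (⟨c, d⟩, ⟨e, f⟩) =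
    (⟨((1 + h) * c + a * e + b * f) / 2, ((1 + h) * d + a * f - b * e) / 2⟩,
      ⟨(a * c - b * d + (1 - h) * e) / 2, (a * d + b * c + (1 - h) * f) / 2⟩) := by
  unfold lineProj
  refine Prod.ext (Complex.ext ?_ ?_) (Complex.ext ?_ ?_)
  · simp; ring
  · simp; ring
  · simp
  · simp

theorem hopfMap_mk (c d e f : ℝ) : hopfMap (⟨c, d⟩, ⟨e, f⟩) =
    (⟨2 * (e * c + f * d), 2 * (f * c - e * d)⟩, c ^ 2 + d ^ 2 - e ^ 2 - f ^ 2) := by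
  refine Prod.ext (Complex.ext ?_ ?_) ?_
  · simp [hopfMap]; ring
  · simp [hopfMap]; ring
  · simp [hopfMap, norm_sq_eq_re_sq_add_im_sq]; ring

theorem sqNorm_mk_complex (c d e f : ℝ) :
    sqNorm ((⟨c, d⟩, ⟨e, f⟩) : ℂ × ℂ) = c ^ 2 + d ^ 2 + e ^ 2 + f ^ 2 := by
  simp only [sqNorm, norm_sq_eq_re_sq_add_im_sq]
  ring

theorem sqNorm_mk_real (a b h : ℝ) : sqNorm ((⟨a, b⟩, h) : ℂ × ℝ) = a ^ 2 + b ^ 2 + h ^ 2 := by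
  simp only [sqNorm, norm_sq_eq_re_sq_add_im_sq, Real.norm_eq_abs, sq_abs]

theorem hopfMap_mk_eq_iff {a b h c d e f : ℝ} {r : ℝ} :
    hopfMap (⟨c, d⟩, ⟨e, f⟩) = r • ((⟨a, b⟩, h) : ℂ × ℝ) ↔ 2 * (e * c + f * d) = r * a ∧
      2 * (f * c - e * d) = r * b ∧ c ^ 2 + d ^ 2 - e ^ 2 - f ^ 2 = r * h := by
  simp [hopfMap_mk, Complex.ext_iff, and_assoc]

theorem hopfMap_lineProj {v : ℂ × ℝ} (hv : sqNorm v = 1) (ξ : ℂ × ℂ) :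
    hopfMap (lineProj v ξ) = sqNorm (lineProj v ξ) • v := by
  obtain ⟨⟨a, b⟩, h⟩ := v
  obtain ⟨⟨c, d⟩, ⟨e, f⟩⟩ := ξ
  rw [sqNorm_mk_real] at hv
  rw [lineProj_mk, hopfMap_mk_eq_iff, sqNorm_mk_complex]
  refine ⟨?_, ?_, ?_⟩
  · linear_combination
      (-1 / 4) * ((c ^ 2 + d ^ 2 + e ^ 2 + f ^ 2) * a + 2 * (e * c + f * d)) * hv
  · linear_combination
      (-1 / 4) * ((c ^ 2 + d ^ 2 + e ^ 2 + f ^ 2) * b + 2 * (f * c - e * d)) * hv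
  · linear_combination
      (-1 / 4) * ((c ^ 2 + d ^ 2 + e ^ 2 + f ^ 2) * h + (c ^ 2 + d ^ 2 - e ^ 2 - f ^ 2)) * hv

theorem sqNorm_lineProj {v v' : ℂ × ℝ} (hv : sqNorm v = 1) (hv' : sqNorm v' = 1) {ξ : ℂ × ℂ}
    (hξ : hopfMap ξ = sqNorm ξ • v') :
    sqNorm (lineProj v ξ) = sqNorm ξ * (1 - sqNorm (v - v') / 4) := by
  obtain ⟨⟨a, b⟩, h⟩ := v
  obtain ⟨⟨a', b'⟩, h'⟩ := v'
  obtain ⟨⟨c, d⟩, ⟨e, f⟩⟩ := ξ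
  have hsub : (((⟨a, b⟩, h) : ℂ × ℝ) - (⟨a', b'⟩, h')) = (⟨a - a', b - b'⟩, h - h') := rfl
  obtain ⟨h1, h2, h3⟩ := hopfMap_mk_eq_iff.1 hξ
  rw [sqNorm_mk_complex] at h1 h2 h3
  rw [sqNorm_mk_real] at hv hv'
  rw [lineProj_mk, hsub, sqNorm_mk_complex, sqNorm_mk_complex, sqNorm_mk_real]
  linear_combination (1 / 4) * (c ^ 2 + d ^ 2 + e ^ 2 + f ^ 2) * (2 * hv + hv') + (a / 2) * h1 +
    (b / 2) * h2 + (h / 2) * h3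

theorem lineProj_eq_self {v : ℂ × ℝ} {ξ : ℂ × ℂ} (hξ : hopfMap ξ = sqNorm ξ • v) :
    lineProj v ξ = ξ := by
  rcases eq_or_ne ξ 0 with rfl | h0
  · simp [lineProj]
  have hm := (sqNorm_pos_iff.2 h0).ne'
  obtain ⟨⟨a, b⟩, h⟩ := v
  obtain ⟨⟨c, d⟩, ⟨e, f⟩⟩ := ξ
  obtain ⟨h1, h2, h3⟩ := hopfMap_mk_eq_iff.1 hξ
  rw [sqNorm_mk_complex] at h1 h2 h3 hm
  rw [lineProj_mk]
  refine Prod.ext (Complex.ext ?_ ?_) (Complex.ext ?_ ?_) <;> apply mul_left_cancel₀ hm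
  · linear_combination -(c * h3 + e * h1 + f * h2) / 2
  · linear_combination -(d * h3 + f * h1 - e * h2) / 2
  · linear_combination -(c * h1 - d * h2 - e * h3) / 2
  · linear_combination -(d * h1 + c * h2 - f * h3) / 2

theorem lineProj_ne_zero {v v' : ℂ × ℝ} (hv : sqNorm v = 1) (hv' : sqNorm v' = 1)
    (hd : dist v v' < 1) {ξ : ℂ × ℂ} (h0 : ξ ≠ 0) (hξ : hopfMap ξ = sqNorm ξ • v') :
    lineProj v ξ ≠ 0 := by
  have hle := sqNorm_le (v - v')
  have hsq : ‖v - v'‖ ^ 2 < 1 := by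
    rw [← dist_eq_norm]
    exact pow_lt_one₀ dist_nonneg hd two_ne_zero
  rw [← sqNorm_pos_iff, sqNorm_lineProj hv hv' hξ]
  exact mul_pos (sqNorm_pos_iff.2 h0) (by linarith)

theorem continuous_lineProj {T : Type*} [TopologicalSpace T] {v : T → ℂ × ℝ} {ξ : T → ℂ × ℂ}
    (hv : Continuous v) (hξ : Continuous ξ) : Continuous fun t => lineProj (v t) (ξ t) := by
  unfold lineProj
  fun_prop

end LineProj

theorem hopfMap_real_smul (r : ℝ) (ξ : ℂ × ℂ) : hopfMap (r • ξ) = r ^ 2 • hopfMap ξ := by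
  rw [← Complex.coe_smul, hopfMap_smul, Complex.norm_real, Real.norm_eq_abs, sq_abs]

theorem hopfMap_radialProj (ξ : ℂ × ℂ) :
    hopfMap (radialProj ξ) = (sqNorm ξ)⁻¹ • hopfMap ξ := by
  rw [radialProj, hopfMap_real_smul, inv_pow, sq_euclNorm]

theorem hopfMap_radialProj_of_eq {ξ : ℂ × ℂ} {v : ℂ × ℝ} (h : ξ ≠ 0)
    (hv : hopfMap ξ = sqNorm ξ • v) : hopfMap (radialProj ξ) = v := by
  rw [hopfMap_radialProj, hv, smul_smul, inv_mul_cancel₀ (sqNorm_pos_iff.2 h).ne', one_smul]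

section Truncate

variable {T : Type*}

/-- The truncation of the second coordinate at height `x`. -/
def truncate (x : ℝ) (p : T × I) : T × I := (p.1, p.2 ⊓ clamp x)

@[fun_prop]
theorem continuous_truncate [TopologicalSpace T] (x : ℝ) :
    Continuous (truncate x : T × I → T × I) := by
  unfold truncate
  fun_prop

theorem truncate_zero (p : T × I) : truncate 0 p = (p.1, 0) := by
  rw [truncate, clamp_of_nonpos le_rfl, inf_eq_right.2 (unitInterval.nonneg' (t := p.2))]

theorem truncate_one (p : T × I) : truncate 1 p = p := by
  rw [truncate, clamp_of_one_le le_rfl, inf_eq_left.2 (unitInterval.le_one' (t := p.2))]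

theorem dist_truncate_le [PseudoMetricSpace T] (x y : ℝ) (p : T × I) :
    dist (truncate x p) (truncate y p) ≤ |x - y| := by
  have hclamp : |(clamp x : ℝ) - clamp y| ≤ |x - y| := by
    simpa [clamp, Subtype.dist_eq, Real.dist_eq] using
      (LipschitzWith.projIcc (zero_le_one (α := ℝ))).dist_le_mul x y
  rw [truncate, truncate, Prod.dist_eq, dist_self, max_eq_right dist_nonneg, Subtype.dist_eq,
    Real.dist_eq]
  have hmin := abs_min_sub_min_le_max (p.2 : ℝ) (clamp x) p.2 (clamp y)
  rw [sub_self, abs_zero, max_eq_right (abs_nonneg _)] at hmin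
  exact hmin.trans hclamp

-- If `f` moves by less than `1` between consecutive truncations, projecting onto the lines over
-- the new values extends the lift of one truncation to the next without meeting zero.
theorem exists_lift_truncate [TopologicalSpace T] {f : T × I → ℂ × ℝ} (hf : Continuous f)
    (hunit : ∀ p, sqNorm (f p) = 1) {ξ₀ : ℂ × ℂ} (hξ₀ : ξ₀ ≠ 0)
    (h0 : ∀ t, hopfMap ξ₀ = sqNorm ξ₀ • f (t, 0)) {N : ℕ} (hstep : ∀ (i : ℕ) (p : T × I),
      dist (f (truncate ((i + 1 : ℕ) / N) p)) (f (truncate (i / N) p)) < 1) (i : ℕ) :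
    ∃ G : T × I → ℂ × ℂ, Continuous G ∧ (∀ p, G p ≠ 0) ∧
      (∀ p, hopfMap (G p) = sqNorm (G p) • f (truncate (i / N) p)) ∧
      ∀ t s, (∀ s' ≤ s, f (t, s') = f (t, 0)) → G (t, s) = ξ₀ := by
  induction i with
  | zero =>
    refine ⟨fun _ => ξ₀, continuous_const, fun _ => hξ₀, fun p => ?_, fun _ _ _ => rfl⟩
    rw [Nat.cast_zero, zero_div, truncate_zero]
    exact h0 p.1
  | succ i ih =>
    obtain ⟨G, hG, hG0, hGf, hGconst⟩ := ih
    refine ⟨fun p => lineProj (f (truncate ((i + 1 : ℕ) / N) p)) (G p),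
      continuous_lineProj (hf.comp (continuous_truncate _)) hG,
      fun p => lineProj_ne_zero (hunit _) (hunit _) (hstep i p) (hG0 p) (hGf p),
      fun p => hopfMap_lineProj (hunit _) _, fun t s h => ?_⟩
    simp only [hGconst t s h, truncate]
    rw [h _ inf_le_left, lineProj_eq_self (h0 t)]

end Truncate

/-- `G` is a lift of `f` to the unit sphere of `ℂ²` along the Hopf map. -/
structure IsHopfLift {T : Type*} [TopologicalSpace T] (f : T → ℂ × ℝ) (G : T → ℂ × ℂ) : Prop where
  continuous : Continuous G
  sqNorm_eq : ∀ t, sqNorm (G t) = 1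
  hopfMap_eq : ∀ t, hopfMap (G t) = f t

theorem exists_isHopfLift {T : Type*} [PseudoMetricSpace T] [CompactSpace T] {f : T × I → ℂ × ℝ}
    (hf : Continuous f) (hunit : ∀ p, sqNorm (f p) = 1) {ξ₀ : ℂ × ℂ} (hξ₀ : sqNorm ξ₀ = 1)
    (h0 : ∀ t, f (t, 0) = hopfMap ξ₀) :
    ∃ G, IsHopfLift f G ∧ ∀ t s, (∀ s' ≤ s, f (t, s') = f (t, 0)) → G (t, s) = ξ₀ := by
  obtain ⟨δ, hδ, hfδ⟩ := Metric.uniformContinuous_iff.1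
    (CompactSpace.uniformContinuous_of_continuous hf) 1 one_pos
  obtain ⟨N, hN⟩ := exists_nat_gt (1 / δ)
  have hN0 : (0 : ℝ) < N := lt_trans (by positivity) hN
  have hstep (i : ℕ) (p : T × I) :
      dist (f (truncate ((i + 1 : ℕ) / N) p)) (f (truncate (i / N) p)) < 1 := by
    refine hfδ ((dist_truncate_le _ _ p).trans_lt ?_)
    rw [← sub_div, Nat.cast_add, add_sub_cancel_left, Nat.cast_one, abs_of_pos (by positivity)]
    exact (div_lt_comm₀ hN0 hδ).2 hN
  have hξ₀' : ξ₀ ≠ 0 := ne_zero_of_sqNorm_eq_one hξ₀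
  obtain ⟨G, hG, hG0, hGf, hGconst⟩ := exists_lift_truncate hf hunit hξ₀'
    (fun t => by rw [hξ₀, h0, one_smul]) hstep N
  simp only [div_self hN0.ne', truncate_one] at hGf
  exact ⟨fun p => radialProj (G p),
    ⟨continuousOn_radialProj.comp_continuous hG hG0, fun p => sqNorm_radialProj (hG0 p),
      fun p => hopfMap_radialProj_of_eq (hG0 p) (hGf p)⟩,
    fun t s h => by simp only [hGconst t s h, radialProj_eq_self hξ₀]⟩

theorem IsHopfLift.exp_smul {T : Type*} [TopologicalSpace T] {f : T → ℂ × ℝ} {G : T → ℂ × ℂ}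
    (h : IsHopfLift f G) {a : T → ℂ} (ha : Continuous a) (hre : ∀ t, (a t).re = 0) :
    IsHopfLift f fun t => Complex.exp (a t) • G t := by
  have hnorm (t : T) : ‖Complex.exp (a t)‖ = 1 := by rw [Complex.norm_exp, hre, Real.exp_zero]
  have hG := h.continuous
  exact ⟨by fun_prop, fun t => by rw [sqNorm_smul, hnorm, one_pow, one_mul, h.sqNorm_eq],
    fun t => by rw [hopfMap_smul, hnorm, one_pow, one_smul, h.hopfMap_eq]⟩

section BasePoint

/-- The base point of the unit sphere of `ℂ × ℝ`. -/
def southPole : ℂ × ℝ := (0, -1)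

/-- The base point of the unit sphere of `ℂ²`. -/
def hopfBase : ℂ × ℂ := (0, 1)

theorem sqNorm_hopfBase : sqNorm hopfBase = 1 := by simp [sqNorm, hopfBase]

theorem hopfBase_ne_zero : hopfBase ≠ 0 := by simp [hopfBase]

theorem hopfMap_hopfBase : hopfMap hopfBase = southPole := by simp [hopfMap, hopfBase, southPole]

theorem fst_eq_zero_of_hopfMap_eq_southPole {ξ : ℂ × ℂ} (h : hopfMap ξ = southPole) :
    ξ.1 = 0 := by
  simp only [hopfMap, southPole, Prod.mk.injEq, mul_eq_zero, OfNat.ofNat_ne_zero, false_or,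
    map_eq_zero] at h
  refine h.1.resolve_left fun h2 => ?_
  have h1 := h.2
  rw [h2, norm_zero] at h1
  linarith [sq_nonneg ‖ξ.1‖]

namespace IsHopfLift

variable {T : Type*} [TopologicalSpace T] {f : T → ℂ × ℝ} {G : T → ℂ × ℂ} (h : IsHopfLift f G)
include h

theorem ne_zero (t : T) : G t ≠ 0 := ne_zero_of_sqNorm_eq_one (h.sqNorm_eq t)

theorem fst_eq_zero {t : T} (ht : f t = southPole) : (G t).1 = 0 :=
  fst_eq_zero_of_hopfMap_eq_southPole (by rw [h.hopfMap_eq, ht])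

theorem norm_snd {t : T} (ht : f t = southPole) : ‖(G t).2‖ = 1 := by
  have := h.sqNorm_eq t
  rw [sqNorm, h.fst_eq_zero ht, norm_zero, zero_pow two_ne_zero, zero_add] at this
  exact (pow_eq_one_iff_of_nonneg (norm_nonneg _) two_ne_zero).1 this

theorem snd_ne_zero {t : T} (ht : f t = southPole) : (G t).2 ≠ 0 :=
  norm_ne_zero_iff.1 (by rw [h.norm_snd ht]; exact one_ne_zero)

theorem re_eq_zero {t : T} (ht : f t = southPole) {a : ℂ} (ha : Complex.exp a = (G t).2) :
    a.re = 0 := by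
  have := h.norm_snd ht
  rwa [← ha, Complex.norm_exp, Real.exp_eq_one_iff] at this

theorem exp_neg_smul_eq_hopfBase {t : T} (ht : f t = southPole) {a : ℂ}
    (ha : Complex.exp a = (G t).2) : Complex.exp (-a) • G t = hopfBase := by
  refine Prod.ext ?_ ?_
  · rw [Prod.smul_fst, h.fst_eq_zero ht, smul_zero, hopfBase]
  · rw [Prod.smul_snd, ← ha, smul_eq_mul, ← Complex.exp_add, neg_add_cancel, Complex.exp_zero,
      hopfBase]

end IsHopfLift

theorem exists_isHopfLift_loop {f : I → ℂ × ℝ} (hf : Continuous f) (hunit : ∀ t, sqNorm (f t) = 1)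
    (h0 : f 0 = southPole) (h1 : f 1 = southPole) :
    ∃ G, IsHopfLift f G ∧ G 0 = hopfBase ∧ G 1 = hopfBase := by
  obtain ⟨G', hG', hconst⟩ := exists_isHopfLift (T := Unit) (f := fun p => f p.2) (by fun_prop)
    (fun p => hunit _) sqNorm_hopfBase (fun _ => by rw [h0, hopfMap_hopfBase])
  have hG : IsHopfLift f fun t => G' ((), t) :=
    ⟨by have := hG'.continuous; fun_prop, fun t => hG'.sqNorm_eq _, fun t => hG'.hopfMap_eq _⟩
  have hG0 : G' ((), 0) = hopfBase := hconst () 0 fun s hs => by rw [le_antisymm hs s.2.1]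
  have hexp := Complex.exp_log (hG.snd_ne_zero h1)
  set a := Complex.log (G' ((), 1)).2
  refine ⟨_, hG.exp_smul (a := fun t => -(((t : ℝ) : ℂ) * a)) (by fun_prop)
    (by simp [hG.re_eq_zero h1 hexp]), by simp [hG0], ?_⟩
  simpa using hG.exp_neg_smul_eq_hopfBase h1 hexp

/-- The map `f` on the unit square sends the whole boundary to `x`. -/
structure IsSquareBasedAt {X : Type*} (x : X) (f : I × I → X) : Prop where
  zero_left : ∀ t, f (0, t) = x
  one_left : ∀ t, f (1, t) = x
  zero_right : ∀ t, f (t, 0) = x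
  one_right : ∀ t, f (t, 1) = x

section Square

variable {f : I × I → ℂ × ℝ} (hf : Continuous f) (hunit : ∀ p, sqNorm (f p) = 1)
  (hbase : IsSquareBasedAt southPole f)
include hf hunit hbase

theorem exists_isHopfLift_square_three_sides : ∃ G, IsHopfLift f G ∧ (∀ t, G (0, t) = hopfBase) ∧
    (∀ t, G (1, t) = hopfBase) ∧ ∀ t, G (t, 0) = hopfBase := by
  obtain ⟨G, hG, hconst⟩ := exists_isHopfLift hf hunit sqNorm_hopfBase
    fun t => by rw [hbase.zero_right, hopfMap_hopfBase]
  refine ⟨G, hG, fun t => hconst _ _ fun _ _ => ?_, fun t => hconst _ _ fun _ _ => ?_,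
    fun t => hconst _ _ fun s hs => by rw [le_antisymm hs s.2.1]⟩
  · rw [hbase.zero_left, hbase.zero_left]
  · rw [hbase.one_left, hbase.one_left]

omit hf hunit in
theorem degreeCocycle_eq_neg_winding {G : I × I → ℂ × ℂ} (hG : IsHopfLift f G)
    (h0 : ∀ t, G (0, t) = hopfBase) (h1 : ∀ t, G (1, t) = hopfBase)
    (hr : ∀ t, G (t, 0) = hopfBase) : degreeCocycle f = -winding fun t => (G (t, 1)).2 := by
  have hGc := hG.continuous
  have hf : f = hopfMap ∘ G := funext fun p => (hG.hopfMap_eq p).symm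
  have hside := hopfCochain_of_snd_ne_zero (γ := fun t => G (t, 1))
    ⟨by fun_prop, fun t => hG.snd_ne_zero (hbase.one_right t)⟩
  rw [hf, degreeCocycle_hopfMap_comp ⟨hGc, hG.ne_zero⟩]
  simp only [pathCoboundary, h0, h1, hr, hside,
    pathAdditiveOn_hopfCochain.apply_const (Set.mem_compl_singleton_iff.2 hopfBase_ne_zero)]
  ring

theorem exists_degreeCocycle_eq_intCast : ∃ m : ℤ, degreeCocycle f = m := by
  obtain ⟨G, hG, h0, h1, hr⟩ := exists_isHopfLift_square_three_sides hf hunit hbase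
  have hGc := hG.continuous
  obtain ⟨m, hm⟩ := exists_winding_eq_intCast (γ := fun t => (G (t, 1)).2)
    ⟨by fun_prop, fun t => hG.snd_ne_zero (hbase.one_right t)⟩ (by rw [h0, h1])
  exact ⟨-m, by rw [degreeCocycle_eq_neg_winding hbase hG h0 h1 hr, hm, Int.cast_neg]⟩

theorem exists_isHopfLift_square (hdeg : degreeCocycle f = 0) :
    ∃ G, IsHopfLift f G ∧ IsSquareBasedAt hopfBase G := by
  obtain ⟨G, hG, h0, h1, hr⟩ := exists_isHopfLift_square_three_sides hf hunit hbase
  have hGc := hG.continuous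
  obtain ⟨ℓ, hℓ, hexp⟩ := exists_log_path (g := fun t => (G (t, 1)).2)
    ⟨by fun_prop, fun t => hG.snd_ne_zero (hbase.one_right t)⟩
  have hre (t : I) : (ℓ t).re = 0 := hG.re_eq_zero (hbase.one_right t) (hexp t)
  have hloop : ℓ 1 = ℓ 0 := by
    rw [degreeCocycle_eq_neg_winding hbase hG h0 h1 hr, winding_eq_of_exp_eq hℓ hexp, neg_eq_zero,
      div_eq_zero_iff, or_iff_left (by positivity), Complex.sub_im, sub_eq_zero] at hdeg
    exact Complex.ext (by rw [hre, hre]) hdeg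
  have hexp' (t : I) : Complex.exp (ℓ t - ℓ 0) = (G (t, 1)).2 := by
    rw [Complex.exp_sub, hexp, hexp, h0]
    exact div_one _
  refine ⟨_, hG.exp_smul (a := fun p => -(((p.2 : ℝ) : ℂ) * (ℓ p.1 - ℓ 0))) (by fun_prop)
    (by simp [hre]), ⟨?_, ?_, ?_, fun t => ?_⟩⟩
  · simp [h0]
  · simp [h1, hloop]
  · simp [hr]
  · simpa using hG.exp_neg_smul_eq_hopfBase (hbase.one_right t) (hexp' t)

end Square

end BasePoint

/-! ### General position by coning -/

section Cone

variable {V : Type*} [NormedAddCommGroup V] [NormedSpace ℝ V] {N : Type*}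

/-- The apexes of the cones over `g` that meet `Z`. -/
def badApexes (Z : Set V) (g : (N → ℝ) → V) : Set V :=
  {a | ∃ z ∈ Z, ∃ t, ∃ τ : ℝ, a = τ • z - (τ - 1) • g t}

theorem lineHomotopy_notMem {Z : Set V} {g : (N → ℝ) → V} {a : V} (ha : a ∉ badApexes Z g)
    {t : N → ℝ} (ht : g t ∉ Z) (s : ℝ) : (1 - s) • g t + s • a ∉ Z := by
  intro h
  rcases eq_or_ne s 0 with rfl | hs
  · exact ht (by simpa using h)
  · refine ha ⟨_, h, t, s⁻¹, ?_⟩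
    rw [smul_add, smul_smul, smul_smul, inv_mul_cancel₀ hs, one_smul, mul_sub, inv_mul_cancel₀ hs,
      mul_one]
    module

theorem HomotopicThrough.lineHomotopy {Q : Type*} [TopologicalSpace Q] {P : (Q → V) → Prop}
    {f g : Q → V} (hf : Continuous f) (hg : Continuous g)
    (h : ∀ s : I, P fun t => (1 - (s : ℝ)) • f t + (s : ℝ) • g t) : HomotopicThrough P f g :=
  ⟨fun p => (1 - (p.1 : ℝ)) • f p.2 + (p.1 : ℝ) • g p.2, by fun_prop, by simp, by simp, h⟩

theorem IsConstOnBoundary.lineHomotopy {x y : V} {f g : (N → I) → V} (hf : IsBasedAt x f)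
    (hg : IsBasedAt y g) (s : ℝ) : IsConstOnBoundary fun t => (1 - s) • f t + s • g t :=
  fun t ht t' ht' => by simp only [hf t ht, hf t' ht', hg t ht, hg t' ht']

/-- The set `Z` is so small that the apexes of the cones over any smooth `N`-cube that meet `Z` have
less than full Hausdorff dimension. -/
def IsConeThin (N : Type*) [Fintype N] (Z : Set V) : Prop :=
  ∀ g : (N → ℝ) → V, ContDiff ℝ 1 g → dimH (badApexes Z g) < Module.finrank ℝ V

variable [Fintype N]

theorem IsConeThin.union {Z Z' : Set V} (h : IsConeThin N Z) (h' : IsConeThin N Z') :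
    IsConeThin N (Z ∪ Z') := fun g hg => by
  have hsub : badApexes (Z ∪ Z') g ⊆ badApexes Z g ∪ badApexes Z' g := by
    rintro a ⟨z, hz | hz, t, τ, rfl⟩
    · exact Or.inl ⟨z, hz, t, τ, rfl⟩
    · exact Or.inr ⟨z, hz, t, τ, rfl⟩
  refine (dimH_mono hsub).trans_lt ?_
  rw [dimH_union]
  exact max_lt (h g hg) (h' g hg)

theorem IsConeThin.mono {Z Z' : Set V} (h : IsConeThin N Z') (hZ : Z ⊆ Z') : IsConeThin N Z := by
  refine fun g hg => (dimH_mono ?_).trans_lt (h g hg)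
  rintro a ⟨z, hz, t, τ, rfl⟩
  exact ⟨z, hZ hz, t, τ, rfl⟩

theorem IsConeThin.range {P : Type*} [NormedAddCommGroup P] [NormedSpace ℝ P]
    [FiniteDimensional ℝ P] {φ : P → V} (hφ : ContDiff ℝ 1 φ)
    (hd : Module.finrank ℝ P + Fintype.card N + 1 < Module.finrank ℝ V) :
    IsConeThin N (Set.range φ) := fun g hg => by
  have hsub : badApexes (Set.range φ) g ⊆
      Set.range fun p : P × (N → ℝ) × ℝ => p.2.2 • φ p.1 - (p.2.2 - 1) • g p.2.1 := by
    rintro a ⟨z, ⟨p, rfl⟩, t, τ, rfl⟩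
    exact ⟨(p, t, τ), rfl⟩
  refine ((dimH_mono hsub).trans (ContDiff.dimH_range_le (by fun_prop))).trans_lt ?_
  rw [Module.finrank_prod, Module.finrank_prod, Module.finrank_fintype_fun_eq_card,
    Module.finrank_self, ← add_assoc]
  exact_mod_cast hd

theorem exists_contDiff_approx {f : (N → I) → V} (hf : Continuous f) (x : V) {ε : ℝ}
    (hε : 0 < ε) : ∃ g : (N → ℝ) → V, ContDiff ℝ 1 g ∧
      (∀ t : N → I, dist (g fun i => t i) (f t) < ε) ∧
        ∀ t : N → I, f t = x → g (fun i => t i) = x := by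
  have hclamp (t : N → I) : (fun i => clamp (t i)) = t := funext fun i => clamp_coe (t i)
  have hcont : Continuous fun t : N → ℝ => f (fun i => clamp (t i)) - x := by fun_prop
  obtain ⟨g, hg, hdist, hsupp⟩ := hcont.exists_contDiff_approx 1 continuous_const fun _ => hε
  refine ⟨fun t => x + g t, contDiff_const.add hg, fun t => ?_, fun t ht => ?_⟩
  · have hgt := hdist fun i => t i
    rwa [hclamp, dist_eq_norm, sub_sub_eq_add_sub, add_comm, ← dist_eq_norm] at hgt
  · rw [add_eq_left]
    by_contra h
    exact hsupp h (by simp only [hclamp, ht, sub_self])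

variable [FiniteDimensional ℝ V]

theorem IsConeThin.exists_homotopicThrough_const {Z : Set V} (hZ : IsClosed Z)
    (hthin : IsConeThin N Z) {x : V} {f : (N → I) → V} (hf : Continuous f) (hb : IsBasedAt x f)
    (hfZ : ∀ t, f t ∉ Z) :
    ∃ y, HomotopicThrough (fun f => IsConstOnBoundary f ∧ ∀ t, f t ∈ Zᶜ) f (fun _ => y) := by
  obtain ⟨ε, hε, hεZ⟩ := (isCompact_range hf).exists_thickening_subset_open hZ.isOpen_compl
    (Set.range_subset_iff.2 hfZ)
  have hnear {z : V} {t : N → I} (h : dist z (f t) < ε) : z ∉ Z :=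
    hεZ (Metric.mem_thickening_iff.2 ⟨f t, ⟨t, rfl⟩, h⟩)
  obtain ⟨g, hg, hgf, hgx⟩ := exists_contDiff_approx hf x hε
  have hgb : IsBasedAt x fun t => g fun i => t i := fun t ht => hgx t (hb t ht)
  have hgc : Continuous fun t : N → I => g fun i => t i := by
    have := hg.continuous
    fun_prop
  obtain ⟨a, ha⟩ := (dense_compl_of_dimH_lt_finrank (hthin g hg)).nonempty
  have smooth : HomotopicThrough (fun f => IsConstOnBoundary f ∧ ∀ t, f t ∈ Zᶜ) f
      fun t => g fun i => t i := by
    refine .lineHomotopy hf hgc fun s => ⟨.lineHomotopy hb hgb s, fun t => hnear (t := t) ?_⟩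
    have hs : (1 - (s : ℝ)) • f t + (s : ℝ) • (g fun i => t i) - f t
        = (s : ℝ) • ((g fun i => t i) - f t) := by module
    rw [dist_eq_norm, hs, norm_smul, Real.norm_of_nonneg s.2.1, ← dist_eq_norm]
    exact (mul_le_of_le_one_left dist_nonneg s.2.2).trans_lt (hgf t)
  have cone : HomotopicThrough (fun f => IsConstOnBoundary f ∧ ∀ t, f t ∈ Zᶜ)
      (fun t => g fun i => t i) fun _ => a :=
    .lineHomotopy hgc continuous_const fun s =>
      ⟨.lineHomotopy hgb (fun _ _ => rfl) s, fun t => lineHomotopy_notMem ha (hnear (hgf t)) s⟩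
  exact ⟨a, smooth.trans cone⟩

theorem IsConeThin.joinedIn {Z : Set V} (hthin : IsConeThin (Fin 0) Z) {x x' : V} (hx : x ∉ Z)
    (hx' : x' ∉ Z) : JoinedIn Zᶜ x x' := by
  have hdim : dimH (badApexes Z (fun _ : Fin 0 → ℝ => x) ∪ badApexes Z fun _ : Fin 0 → ℝ => x') <
      Module.finrank ℝ V := by
    rw [dimH_union]
    exact max_lt (hthin _ contDiff_const) (hthin _ contDiff_const)
  obtain ⟨a, ha⟩ := (dense_compl_of_dimH_lt_finrank hdim).nonempty
  have segment {x : V} (hx : x ∉ Z) (ha : a ∉ badApexes Z fun _ : Fin 0 → ℝ => x) :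
      JoinedIn Zᶜ x a :=
    ⟨⟨⟨fun s => (1 - (s : ℝ)) • x + (s : ℝ) • a, by fun_prop⟩, by simp, by simp⟩,
      fun s => lineHomotopy_notMem ha (t := 0) hx s⟩
  exact (segment hx fun h => ha (Or.inl h)).trans (segment hx' fun h => ha (Or.inr h)).symm

theorem exists_continuous_ne_zero_approx (hN : Fintype.card N < Module.finrank ℝ V)
    {f : (N → I) → V} (hf : Continuous f) {ε : ℝ} (hε : 0 < ε) :
    ∃ g : (N → I) → V, Continuous g ∧ ∀ t, g t ≠ 0 ∧ ‖g t - f t‖ < ε := by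
  obtain ⟨g, hg, hgf, -⟩ := exists_contDiff_approx hf 0 (half_pos hε)
  have hdim : dimH (Set.range g) < Module.finrank ℝ V := by
    refine (ContDiff.dimH_range_le hg).trans_lt ?_
    rw [Module.finrank_fintype_fun_eq_card]
    exact_mod_cast hN
  obtain ⟨w, hw, hwε⟩ := (dense_compl_of_dimH_lt_finrank hdim).exists_dist_lt 0 (half_pos hε)
  have hgc := hg.continuous
  refine ⟨fun t => g (fun i => t i) - w, by fun_prop, fun t => ⟨fun h => ?_, ?_⟩⟩
  · exact hw ⟨_, sub_eq_zero.1 h⟩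
  · rw [sub_right_comm]
    refine (norm_sub_le _ _).trans_lt ?_
    have := hgf t
    rw [dist_zero_left] at hwε
    rw [dist_eq_norm] at this
    linarith

end Cone

section Polar

/-- The point of the unit sphere of `ℂ²` with polar angle `α`, real first coordinate, and second
coordinate of argument `θ`. -/
def polarPoint (α θ : ℝ) : ℂ × ℂ := (Real.cos α, Real.sin α * Complex.exp (θ * Complex.I))

theorem sqNorm_polarPoint (α θ : ℝ) : sqNorm (polarPoint α θ) = 1 := by
  simp only [sqNorm, polarPoint, norm_mul, Complex.norm_real, Complex.norm_exp_ofReal_mul_I,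
    mul_one, Real.norm_eq_abs, sq_abs, Real.cos_sq_add_sin_sq]

theorem hopfMap_polarPoint (α θ : ℝ) : hopfMap (polarPoint α θ) =
    (Real.sin (2 * α) * Complex.exp (θ * Complex.I), Real.cos (2 * α)) := by
  refine Prod.ext ?_ ?_
  · simp only [hopfMap, polarPoint, Complex.conj_ofReal, Real.sin_two_mul]
    push_cast
    ring
  · simp only [hopfMap, polarPoint, norm_mul, Complex.norm_real, Complex.norm_exp_ofReal_mul_I,
      mul_one, Real.norm_eq_abs, sq_abs]
    rw [Real.cos_two_mul, Real.sin_sq]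
    ring

theorem normPow_exp_mul_I (n : ℕ) (θ : ℝ) : normPow n (Complex.exp (θ * Complex.I)) =
    Complex.exp ((n * θ : ℝ) * Complex.I) := by
  rw [normPow, Complex.norm_exp_ofReal_mul_I, ← Complex.exp_nat_mul]
  simp [mul_assoc]

theorem powerMap_hopfMap_polarPoint {n : ℕ} (hn : 0 < n) {α θ : ℝ} (h : 0 ≤ Real.sin (2 * α)) :
    powerMap n (hopfMap (polarPoint α θ)) = hopfMap (polarPoint α (n * θ)) := by
  rw [hopfMap_polarPoint, hopfMap_polarPoint, powerMap, normPow_mul, normPow_ofReal hn h,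
    normPow_exp_mul_I]

theorem exists_hopfMap_polarPoint_eq {v : ℂ × ℝ} (hv : sqNorm v = 1) :
    ∃ α θ, 0 ≤ Real.sin (2 * α) ∧ hopfMap (polarPoint α θ) = v := by
  simp only [sqNorm, Real.norm_eq_abs, sq_abs] at hv
  have hcos : Real.cos (2 * (Real.arccos v.2 / 2)) = v.2 := by
    rw [mul_div_cancel₀ _ two_ne_zero, Real.cos_arccos] <;> nlinarith [sq_nonneg ‖v.1‖]
  have hsin : Real.sin (2 * (Real.arccos v.2 / 2)) = ‖v.1‖ := by
    rw [mul_div_cancel₀ _ two_ne_zero, Real.sin_arccos, ← hv, add_sub_cancel_right,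
      Real.sqrt_sq (norm_nonneg _)]
  refine ⟨_, Complex.arg v.1, hsin ▸ norm_nonneg _, ?_⟩
  rw [hopfMap_polarPoint, hcos, hsin, Complex.norm_mul_exp_arg_mul_I]

theorem contDiff_hopfMap {k : ℕ∞} : ContDiff ℝ k hopfMap := by
  have hconj : ContDiff ℝ k (starRingEnd ℂ) := Complex.conjCLE.contDiff
  have h1 : ContDiff ℝ k fun ξ : ℂ × ℂ => ‖ξ.1‖ ^ 2 := contDiff_fst.norm_sq ℝ
  have h2 : ContDiff ℝ k fun ξ : ℂ × ℂ => ‖ξ.2‖ ^ 2 := contDiff_snd.norm_sq ℝ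
  unfold hopfMap
  fun_prop

theorem contDiff_polarPoint {k : ℕ∞} : ContDiff ℝ k fun p : ℝ × ℝ => polarPoint p.1 p.2 := by
  have hof : ContDiff ℝ k Complex.ofReal := Complex.ofRealCLM.contDiff
  unfold polarPoint
  fun_prop

theorem lineProj_hopfMap {η : ℂ × ℂ} (h : sqNorm η = 1) (ξ : ℂ × ℂ) : lineProj (hopfMap η) ξ =
    (starRingEnd ℂ η.1 * ξ.1 + starRingEnd ℂ η.2 * ξ.2) • η := by
  obtain ⟨⟨a, b⟩, ⟨a', b'⟩⟩ := η
  obtain ⟨⟨c, d⟩, ⟨e, f⟩⟩ := ξ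
  rw [sqNorm_mk_complex] at h
  rw [hopfMap_mk, lineProj_mk]
  refine Prod.ext (Complex.ext ?_ ?_) (Complex.ext ?_ ?_)
  · simp; linear_combination (-c / 2) * h
  · simp; linear_combination (-d / 2) * h
  · simp; linear_combination (-e / 2) * h
  · simp; linear_combination (-f / 2) * h

theorem exists_smul_eq_of_hopfMap_eq {η ξ : ℂ × ℂ} (hη : sqNorm η = 1)
    (h : hopfMap ξ = sqNorm ξ • hopfMap η) : ∃ z : ℂ, z • η = ξ :=
  ⟨_, (lineProj_hopfMap hη ξ).symm.trans (lineProj_eq_self h)⟩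

end Polar

/-! ### The total space of the Hopf fibration over the sphere complement -/

section TotalSpace

/-- The Euclidean space containing the second sphere factor, with coordinates `(W, σ, r)`; the
embedded `2`-sphere is the graph of a power map over the points `(W, 0, 0)`. -/
abbrev SphereFactor (m : ℕ) := (ℂ × ℝ) × ℝ × EuclideanSpace ℝ (Fin (m + 1))

/-- The square of the Euclidean norm on `SphereFactor m`. -/
def sphereSq {m : ℕ} (w : SphereFactor m) : ℝ := sqNorm w.1 + sqNorm w.2

variable {m n : ℕ}

@[fun_prop]
theorem continuous_sphereSq : Continuous (sphereSq : SphereFactor m → ℝ) := by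
  unfold sphereSq
  fun_prop

theorem sphereSq_pos_iff {w : SphereFactor m} : 0 < sphereSq w ↔ w ≠ 0 := by
  rw [sphereSq, ((add_nonneg (sqNorm_nonneg w.1) (sqNorm_nonneg w.2)).lt_iff_ne'), ne_eq,
    add_eq_zero_iff_of_nonneg (sqNorm_nonneg _) (sqNorm_nonneg _), sqNorm_eq_zero_iff,
    sqNorm_eq_zero_iff, ← Prod.mk_eq_zero]

theorem sphereSq_smul (r : ℝ) (w : SphereFactor m) : sphereSq (r • w) = r ^ 2 * sphereSq w := by
  rw [sphereSq, Prod.smul_fst, Prod.smul_snd, sqNorm_smul, sqNorm_smul, Real.norm_eq_abs, sq_abs,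
    ← mul_add, sphereSq]

theorem sphereSq_of_snd_eq_zero {w : SphereFactor m} (h : w.2 = 0) : sphereSq w = sqNorm w.1 := by
  rw [sphereSq, sqNorm_eq_zero_iff.2 h, add_zero]

theorem sqNorm_powerMap (hn : 0 < n) (v : ℂ × ℝ) : sqNorm (powerMap n v) = sqNorm v := by
  simp only [sqNorm, powerMap, norm_normPow hn]

theorem euclNorm_powerMap (hn : 0 < n) (v : ℂ × ℝ) : euclNorm (powerMap n v) = euclNorm v := by
  rw [euclNorm, sqNorm_powerMap hn, euclNorm]

theorem powerMap_smul (hn : 0 < n) {r : ℝ} (hr : 0 ≤ r) (v : ℂ × ℝ) :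
    powerMap n (r • v) = r • powerMap n v := by
  simp only [powerMap, Prod.smul_fst, Prod.smul_snd, Complex.real_smul, normPow_mul,
    normPow_ofReal hn hr, Prod.smul_mk]

/-- The complement in `ℂ² × ℝ^(m+5)` of the total space of the Hopf fibration pulled back to the
complement of the embedded sphere (with both sphere factors thickened radially). -/
def singularSet (m n : ℕ) : Set ((ℂ × ℂ) × SphereFactor m) :=
  {p | p.1 = 0} ∪ {p | p.2 = 0} ∪
    {p | p.2.2 = 0 ∧ euclNorm p.2.1 • hopfMap p.1 = sqNorm p.1 • powerMap n p.2.1}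

theorem isClosed_singularSet (hn : 0 < n) : IsClosed (singularSet m n) := by
  have := continuous_powerMap hn
  refine (IsClosed.union ?_ ?_).union (IsClosed.inter ?_ ?_) <;>
    exact isClosed_eq (by fun_prop) (by fun_prop)

/-- A smooth parametrization of the part of `singularSet m n` lying over the embedded sphere. -/
def singularParam (m n : ℕ) (p : ℂ × ℝ × ℝ × ℝ) : (ℂ × ℂ) × SphereFactor m :=
  (p.1 • polarPoint p.2.1 (n * p.2.2.1), p.2.2.2 • hopfMap (polarPoint p.2.1 p.2.2.1), 0)

theorem contDiff_singularParam : ContDiff ℝ 1 (singularParam m n) := by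
  have hhopf : ContDiff ℝ 1 hopfMap := contDiff_hopfMap
  have hpolar : ContDiff ℝ 1 fun p : ℝ × ℝ => polarPoint p.1 p.2 := contDiff_polarPoint
  have h2 : ContDiff ℝ 1 fun p : ℂ × ℝ × ℝ × ℝ => polarPoint p.2.1 p.2.2.1 :=
    hpolar.comp (g := fun p : ℝ × ℝ => polarPoint p.1 p.2)
      (f := fun p : ℂ × ℝ × ℝ × ℝ => (p.2.1, p.2.2.1)) (by fun_prop)
  unfold singularParam
  fun_prop

theorem mem_range_singularParam (hn : 0 < n) {ξ : ℂ × ℂ} {W : ℂ × ℝ} (hW : W ≠ 0)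
    (h : euclNorm W • hopfMap ξ = sqNorm ξ • powerMap n W) :
    (ξ, W, 0) ∈ Set.range (singularParam m n) := by
  obtain ⟨α, θ, hsin, hu⟩ := exists_hopfMap_polarPoint_eq (sqNorm_radialProj hW)
  have hpos := euclNorm_pos_iff.2 hW
  have hline : hopfMap ξ = sqNorm ξ • hopfMap (polarPoint α (n * θ)) := by
    rw [← powerMap_hopfMap_polarPoint hn hsin, hu]
    apply smul_right_injective _ hpos.ne'
    simp only [h]
    rw [smul_comm, ← powerMap_smul hn hpos.le, euclNorm_smul_radialProj]
  obtain ⟨z, rfl⟩ := exists_smul_eq_of_hopfMap_eq (sqNorm_polarPoint α (n * θ)) hline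
  exact ⟨(z, α, θ, euclNorm W), by rw [singularParam, hu, euclNorm_smul_radialProj]⟩

theorem singularSet_subset (hn : 0 < n) :
    singularSet m n ⊆ Set.range (fun w : SphereFactor m => ((0 : ℂ × ℂ), w)) ∪
      Set.range (fun ξ : ℂ × ℂ => (ξ, (0 : SphereFactor m))) ∪ Set.range (singularParam m n) := by
  rintro ⟨ξ, W, r⟩ ((h | h) | ⟨hr, h⟩)
  · exact .inl (.inl ⟨(W, r), Prod.ext h.symm rfl⟩)
  · exact .inl (.inr ⟨ξ, Prod.ext rfl h.symm⟩)
  · obtain rfl : r = 0 := hr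
    rcases eq_or_ne W 0 with rfl | hW
    · exact .inl (.inr ⟨ξ, rfl⟩)
    · exact .inr (mem_range_singularParam hn hW h)

theorem isConeThin_singularSet {N : Type*} [Fintype N] (hN : Fintype.card N ≤ 2) (hn : 0 < n) :
    IsConeThin N (singularSet m n) := by
  refine (((IsConeThin.range (by fun_prop) ?_).union (.range (by fun_prop) ?_)).union
    (.range contDiff_singularParam ?_)).mono (singularSet_subset hn) <;>
  · simp only [Module.finrank_prod, Complex.finrank_real_complex, Module.finrank_self,
      finrank_euclideanSpace, Fintype.card_fin]
    omega

end TotalSpace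

/-! ### Gluing along an open partial homeomorphism -/

section Glue

universe u v

variable {A : Type u} {B : Type v} [TopologicalSpace A] [TopologicalSpace B]

/-- The space obtained from `A` and `B` by identifying `b ∈ e.source` with `e b ∈ e.target`.
The underlying set consists of `A` and the points of `B` that are not identified. -/
def Glue (e : OpenPartialHomeomorph B A) : Type (max u v) :=
  A ⊕ {b : B // b ∉ e.source}

namespace Glue

/-- The inclusion of the first piece. -/
def inl (e : OpenPartialHomeomorph B A) (a : A) : Glue e :=
  Sum.inl a

open Classical in
/-- The inclusion of the second piece. -/
def inr (e : OpenPartialHomeomorph B A) (b : B) : Glue e :=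
  if h : b ∈ e.source then Sum.inl (e b) else Sum.inr ⟨b, h⟩

instance (e : OpenPartialHomeomorph B A) : TopologicalSpace (Glue e) :=
  .coinduced (inl e) inferInstance ⊔ .coinduced (inr e) inferInstance

variable {e : OpenPartialHomeomorph B A}

theorem isOpen_iff {U : Set (Glue e)} :
    IsOpen U ↔ IsOpen (inl e ⁻¹' U) ∧ IsOpen (inr e ⁻¹' U) :=
  Iff.rfl

theorem continuous_inl : Continuous (inl e) :=
  ⟨fun _ hU => hU.1⟩

theorem continuous_inr : Continuous (inr e) :=
  ⟨fun _ hU => hU.2⟩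

theorem inl_injective : Function.Injective (inl e) :=
  Sum.inl_injective

theorem inr_eq_inl {b : B} (h : b ∈ e.source) : inr e b = inl e (e b) :=
  dif_pos h

theorem inl_eq_inr_symm {a : A} (h : a ∈ e.target) : inl e a = inr e (e.symm a) := by
  rw [inr_eq_inl (e.map_target h), e.right_inv h]

theorem inr_eq_of_notMem {b : B} (h : b ∉ e.source) :
    inr e b = (Sum.inr ⟨b, h⟩ : A ⊕ {b : B // b ∉ e.source}) :=
  dif_neg h

theorem inl_eq_inr_iff {a : A} {b : B} : inl e a = inr e b ↔ b ∈ e.source ∧ e b = a := by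
  refine ⟨fun h => ?_, fun ⟨hb, h⟩ => by rw [inr_eq_inl hb, h]⟩
  by_cases hb : b ∈ e.source
  · rw [inr_eq_inl hb] at h
    exact ⟨hb, inl_injective h.symm⟩
  · cases h.trans (inr_eq_of_notMem hb)

theorem inr_injective : Function.Injective (inr e) := by
  intro b b' h
  by_cases hb : b ∈ e.source
  · rw [inr_eq_inl hb, inl_eq_inr_iff] at h
    exact (e.injOn h.1 hb h.2).symm
  by_cases hb' : b' ∈ e.source
  · rw [inr_eq_inl hb', eq_comm, inl_eq_inr_iff] at h
    exact absurd h.1 hb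
  · cases (inr_eq_of_notMem hb).symm.trans (h.trans (inr_eq_of_notMem hb'))
    rfl

@[elab_as_elim]
theorem induction {P : Glue e → Prop} (hl : ∀ a, P (inl e a))
    (hr : ∀ b ∉ e.source, P (inr e b)) (p : Glue e) : P p := by
  rcases p with a | ⟨b, hb⟩
  · exact hl a
  · exact inr_eq_of_notMem hb ▸ hr b hb

theorem range_inl_union_range_inr : Set.range (inl e) ∪ Set.range (inr e) = Set.univ :=
  Set.eq_univ_of_forall fun p =>
    p.induction (fun a => Or.inl ⟨a, rfl⟩) fun b _ => Or.inr ⟨b, rfl⟩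

theorem inr_preimage_inl_image (V : Set A) : inr e ⁻¹' (inl e '' V) = e.source ∩ e ⁻¹' V := by
  ext b
  simp only [Set.mem_preimage, Set.mem_image, inl_eq_inr_iff, Set.mem_inter_iff]
  exact ⟨fun ⟨_, ha, hb, h⟩ => ⟨hb, h ▸ ha⟩, fun ⟨hb, h⟩ => ⟨_, h, hb, rfl⟩⟩

theorem inl_preimage_inr_image (V : Set B) : inl e ⁻¹' (inr e '' V) = e '' (e.source ∩ V) := by
  ext a
  simp only [Set.mem_preimage, Set.mem_image, Set.mem_inter_iff, eq_comm (b := inl e a),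
    inl_eq_inr_iff]
  exact ⟨fun ⟨b, hV, hb, h⟩ => ⟨b, ⟨hb, hV⟩, h⟩, fun ⟨b, ⟨hb, hV⟩, h⟩ => ⟨b, hV, hb, h⟩⟩

theorem isOpenEmbedding_inl : IsOpenEmbedding (inl e) := by
  refine .of_continuous_injective_isOpenMap continuous_inl inl_injective fun V hV =>
    isOpen_iff.2 ⟨?_, ?_⟩
  · rwa [Set.preimage_image_eq _ inl_injective]
  · rw [inr_preimage_inl_image]
    exact e.isOpen_inter_preimage hV

theorem isOpenEmbedding_inr : IsOpenEmbedding (inr e) := by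
  refine .of_continuous_injective_isOpenMap continuous_inr inr_injective fun V hV =>
    isOpen_iff.2 ⟨?_, ?_⟩
  · rw [inl_preimage_inr_image]
    exact e.isOpen_image_source_inter hV
  · rwa [Set.preimage_image_eq _ inr_injective]

theorem disjoint_nhds_inl_inl [T2Space A] {a a' : A} (h : a ≠ a') :
    Disjoint (𝓝 (inl e a)) (𝓝 (inl e a')) := by
  rw [← isOpenEmbedding_inl.map_nhds_eq, ← isOpenEmbedding_inl.map_nhds_eq,
    Filter.disjoint_map inl_injective]
  exact disjoint_nhds_nhds.2 h

theorem disjoint_nhds_inr_inr [T2Space B] {b b' : B} (h : b ≠ b') :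
    Disjoint (𝓝 (inr e b)) (𝓝 (inr e b')) := by
  rw [← isOpenEmbedding_inr.map_nhds_eq, ← isOpenEmbedding_inr.map_nhds_eq,
    Filter.disjoint_map inr_injective]
  exact disjoint_nhds_nhds.2 h

theorem disjoint_nhds_inl_inr [T2Space B] {K : Set B} (hK : ∀ b ∉ e.source, K ∈ 𝓝 b)
    (hclosed : IsClosed (e '' (e.source ∩ K))) {a : A} {b : B} (hb : b ∉ e.source) :
    Disjoint (𝓝 (inl e a)) (𝓝 (inr e b)) := by
  by_cases ha : a ∈ e.target
  · rw [inl_eq_inr_symm ha]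
    exact disjoint_nhds_inr_inr fun h => hb (h ▸ e.map_target ha)
  · have ha' : a ∉ e '' (e.source ∩ K) := by
      rintro ⟨b', hb', rfl⟩
      exact ha (e.map_source hb'.1)
    refine Filter.disjoint_of_disjoint_of_mem ?_
      (isOpenEmbedding_inl.image_mem_nhds.2 (hclosed.isOpen_compl.mem_nhds ha'))
      (isOpenEmbedding_inr.image_mem_nhds.2 (hK b hb))
    rw [← inl_preimage_inr_image, ← Set.preimage_compl]
    exact disjoint_compl_left.mono_left (Set.image_preimage_subset _ _)

theorem t2Space [T2Space A] [T2Space B] {K : Set B} (hK : ∀ b ∉ e.source, K ∈ 𝓝 b)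
    (hclosed : IsClosed (e '' (e.source ∩ K))) : T2Space (Glue e) := by
  refine t2Space_iff_disjoint_nhds.2 fun p q => ?_
  induction p using Glue.induction with
  | hl a =>
    induction q using Glue.induction with
    | hl a' => exact fun h => disjoint_nhds_inl_inl (ne_of_apply_ne _ h)
    | hr b hb => exact fun _ => disjoint_nhds_inl_inr hK hclosed hb
  | hr b hb =>
    induction q using Glue.induction with
    | hl a => exact fun _ => (disjoint_nhds_inl_inr hK hclosed hb).symm
    | hr b' => exact fun h => disjoint_nhds_inr_inr (ne_of_apply_ne _ h)

theorem compactSpace {N K : Set B} (hsource : e.sourceᶜ ⊆ N) (hNK : N ⊆ K) (hK : IsCompact K)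
    (hN : IsCompact (e '' (e.source ∩ N))ᶜ) : CompactSpace (Glue e) := by
  refine ⟨((hN.image continuous_inl).union (hK.image continuous_inr)).of_isClosed_subset
    isClosed_univ fun p _ => ?_⟩
  induction p using Glue.induction with
  | hl a =>
    by_cases h : a ∈ e '' (e.source ∩ N)
    · obtain ⟨b, hb, rfl⟩ := h
      exact Or.inr ⟨b, hNK hb.2, inr_eq_inl hb.1⟩
    · exact Or.inl ⟨a, h, rfl⟩
  | hr b hb => exact Or.inr ⟨b, hNK (hsource hb), rfl⟩

/-- The retraction of the glued space onto its first piece, with junk values off that piece. -/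
def retractLeft [Nonempty A] (p : Glue e) : A :=
  Function.invFun (inl e) p

/-- The retraction of the glued space onto its second piece, with junk values off that piece. -/
def retractRight [Nonempty B] (p : Glue e) : B :=
  Function.invFun (inr e) p

theorem retractLeft_inl [Nonempty A] (a : A) : retractLeft (inl e a) = a :=
  Function.leftInverse_invFun inl_injective a

theorem retractRight_inr [Nonempty B] (b : B) : retractRight (inr e b) = b :=
  Function.leftInverse_invFun inr_injective b

theorem continuousOn_retractLeft [Nonempty A] :
    ContinuousOn (retractLeft (e := e)) (Set.range (inl e)) := by
  rintro _ ⟨a, rfl⟩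
  refine (isOpenEmbedding_inl.continuousAt_iff.1 ?_).continuousWithinAt
  exact continuousAt_id.congr (.of_forall fun a => (retractLeft_inl a).symm)

theorem continuousOn_retractRight [Nonempty B] :
    ContinuousOn (retractRight (e := e)) (Set.range (inr e)) := by
  rintro _ ⟨b, rfl⟩
  refine (isOpenEmbedding_inr.continuousAt_iff.1 ?_).continuousWithinAt
  exact continuousAt_id.congr (.of_forall fun b => (retractRight_inr b).symm)

theorem retract_of_mem_range [Nonempty A] [Nonempty B] {p : Glue e} (hA : p ∈ Set.range (inl e))
    (hB : p ∈ Set.range (inr e)) :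
    retractRight p ∈ e.source ∧ e (retractRight p) = retractLeft p := by
  obtain ⟨b, rfl⟩ := hB
  obtain ⟨a, ha⟩ := hA
  rw [← ha, retractLeft_inl, ha, retractRight_inr]
  exact inl_eq_inr_iff.1 ha

end Glue

end Glue

/-! ### Locally modelled spaces -/

section IsLocallyModelled

/-- Every point of `X` has an open neighbourhood homeomorphic to an open subset of `E`. -/
def IsLocallyModelled (E X : Type*) [TopologicalSpace E] [TopologicalSpace X] : Prop :=
  ∀ x : X, ∃ e : OpenPartialHomeomorph X E, x ∈ e.source

namespace IsLocallyModelled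

variable {E E' X Y : Type*} [TopologicalSpace E] [TopologicalSpace E'] [TopologicalSpace X]
  [TopologicalSpace Y]

theorem of_chartedSpace [ChartedSpace E X] : IsLocallyModelled E X :=
  fun x => ⟨chartAt E x, mem_chart_source E x⟩

/-- The charted space structure whose atlas consists of all open partial homeomorphisms. -/
@[reducible] def chartedSpace (h : IsLocallyModelled E X) : ChartedSpace E X where
  atlas := Set.univ
  chartAt x := (h x).choose
  mem_chart_source x := (h x).choose_spec
  chart_mem_atlas _ := trivial

theorem trans_homeomorph (h : IsLocallyModelled E X) (f : E ≃ₜ E') : IsLocallyModelled E' X :=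
  fun x => by
    obtain ⟨e, he⟩ := h x
    exact ⟨e.trans f.toOpenPartialHomeomorph, by simpa using he⟩

theorem prod (h : IsLocallyModelled E X) (h' : IsLocallyModelled E' Y) :
    IsLocallyModelled (E × E') (X × Y) := fun x => by
  obtain ⟨e, he⟩ := h x.1
  obtain ⟨e', he'⟩ := h' x.2
  exact ⟨e.prod e', ⟨he, he'⟩⟩

theorem of_isOpenEmbedding (h : IsLocallyModelled E Y) {f : X → Y} (hf : IsOpenEmbedding f) :
    IsLocallyModelled E X := fun x => by
  obtain ⟨e, he⟩ := h (f x)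
  have : Nonempty X := ⟨x⟩
  exact ⟨(hf.toOpenPartialHomeomorph f).trans e, by simpa using he⟩

theorem exists_mem_source_map (h : IsLocallyModelled E X) {f : X → Y} (hf : IsOpenEmbedding f)
    (x : X) : ∃ e : OpenPartialHomeomorph Y E, f x ∈ e.source := by
  obtain ⟨e, he⟩ := h x
  have : Nonempty X := ⟨x⟩
  have hinv : (hf.toOpenPartialHomeomorph f).symm (f x) = x :=
    (hf.toOpenPartialHomeomorph f).left_inv (by simp)
  exact ⟨(hf.toOpenPartialHomeomorph f).symm.trans e, by simp [hinv, he]⟩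

theorem glue {e : OpenPartialHomeomorph Y X} (hX : IsLocallyModelled E X)
    (hY : IsLocallyModelled E Y) : IsLocallyModelled E (Glue e) := fun p => by
  induction p using Glue.induction with
  | hl x => exact hX.exists_mem_source_map Glue.isOpenEmbedding_inl x
  | hr y => exact hY.exists_mem_source_map Glue.isOpenEmbedding_inr y

theorem of_norm_sq_eq_one {G : Type*} [NormedAddCommGroup G] [InnerProductSpace ℝ G] {k : ℕ}
    (hk : Module.finrank ℝ G = k + 1) (L : X ≃ₜ G) {q : X → ℝ} (hq : ∀ v, q v = ‖L v‖ ^ 2) :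
    IsLocallyModelled (EuclideanSpace ℝ (Fin k)) {v : X // q v = 1} := by
  have : Fact (Module.finrank ℝ G = k + 1) := ⟨hk⟩
  have hsphere (v : X) : q v = 1 ↔ L v ∈ Metric.sphere (0 : G) 1 := by
    rw [hq, mem_sphere_zero_iff_norm, pow_eq_one_iff_of_nonneg (norm_nonneg _) two_ne_zero]
  exact (of_chartedSpace (X := Metric.sphere (0 : G) 1)).of_isOpenEmbedding
    (L.subtype hsphere).isOpenEmbedding

end IsLocallyModelled

end IsLocallyModelled

/-! ### A tubular neighbourhood of the embedded sphere -/

section Tube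

theorem abs_euclNorm_sub_le {E F : Type*} [NormedAddCommGroup E] [NormedAddCommGroup F]
    (v w : E × F) : |euclNorm v - euclNorm w| ≤ euclNorm (v - w) := by
  simp only [euclNorm_eq_norm_toLp, WithLp.toLp_sub]
  exact abs_norm_sub_norm_le _ _

theorem radialProj_smul {E F : Type*} [NormedAddCommGroup E] [NormedAddCommGroup F]
    [NormedSpace ℝ E] [NormedSpace ℝ F] {r : ℝ} (hr : 0 < r) {u : E × F} (hu : sqNorm u = 1) :
    radialProj (r • u) = u := by
  rw [radialProj, euclNorm_smul hr.le, euclNorm_eq_one_iff.2 hu, mul_one, inv_smul_smul₀ hr.ne']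

/-- The Euclidean space whose unit ball is the fibre of the tubular neighbourhood of the
embedded sphere. -/
abbrev NormalSpace (m : ℕ) := (ℂ × ℝ) × EuclideanSpace ℝ (Fin (m + 1))

/-- The square of the Euclidean norm on `NormalSpace m`. -/
def normalSq {m : ℕ} (v : NormalSpace m) : ℝ := sqNorm v.1 + ‖v.2‖ ^ 2

variable {m n : ℕ}

@[fun_prop]
theorem continuous_normalSq : Continuous (normalSq : NormalSpace m → ℝ) := by
  unfold normalSq
  fun_prop

theorem normalSq_smul (r : ℝ) (v : NormalSpace m) : normalSq (r • v) = r ^ 2 * normalSq v := by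
  simp only [normalSq, Prod.smul_fst, Prod.smul_snd, sqNorm_smul, norm_smul, mul_pow,
    Real.norm_eq_abs, sq_abs, mul_add]

theorem normalSq_nonneg (v : NormalSpace m) : 0 ≤ normalSq v :=
  add_nonneg (sqNorm_nonneg _) (sq_nonneg _)

theorem normalSq_eq_zero_iff {v : NormalSpace m} : normalSq v = 0 ↔ v = 0 := by
  rw [normalSq, add_eq_zero_iff_of_nonneg (sqNorm_nonneg _) (sq_nonneg _), sqNorm_eq_zero_iff,
    sq_eq_zero_iff, norm_eq_zero, ← Prod.mk_eq_zero]

/-- The product `S² × S^(m+4)`. -/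
def sphereProduct (m : ℕ) : Set ((ℂ × ℝ) × SphereFactor m) :=
  {p | sqNorm p.1 = 1 ∧ sphereSq p.2 = 1}

/-- The graph of the degree `n` power map over the coordinate `2`-sphere of the second factor;
surgery is performed along its intersection with `sphereProduct m`. -/
def powerGraph (m n : ℕ) : Set ((ℂ × ℝ) × SphereFactor m) :=
  {p | p.2.2 = 0 ∧ p.1 = powerMap n p.2.1}

/-- The normal coordinate of a point near the embedded sphere. -/
def normalCoord (n : ℕ) (p : (ℂ × ℝ) × SphereFactor m) : NormalSpace m :=
  ((1 + p.2.2.1) • p.1 - powerMap n (radialProj p.2.1), p.2.2.2)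

/-- The point of `S² × S^(m+4)` with normal coordinate `v` over the point `(powerMap n u, u)` of
the embedded sphere. -/
def tubePoint (n : ℕ) (u : ℂ × ℝ) (v : NormalSpace m) : (ℂ × ℝ) × SphereFactor m :=
  (radialProj (powerMap n u + v.1),
    √(1 - (euclNorm (powerMap n u + v.1) - 1) ^ 2 - ‖v.2‖ ^ 2) • u,
    euclNorm (powerMap n u + v.1) - 1, v.2)

theorem isClosed_powerGraph (hn : 0 < n) : IsClosed (powerGraph m n) := by
  have := continuous_powerMap hn
  exact (isClosed_eq (by fun_prop) (by fun_prop)).inter (isClosed_eq (by fun_prop) (by fun_prop))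

section TubePoint

variable (hn : 0 < n) {u : ℂ × ℝ} (hu : sqNorm u = 1) {v : NormalSpace m}
include hn hu

theorem sq_euclNorm_powerMap_add_sub_one_le :
    (euclNorm (powerMap n u + v.1) - 1) ^ 2 ≤ sqNorm v.1 := by
  have h := abs_euclNorm_sub_le (powerMap n u + v.1) (powerMap n u)
  rw [euclNorm_powerMap hn, euclNorm_eq_one_iff.2 hu, add_sub_cancel_left] at h
  rw [← sq_euclNorm, ← sq_abs]
  gcongr

theorem tubePoint_radicand_pos (hv : normalSq v < 1) :
    0 < 1 - (euclNorm (powerMap n u + v.1) - 1) ^ 2 - ‖v.2‖ ^ 2 := by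
  have := sq_euclNorm_powerMap_add_sub_one_le hn hu (v := v)
  rw [normalSq] at hv
  linarith

theorem powerMap_add_ne_zero (hv : normalSq v < 1) : powerMap n u + v.1 ≠ 0 := by
  intro h
  have := tubePoint_radicand_pos hn hu hv
  rw [h, euclNorm, sqNorm_eq_zero_iff.2 rfl, Real.sqrt_zero] at this
  linarith [sq_nonneg ‖v.2‖]

theorem tubePoint_mem_sphereProduct (hv : normalSq v < 1) : tubePoint n u v ∈ sphereProduct m := by
  refine ⟨sqNorm_radialProj (powerMap_add_ne_zero hn hu hv), ?_⟩
  simp only [tubePoint, sphereSq, sqNorm_smul, hu, Real.norm_eq_abs, sq_abs,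
    Real.sq_sqrt (tubePoint_radicand_pos hn hu hv).le]
  rw [sqNorm, Real.norm_eq_abs, sq_abs]
  ring

theorem tubePoint_snd_fst_ne_zero (hv : normalSq v < 1) : (tubePoint n u v).2.1 ≠ 0 :=
  smul_ne_zero (Real.sqrt_pos.2 (tubePoint_radicand_pos hn hu hv)).ne'
    (ne_zero_of_sqNorm_eq_one hu)

theorem radialProj_tubePoint (hv : normalSq v < 1) : radialProj (tubePoint n u v).2.1 = u :=
  radialProj_smul (Real.sqrt_pos.2 (tubePoint_radicand_pos hn hu hv)) hu

theorem normalCoord_tubePoint (hv : normalSq v < 1) : normalCoord n (tubePoint n u v) = v := by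
  rw [normalCoord, radialProj_tubePoint hn hu hv]
  simp only [tubePoint, add_sub_cancel, euclNorm_smul_radialProj, add_sub_cancel_left]

end TubePoint

theorem continuousOn_tubePoint (hn : 0 < n) :
    ContinuousOn (fun q : (ℂ × ℝ) × NormalSpace m => tubePoint n q.1 q.2)
      {q | sqNorm q.1 = 1 ∧ normalSq q.2 < 1} := by
  have := continuous_powerMap hn
  unfold tubePoint
  refine (continuousOn_radialProj.comp (by fun_prop) fun q hq => ?_).prodMk (by fun_prop)
  exact powerMap_add_ne_zero hn hq.1 hq.2

section NormalCoord

variable {p : (ℂ × ℝ) × SphereFactor m} (hp : p ∈ sphereProduct m)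
include hp

theorem one_sub_sqNorm_snd_fst : 1 - sqNorm p.2.1 = p.2.2.1 ^ 2 + ‖p.2.2.2‖ ^ 2 := by
  rw [← hp.2, sphereSq, add_sub_cancel_left, sqNorm, Real.norm_eq_abs, sq_abs]

theorem one_add_height_pos (hW : p.2.1 ≠ 0) : 0 < 1 + p.2.2.1 := by
  have h := one_sub_sqNorm_snd_fst hp
  nlinarith [sqNorm_pos_iff.2 hW, sq_nonneg ‖p.2.2.2‖]

theorem one_sub_sqNorm_le_normalSq (hn : 0 < n) (hW : p.2.1 ≠ 0) :
    1 - sqNorm p.2.1 ≤ normalSq (normalCoord n p) := by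
  rw [one_sub_sqNorm_snd_fst hp, normalSq, normalCoord]
  gcongr
  have h := abs_euclNorm_sub_le ((1 + p.2.2.1) • p.1) (powerMap n (radialProj p.2.1))
  rw [euclNorm_powerMap hn, euclNorm_eq_one_iff.2 (sqNorm_radialProj hW),
    euclNorm_smul (one_add_height_pos hp hW).le, euclNorm_eq_one_iff.2 hp.1, mul_one,
    add_sub_cancel_left] at h
  rw [← sq_euclNorm, ← sq_abs]
  gcongr

theorem tubePoint_normalCoord (hW : p.2.1 ≠ 0) :
    tubePoint n (radialProj p.2.1) (normalCoord n p) = p := by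
  have hs := one_add_height_pos hp hW
  have hsqrt : √(1 - p.2.2.1 ^ 2 - ‖p.2.2.2‖ ^ 2) = euclNorm p.2.1 := by
    rw [euclNorm]
    congr 1
    linarith [one_sub_sqNorm_snd_fst hp]
  simp only [tubePoint, normalCoord, add_sub_cancel, euclNorm_smul hs.le,
    euclNorm_eq_one_iff.2 hp.1, mul_one, add_sub_cancel_left, radialProj_smul hs hp.1, hsqrt,
    euclNorm_smul_radialProj]

theorem sqNorm_snd_fst_of_mem_powerGraph (h : p ∈ powerGraph m n) : sqNorm p.2.1 = 1 := by
  rw [← sphereSq_of_snd_eq_zero h.1, hp.2]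

theorem normalCoord_eq_zero_of_mem_powerGraph (h : p ∈ powerGraph m n) : normalCoord n p = 0 := by
  rw [normalCoord, radialProj_eq_self (sqNorm_snd_fst_of_mem_powerGraph hp h), ← h.2, h.1]
  simp

theorem mem_powerGraph_of_normalCoord_eq_zero (hn : 0 < n) (hW : p.2.1 ≠ 0)
    (h : normalCoord n p = 0) : p ∈ powerGraph m n := by
  have hu := sqNorm_radialProj hW
  have hnorm : euclNorm (powerMap n (radialProj p.2.1)) = 1 := by
    rw [euclNorm_powerMap hn, euclNorm_eq_one_iff.2 hu]
  rw [← tubePoint_normalCoord (n := n) hp hW, h]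
  simp [tubePoint, powerGraph, hnorm,
    radialProj_eq_self (euclNorm_eq_one_iff.1 hnorm)]

end NormalCoord

theorem continuousOn_normalCoord (hn : 0 < n) :
    ContinuousOn (normalCoord n : (ℂ × ℝ) × SphereFactor m → NormalSpace m) {p | p.2.1 ≠ 0} := by
  have h : ContinuousOn (fun p : (ℂ × ℝ) × SphereFactor m => powerMap n (radialProj p.2.1))
      {p | p.2.1 ≠ 0} :=
    (continuous_powerMap hn).comp_continuousOn
      (continuousOn_radialProj.comp (by fun_prop) fun _ hp => hp)
  exact (ContinuousOn.sub (by fun_prop) h).prodMk (by fun_prop)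

end Tube

/-! ### The handle and its attaching map -/

section Handle

variable {m n : ℕ}

/-- The piece of `S² × S^(m+4)` that remains after removing the embedded sphere. -/
def sphereComplement (m n : ℕ) : Set ((ℂ × ℝ) × SphereFactor m) :=
  sphereProduct m \ powerGraph m n

/-- The product of the open ball of radius `1/2` in `ℝ³` with the unit sphere of the normal
space, which replaces the embedded sphere. -/
def solidHandle (m : ℕ) : Set ((ℂ × ℝ) × NormalSpace m) :=
  {q | sqNorm q.1 < 1 / 4 ∧ normalSq q.2 = 1}

/-- The attaching map, exchanging the radii of the two factors: `(r u, v)` goes to the point with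
normal coordinate `r v` over `u`. -/
def handleMap (n : ℕ) (q : (ℂ × ℝ) × NormalSpace m) : (ℂ × ℝ) × SphereFactor m :=
  tubePoint n (radialProj q.1) (euclNorm q.1 • q.2)

/-- The inverse of `handleMap`. -/
def handleInv (n : ℕ) (p : (ℂ × ℝ) × SphereFactor m) : (ℂ × ℝ) × NormalSpace m :=
  (√(normalSq (normalCoord n p)) • radialProj p.2.1,
    (√(normalSq (normalCoord n p)))⁻¹ • normalCoord n p)

section HandleMap

theorem normalSq_euclNorm_smul {q : (ℂ × ℝ) × NormalSpace m} (hq : q ∈ solidHandle m) :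
    normalSq (euclNorm q.1 • q.2) = sqNorm q.1 := by
  rw [normalSq_smul, sq_euclNorm, hq.2, mul_one]

theorem normalSq_euclNorm_smul_lt_one {q : (ℂ × ℝ) × NormalSpace m} (hq : q ∈ solidHandle m) :
    normalSq (euclNorm q.1 • q.2) < 1 := by
  linarith [normalSq_euclNorm_smul hq, hq.1]

variable (hn : 0 < n) {q : (ℂ × ℝ) × NormalSpace m} (hq : q ∈ solidHandle m) (hx : q.1 ≠ 0)
include hn hq hx

theorem normalCoord_handleMap : normalCoord n (handleMap n q) = euclNorm q.1 • q.2 :=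
  normalCoord_tubePoint hn (sqNorm_radialProj hx) (normalSq_euclNorm_smul_lt_one hq)

theorem normalSq_normalCoord_handleMap : normalSq (normalCoord n (handleMap n q)) = sqNorm q.1 := by
  rw [normalCoord_handleMap hn hq hx, normalSq_euclNorm_smul hq]

theorem handleMap_mem_sphereComplement : handleMap n q ∈ sphereComplement m n := by
  have hmem : handleMap n q ∈ sphereProduct m :=
    tubePoint_mem_sphereProduct hn (sqNorm_radialProj hx) (normalSq_euclNorm_smul_lt_one hq)
  refine ⟨hmem, fun h => hx (sqNorm_eq_zero_iff.1 ?_)⟩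
  rw [← normalSq_normalCoord_handleMap hn hq hx, normalCoord_eq_zero_of_mem_powerGraph hmem h,
    normalSq_eq_zero_iff.2 rfl]

theorem handleMap_snd_fst_ne_zero : (handleMap n q).2.1 ≠ 0 :=
  tubePoint_snd_fst_ne_zero hn (sqNorm_radialProj hx) (normalSq_euclNorm_smul_lt_one hq)

theorem handleInv_handleMap : handleInv n (handleMap n q) = q := by
  rw [handleInv, normalSq_normalCoord_handleMap hn hq hx, normalCoord_handleMap hn hq hx, handleMap,
    radialProj_tubePoint hn (sqNorm_radialProj hx) (normalSq_euclNorm_smul_lt_one hq), ← euclNorm,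
    euclNorm_smul_radialProj, inv_smul_smul₀ (euclNorm_pos_iff.2 hx).ne']

end HandleMap

section HandleInv

theorem sqNorm_handleInv {p : (ℂ × ℝ) × SphereFactor m} (hW : p.2.1 ≠ 0) :
    sqNorm (handleInv n p).1 = normalSq (normalCoord n p) := by
  rw [handleInv, sqNorm_smul, sqNorm_radialProj hW, mul_one, Real.norm_eq_abs, sq_abs,
    Real.sq_sqrt (normalSq_nonneg _)]

variable (hn : 0 < n) {p : (ℂ × ℝ) × SphereFactor m} (hp : p ∈ sphereComplement m n)
  (hW : p.2.1 ≠ 0)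
include hn hp hW

theorem normalSq_normalCoord_pos : 0 < normalSq (normalCoord n p) :=
  (normalSq_nonneg _).lt_of_ne' fun h =>
    hp.2 (mem_powerGraph_of_normalCoord_eq_zero hp.1 hn hW (normalSq_eq_zero_iff.1 h))

theorem handleInv_fst_ne_zero : (handleInv n p).1 ≠ 0 := by
  rw [← sqNorm_pos_iff, sqNorm_handleInv hW]
  exact normalSq_normalCoord_pos hn hp hW

theorem handleInv_mem_solidHandle (hN : normalSq (normalCoord n p) < 1 / 4) :
    handleInv n p ∈ solidHandle m := by
  have hpos := normalSq_normalCoord_pos hn hp hW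
  refine ⟨(sqNorm_handleInv hW).trans_lt hN, ?_⟩
  rw [handleInv, normalSq_smul, inv_pow, Real.sq_sqrt hpos.le, inv_mul_cancel₀ hpos.ne']

theorem handleMap_handleInv : handleMap n (handleInv n p) = p := by
  have hpos := Real.sqrt_pos.2 (normalSq_normalCoord_pos hn hp hW)
  rw [handleMap, handleInv, radialProj_smul hpos (sqNorm_radialProj hW), euclNorm_smul hpos.le,
    euclNorm_eq_one_iff.2 (sqNorm_radialProj hW), mul_one, smul_inv_smul₀ hpos.ne',
    tubePoint_normalCoord hp.1 hW]

end HandleInv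

theorem continuousOn_handleMap (hn : 0 < n) :
    ContinuousOn (handleMap n : (ℂ × ℝ) × NormalSpace m → (ℂ × ℝ) × SphereFactor m)
      {q | q ∈ solidHandle m ∧ q.1 ≠ 0} := by
  have hpolar : ContinuousOn
      (fun q : (ℂ × ℝ) × NormalSpace m => (radialProj q.1, euclNorm q.1 • q.2))
      {q | q ∈ solidHandle m ∧ q.1 ≠ 0} :=
    (continuousOn_radialProj.comp (by fun_prop) fun _ hq => hq.2).prodMk (by fun_prop)
  have hmaps : Set.MapsTo
      (fun q : (ℂ × ℝ) × NormalSpace m => (radialProj q.1, euclNorm q.1 • q.2))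
      {q | q ∈ solidHandle m ∧ q.1 ≠ 0} {q | sqNorm q.1 = 1 ∧ normalSq q.2 < 1} := fun q hq =>
    ⟨sqNorm_radialProj hq.2, normalSq_euclNorm_smul_lt_one hq.1⟩
  have h := (continuousOn_tubePoint hn).comp hpolar hmaps
  exact h

theorem continuousOn_handleInv (hn : 0 < n) :
    ContinuousOn (handleInv n : (ℂ × ℝ) × SphereFactor m → (ℂ × ℝ) × NormalSpace m)
      {p | p ∈ sphereComplement m n ∧ p.2.1 ≠ 0} := by
  have hcoord : ContinuousOn (normalCoord n) {p | p ∈ sphereComplement m n ∧ p.2.1 ≠ 0} :=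
    (continuousOn_normalCoord hn).mono fun _ hp => hp.2
  have hsqrt : ContinuousOn (fun p => √(normalSq (normalCoord n p)))
      {p | p ∈ sphereComplement m n ∧ p.2.1 ≠ 0} :=
    (Real.continuous_sqrt.comp continuous_normalSq).comp_continuousOn hcoord
  have hproj : ContinuousOn (fun p : (ℂ × ℝ) × SphereFactor m => radialProj p.2.1)
      {p | p ∈ sphereComplement m n ∧ p.2.1 ≠ 0} :=
    continuousOn_radialProj.comp (by fun_prop) fun _ hp => hp.2
  refine (hsqrt.smul hproj).prodMk ((hsqrt.inv₀ fun p hp => ?_).smul hcoord)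
  exact (Real.sqrt_pos.2 (normalSq_normalCoord_pos hn hp.1 hp.2)).ne'

end Handle

/-! ### The surgered manifold -/

section Compactness

variable {E F : Type*} [NormedAddCommGroup E] [NormedAddCommGroup F] {m : ℕ}

theorem sq_norm_le_sqNorm (v : E × F) : ‖v‖ ^ 2 ≤ sqNorm v := by
  rcases max_choice ‖v.1‖ ‖v.2‖ with h | h <;> rw [Prod.norm_def, h]
  · exact le_add_of_nonneg_right (sq_nonneg _)
  · exact le_add_of_nonneg_left (sq_nonneg _)

theorem sq_norm_le_normalSq (v : NormalSpace m) : ‖v‖ ^ 2 ≤ normalSq v :=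
  (sq_norm_le_sqNorm v).trans (add_le_add_left (sq_norm_le_sqNorm v.1) _)

theorem sq_norm_le_sphereSq (w : SphereFactor m) : ‖w‖ ^ 2 ≤ sphereSq w :=
  (sq_norm_le_sqNorm w).trans (add_le_add (sq_norm_le_sqNorm w.1) (sq_norm_le_sqNorm w.2))

theorem isCompact_setOf_mem_of_sq_norm_le [ProperSpace E] {q : E → ℝ} (hq : Continuous q)
    (hle : ∀ v, ‖v‖ ^ 2 ≤ q v) {s : Set ℝ} (hs : IsClosed s) (hb : BddAbove s) :
    IsCompact {v | q v ∈ s} := by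
  obtain ⟨R, hR⟩ := hb
  refine Metric.isCompact_of_isClosed_isBounded (hs.preimage hq)
    (isBounded_iff_forall_norm_le.2 ⟨√R, fun v hv => Real.le_sqrt_of_sq_le ?_⟩)
  exact (hle v).trans (hR hv)

theorem isCompact_setOf_normalSq_eq_one : IsCompact {v : NormalSpace m | normalSq v = 1} :=
  isCompact_setOf_mem_of_sq_norm_le continuous_normalSq sq_norm_le_normalSq isClosed_singleton
    bddAbove_singleton

theorem isCompact_sphereProduct : IsCompact (sphereProduct m) :=
  (isCompact_setOf_mem_of_sq_norm_le continuous_sqNorm sq_norm_le_sqNorm isClosed_singleton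
    bddAbove_singleton).prod
    (isCompact_setOf_mem_of_sq_norm_le continuous_sphereSq sq_norm_le_sphereSq isClosed_singleton
      bddAbove_singleton)

end Compactness

section ToSubtype

variable {X Y : Type*} {S : Set X} [Nonempty S]

open Classical in
/-- A point of `S` regarded as an element of the subtype, with an arbitrary value off `S`. -/
def toSubtype (S : Set X) [Nonempty S] (x : X) : S :=
  if h : x ∈ S then ⟨x, h⟩ else Classical.arbitrary S

theorem coe_toSubtype {x : X} (h : x ∈ S) : (toSubtype S x : X) = x := by
  rw [toSubtype, dif_pos h]

theorem continuousOn_toSubtype [TopologicalSpace X] [TopologicalSpace Y] {f : Y → X}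
    {T : Set Y} (hf : ContinuousOn f T) (h : Set.MapsTo f T S) :
    ContinuousOn (fun y => toSubtype S (f y)) T :=
  IsInducing.subtypeVal.continuousOn_iff.2 (hf.congr fun _ hy => coe_toSubtype (h hy))

end ToSubtype

section SurgeredManifold

variable {m n : ℕ}

theorem basePoint_mem_sphereComplement :
    ((southPole, (0, 1, 0)) : (ℂ × ℝ) × SphereFactor m) ∈ sphereComplement m n := by
  refine ⟨⟨by simp [sqNorm, southPole], by simp [sphereSq, sqNorm]⟩, fun h => ?_⟩
  simpa using congrArg Prod.fst h.1

instance : Nonempty (sphereComplement m n) :=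
  ⟨⟨_, basePoint_mem_sphereComplement⟩⟩

instance : Nonempty (solidHandle m) :=
  ⟨⟨(0, (0, EuclideanSpace.single 0 1)), by simp [sqNorm], by simp [normalSq, sqNorm]⟩⟩

/-- The homeomorphism from the solid handle without its core onto the deleted tubular neighbourhood
of the embedded sphere, induced by `handleMap`. -/
def attachingMap (m : ℕ) {n : ℕ} (hn : 0 < n) :
    OpenPartialHomeomorph (solidHandle m) (sphereComplement m n) where
  toFun b := toSubtype _ (handleMap n b)
  invFun a := toSubtype _ (handleInv n a)
  source := {b | b.1.1 ≠ 0}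
  target := {a | a.1.2.1 ≠ 0 ∧ normalSq (normalCoord n a.1) < 1 / 4}
  map_source' b hb := by
    rw [Set.mem_ofPred_eq, coe_toSubtype (handleMap_mem_sphereComplement hn b.2 hb),
      normalSq_normalCoord_handleMap hn b.2 hb]
    exact ⟨handleMap_snd_fst_ne_zero hn b.2 hb, b.2.1⟩
  map_target' a ha := by
    rw [Set.mem_ofPred_eq, coe_toSubtype (handleInv_mem_solidHandle hn a.2 ha.1 ha.2)]
    exact handleInv_fst_ne_zero hn a.2 ha.1
  left_inv' b hb := by
    apply Subtype.ext
    simp only [coe_toSubtype (handleMap_mem_sphereComplement hn b.2 hb)]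
    rw [handleInv_handleMap hn b.2 hb, coe_toSubtype b.2]
  right_inv' a ha := by
    apply Subtype.ext
    simp only [coe_toSubtype (handleInv_mem_solidHandle hn a.2 ha.1 ha.2)]
    rw [handleMap_handleInv hn a.2 ha.1, coe_toSubtype a.2]
  open_source := isOpen_ne_fun (by fun_prop) (by fun_prop)
  open_target :=
    have hcoord : ContinuousOn (fun a : sphereComplement m n => normalCoord n a.1)
        {a | a.1.2.1 ≠ 0} :=
      (continuousOn_normalCoord hn).comp continuous_subtype_val.continuousOn fun _ ha => ha
    (continuous_normalSq.comp_continuousOn hcoord).isOpen_inter_preimage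
      (isOpen_ne_fun (by fun_prop) (by fun_prop)) isOpen_Iio
  continuousOn_toFun :=
    continuousOn_toSubtype ((continuousOn_handleMap hn).comp continuous_subtype_val.continuousOn
      fun b hb => ⟨b.2, hb⟩) fun b hb => handleMap_mem_sphereComplement hn b.2 hb
  continuousOn_invFun :=
    continuousOn_toSubtype ((continuousOn_handleInv hn).comp continuous_subtype_val.continuousOn
      fun a ha => ⟨a.2, ha.1⟩) fun a ha => handleInv_mem_solidHandle hn a.2 ha.1 ha.2

/-- The result of surgery on `S² × S^(m+4)` along the embedded sphere `powerGraph m n`. -/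
abbrev SurgeredManifold (m : ℕ) {n : ℕ} (hn : 0 < n) := Glue (attachingMap m hn)

variable (hn : 0 < n)

theorem mem_attachingMap_source {b : solidHandle m} :
    b ∈ (attachingMap m hn).source ↔ b.1.1 ≠ 0 := Iff.rfl

theorem notMem_attachingMap_source {b : solidHandle m} :
    b ∉ (attachingMap m hn).source ↔ b.1.1 = 0 := not_not

theorem coe_attachingMap {b : solidHandle m} (hb : b.1.1 ≠ 0) :
    (attachingMap m hn b : (ℂ × ℝ) × SphereFactor m) = handleMap n b :=
  coe_toSubtype (handleMap_mem_sphereComplement hn b.2 hb)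

theorem coe_attachingMap_symm {a : sphereComplement m n} (ha : a ∈ (attachingMap m hn).target) :
    ((attachingMap m hn).symm a : (ℂ × ℝ) × NormalSpace m) = handleInv n a :=
  coe_toSubtype (handleInv_mem_solidHandle hn a.2 ha.1 ha.2)

theorem attachingMap_image {s : Set ℝ} (hs : s ⊆ Set.Iio (1 / 4)) :
    attachingMap m hn '' ((attachingMap m hn).source ∩ {b | sqNorm b.1.1 ∈ s}) =
      {a | a.1.2.1 ≠ 0 ∧ normalSq (normalCoord n a.1) ∈ s} := by
  ext a
  constructor
  · rintro ⟨b, ⟨hb, hbs⟩, rfl⟩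
    rw [Set.mem_ofPred_eq, coe_attachingMap hn hb, normalSq_normalCoord_handleMap hn b.2 hb]
    exact ⟨handleMap_snd_fst_ne_zero hn b.2 hb, hbs⟩
  · rintro ⟨hW, has⟩
    have ha : a ∈ (attachingMap m hn).target := ⟨hW, hs has⟩
    refine ⟨(attachingMap m hn).symm a, ⟨(attachingMap m hn).map_target ha, ?_⟩,
      (attachingMap m hn).right_inv ha⟩
    rwa [Set.mem_ofPred_eq, coe_attachingMap_symm hn ha, sqNorm_handleInv hW]

include hn in
theorem isClosed_setOf_normalSq_normalCoord_le :
    IsClosed {a : sphereComplement m n |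
      a.1.2.1 ≠ 0 ∧ normalSq (normalCoord n a.1) ∈ Set.Iic (1 / 16)} := by
  have hne (a : sphereComplement m n) (ha : 1 / 2 ≤ sqNorm a.1.2.1) : a.1.2.1 ≠ 0 :=
    sqNorm_pos_iff.1 (by linarith)
  have hcoord : ContinuousOn (fun a : sphereComplement m n => normalSq (normalCoord n a.1))
      {a | 1 / 2 ≤ sqNorm a.1.2.1} :=
    continuous_normalSq.comp_continuousOn
      ((continuousOn_normalCoord hn).comp continuous_subtype_val.continuousOn hne)
  convert hcoord.preimage_isClosed_of_isClosed (isClosed_le (by fun_prop) (by fun_prop))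
    isClosed_Iic using 1
  refine Set.ext fun a => and_congr_left fun ha => ⟨fun hW => ?_, hne a⟩
  have h := one_sub_sqNorm_le_normalSq a.2.1 hn hW
  rw [Set.mem_Iic] at ha
  rw [Set.mem_ofPred_eq]
  linarith

theorem t2Space_surgeredManifold : T2Space (SurgeredManifold m hn) := by
  refine Glue.t2Space (K := {b | sqNorm b.1.1 ∈ Set.Iic (1 / 16)}) (fun b hb => ?_) ?_
  · have hcont : Continuous fun b : solidHandle m => sqNorm b.1.1 := by fun_prop
    refine hcont.continuousAt.preimage_mem_nhds (Iic_mem_nhds ?_)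
    rw [(notMem_attachingMap_source hn).1 hb, sqNorm_eq_zero_iff.2 rfl]
    norm_num
  · rw [attachingMap_image hn (Set.Iic_subset_Iio.2 (by norm_num))]
    exact isClosed_setOf_normalSq_normalCoord_le hn

theorem isCompact_setOf_sqNorm_le :
    IsCompact {b : solidHandle m | sqNorm b.1.1 ∈ Set.Iic (1 / 16)} := by
  rw [IsEmbedding.subtypeVal.isCompact_iff]
  convert (isCompact_setOf_mem_of_sq_norm_le (continuous_sqNorm (E := ℂ) (F := ℝ))
    sq_norm_le_sqNorm isClosed_Iic (bddAbove_Iic (a := (1 / 16 : ℝ)))).prod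
      (isCompact_setOf_normalSq_eq_one (m := m)) using 1
  ext q
  constructor
  · rintro ⟨b, hb, rfl⟩
    exact ⟨hb, b.2.2⟩
  · rintro ⟨hx, hv⟩
    exact ⟨⟨q, lt_of_le_of_lt hx (by norm_num), hv⟩, hx, rfl⟩

include hn in
theorem isCompact_compl_setOf_normalSq_normalCoord_lt :
    IsCompact {a : sphereComplement m n |
      a.1.2.1 ≠ 0 ∧ normalSq (normalCoord n a.1) ∈ Set.Iio (1 / 16)}ᶜ := by
  rw [IsEmbedding.subtypeVal.isCompact_iff]
  convert isCompact_sphereProduct.diff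
    ((continuous_normalSq.comp_continuousOn (continuousOn_normalCoord hn)).isOpen_inter_preimage
      (isOpen_ne_fun (by fun_prop) continuous_const) (isOpen_Iio (a := (1 / 16 : ℝ)))) using 1
  ext p
  constructor
  · rintro ⟨a, ha, rfl⟩
    exact ⟨a.2.1, ha⟩
  · rintro ⟨hp, hfar⟩
    refine ⟨⟨p, hp, fun hgraph => hfar ⟨?_, ?_⟩⟩, hfar, rfl⟩
    · exact ne_zero_of_sqNorm_eq_one (sqNorm_snd_fst_of_mem_powerGraph hp hgraph)
    · rw [Set.mem_preimage, Function.comp_apply, normalCoord_eq_zero_of_mem_powerGraph hp hgraph,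
        normalSq_eq_zero_iff.2 rfl]
      norm_num

theorem compactSpace_surgeredManifold : CompactSpace (SurgeredManifold m hn) := by
  refine Glue.compactSpace (N := {b | sqNorm b.1.1 ∈ Set.Iio (1 / 16)}) (fun b hb => ?_)
    (fun b hb => (Set.mem_Iio.1 hb).le) isCompact_setOf_sqNorm_le ?_
  · rw [Set.mem_ofPred_eq, (notMem_attachingMap_source hn).1 hb, sqNorm_eq_zero_iff.2 rfl]
    norm_num
  · rw [attachingMap_image hn (Set.Iio_subset_Iio (by norm_num))]
    exact isCompact_compl_setOf_normalSq_normalCoord_lt hn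

section Charts

variable {α β : Type*} [NormedAddCommGroup α] [NormedAddCommGroup β]

theorem norm_sq_homeomorphProd_symm (v : α × β) :
    ‖(WithLp.homeomorphProd 2 α β).symm v‖ ^ 2 = ‖v.1‖ ^ 2 + ‖v.2‖ ^ 2 :=
  WithLp.prod_norm_sq_eq_of_L2 _

theorem finrank_withLp_prod [NormedSpace ℝ α] [NormedSpace ℝ β] [FiniteDimensional ℝ α]
    [FiniteDimensional ℝ β] :
    Module.finrank ℝ (WithLp 2 (α × β)) = Module.finrank ℝ α + Module.finrank ℝ β := by
  rw [(WithLp.linearEquiv 2 ℝ (α × β)).finrank_eq, Module.finrank_prod]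

theorem isLocallyModelled_sphereTwo :
    IsLocallyModelled (EuclideanSpace ℝ (Fin 2)) {v : ℂ × ℝ // sqNorm v = 1} := by
  refine .of_norm_sq_eq_one ?_ (WithLp.homeomorphProd 2 ℂ ℝ).symm fun v => ?_
  · rw [finrank_withLp_prod, Complex.finrank_real_complex, Module.finrank_self]
  · rw [norm_sq_homeomorphProd_symm, sqNorm]

theorem isLocallyModelled_normalSphere :
    IsLocallyModelled (EuclideanSpace ℝ (Fin (m + 3))) {v : NormalSpace m // normalSq v = 1} := by
  refine .of_norm_sq_eq_one ?_ (((WithLp.homeomorphProd 2 ℂ ℝ).symm.prodCongr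
    (.refl _)).trans (WithLp.homeomorphProd 2 _ _).symm) fun v => ?_
  · rw [finrank_withLp_prod, finrank_withLp_prod, Complex.finrank_real_complex,
      Module.finrank_self, finrank_euclideanSpace_fin]
    ring
  · rw [Homeomorph.trans_apply, norm_sq_homeomorphProd_symm, Homeomorph.coe_prodCongr,
      Prod.map_fst, Prod.map_snd, norm_sq_homeomorphProd_symm]
    rfl

theorem isLocallyModelled_sphereFactor :
    IsLocallyModelled (EuclideanSpace ℝ (Fin (m + 4))) {w : SphereFactor m // sphereSq w = 1} := by
  refine .of_norm_sq_eq_one ?_ (((WithLp.homeomorphProd 2 ℂ ℝ).symm.prodCongr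
    (WithLp.homeomorphProd 2 _ _).symm).trans (WithLp.homeomorphProd 2 _ _).symm) fun w => ?_
  · rw [finrank_withLp_prod, finrank_withLp_prod, finrank_withLp_prod,
      Complex.finrank_real_complex, Module.finrank_self, finrank_euclideanSpace_fin]
    ring
  · rw [Homeomorph.trans_apply, norm_sq_homeomorphProd_symm, Homeomorph.coe_prodCongr,
      Prod.map_fst, Prod.map_snd, norm_sq_homeomorphProd_symm, norm_sq_homeomorphProd_symm,
      sphereSq, sqNorm, sqNorm]

include hn in
theorem isLocallyModelled_sphereComplement :
    IsLocallyModelled (EuclideanSpace ℝ (Fin (m + 6))) (sphereComplement m n) := by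
  have hdim : Module.finrank ℝ (EuclideanSpace ℝ (Fin 2) × EuclideanSpace ℝ (Fin (m + 4))) =
      Module.finrank ℝ (EuclideanSpace ℝ (Fin (m + 6))) := by
    simp only [Module.finrank_prod, finrank_euclideanSpace_fin]
    ring
  refine ((isLocallyModelled_sphereTwo.prod isLocallyModelled_sphereFactor).trans_homeomorph
    (ContinuousLinearEquiv.ofFinrankEq hdim).toHomeomorph).of_isOpenEmbedding
    (f := fun a : sphereComplement m n => (⟨a.1.1, a.2.1.1⟩, ⟨a.1.2, a.2.1.2⟩)) ⟨?_, ?_⟩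
  · exact .of_comp (g := fun p : {v : ℂ × ℝ // sqNorm v = 1} ×
      {w : SphereFactor m // sphereSq w = 1} => (p.1.1, p.2.1)) (by fun_prop) (by fun_prop)
      .subtypeVal
  · convert ((isClosed_powerGraph (m := m) hn).preimage (f := fun p : {v : ℂ × ℝ // sqNorm v = 1} ×
      {w : SphereFactor m // sphereSq w = 1} => (p.1.1, p.2.1)) (by fun_prop)).isOpen_compl using 1
    ext p
    constructor
    · rintro ⟨a, rfl⟩
      exact a.2.2
    · intro hp
      exact ⟨⟨(p.1.1, p.2.1), ⟨p.1.2, p.2.2⟩, hp⟩, rfl⟩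

theorem isLocallyModelled_solidHandle :
    IsLocallyModelled (EuclideanSpace ℝ (Fin (m + 6))) (solidHandle m) := by
  have hdim : Module.finrank ℝ ((ℂ × ℝ) × EuclideanSpace ℝ (Fin (m + 3))) =
      Module.finrank ℝ (EuclideanSpace ℝ (Fin (m + 6))) := by
    simp only [Module.finrank_prod, finrank_euclideanSpace_fin, Complex.finrank_real_complex,
      Module.finrank_self]
    ring
  refine (((IsLocallyModelled.of_chartedSpace (E := ℂ × ℝ)).prod
    isLocallyModelled_normalSphere).trans_homeomorph
    (ContinuousLinearEquiv.ofFinrankEq hdim).toHomeomorph).of_isOpenEmbedding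
    (f := fun b : solidHandle m => (b.1.1, ⟨b.1.2, b.2.2⟩)) ⟨?_, ?_⟩
  · exact .of_comp (g := fun p : (ℂ × ℝ) × {v : NormalSpace m // normalSq v = 1} =>
      (p.1, p.2.1)) (by fun_prop) (by fun_prop) .subtypeVal
  · convert (isOpen_lt (by fun_prop) continuous_const :
      IsOpen {p : (ℂ × ℝ) × {v : NormalSpace m // normalSq v = 1} | sqNorm p.1 < 1 / 4}) using 1
    ext p
    constructor
    · rintro ⟨b, rfl⟩
      exact b.2.1
    · intro hp
      exact ⟨⟨(p.1, p.2.1), hp, p.2.2⟩, rfl⟩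

theorem isLocallyModelled_surgeredManifold :
    IsLocallyModelled (EuclideanSpace ℝ (Fin (m + 6))) (SurgeredManifold m hn) :=
  .glue (isLocallyModelled_sphereComplement hn) isLocallyModelled_solidHandle

end Charts

end SurgeredManifold

/-! ### The cocycle on the surgered manifold -/

section Prism

variable {X Y D : Type*} [TopologicalSpace X] [TopologicalSpace Y] [AddCommGroup D] {U : Set Y}
  {C : Set X} {c : (I × I → Y) → D} {h : I × X → Y}

theorem SquareAdditiveOn.pathAdditiveOn_homotopy (hadd : SquareAdditiveOn U c)
    (hh : ContinuousOn h (Set.univ ×ˢ C)) (hU : Set.MapsTo h (Set.univ ×ˢ C) U) :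
    PathAdditiveOn C fun γ => c fun t => h (t.1, γ t.2) := fun γ hγ => by
  have hsweep : IsCubeIn (Set.univ ×ˢ C) fun t : I × I => (t.1, γ t.2) :=
    ⟨continuous_fst.prodMk (hγ.1.comp continuous_snd), fun t => ⟨trivial, hγ.2 t.2⟩⟩
  exact hadd.2 _ (hsweep.comp_continuousOn hh hU)

theorem IsCocycleOn.apply_homotopy (hcocycle : IsCocycleOn U c)
    (hh : ContinuousOn h (Set.univ ×ˢ C)) (hU : Set.MapsTo h (Set.univ ×ˢ C) U) {s : I × I → X}
    (hs : IsCubeIn C s) :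
    c (fun t => h (1, s t)) =
      c (fun t => h (0, s t)) + pathCoboundary (fun γ => c fun t => h (t.1, γ t.2)) s := by
  have hsweep : IsCubeIn (Set.univ ×ˢ C) fun t : I × I × I => (t.1, s t.2) :=
    ⟨continuous_fst.prodMk (hs.1.comp continuous_snd), fun t => ⟨trivial, hs.2 t.2⟩⟩
  have hprism := hcocycle _ (hsweep.comp_continuousOn hh hU)
  simp only [squareCoboundary, pathCoboundary, Function.comp_def, Prod.mk.eta] at hprism ⊢
  rw [← sub_eq_zero, ← hprism]
  abel

end Prism

section Cocycle

variable {m n : ℕ}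

/-- The homotopy moving the first coordinate of `handleMap` to the power map of the polar direction,
by shrinking the normal coordinate. -/
def straighten (n : ℕ) (q : I × solidHandle m) : ℂ × ℝ :=
  (tubePoint n (radialProj q.2.1.1) (((q.1 : ℝ) * euclNorm q.2.1.1) • q.2.1.2)).1

theorem straighten_one (b : solidHandle m) : straighten n (1, b) = (handleMap n b.1).1 := by
  rw [straighten, handleMap, Set.Icc.coe_one, one_mul]

variable (hn : 0 < n)

include hn in
theorem straighten_zero {b : solidHandle m} (hb : b.1.1 ≠ 0) :
    straighten n (0, b) = powerMap n (radialProj b.1.1) := by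
  have hnorm : sqNorm (powerMap n (radialProj b.1.1)) = 1 := by
    rw [sqNorm_powerMap hn, sqNorm_radialProj hb]
  rw [straighten, Set.Icc.coe_zero, zero_mul, zero_smul, tubePoint, Prod.fst_zero, add_zero,
    radialProj_eq_self hnorm]

theorem normalSq_smul_lt_one (t : I) (b : solidHandle m) :
    normalSq (((t : ℝ) * euclNorm b.1.1) • b.1.2) < 1 := by
  rw [mul_smul, normalSq_smul, normalSq_euclNorm_smul b.2]
  nlinarith [b.2.1, sqNorm_nonneg b.1.1, pow_le_one₀ (n := 2) t.2.1 t.2.2]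

include hn in
theorem mapsTo_straighten :
    Set.MapsTo (straighten (m := m) n) (Set.univ ×ˢ {b | b.1.1 ≠ 0}) {0}ᶜ := fun q hq =>
  ne_zero_of_sqNorm_eq_one
    (tubePoint_mem_sphereProduct hn (sqNorm_radialProj hq.2) (normalSq_smul_lt_one q.1 q.2)).1

theorem continuousOn_radialProj_solidHandle :
    ContinuousOn (fun b : solidHandle m => radialProj b.1.1) {b | b.1.1 ≠ 0} :=
  continuousOn_radialProj.comp (by fun_prop) fun _ hb => hb

theorem mapsTo_radialProj_solidHandle :
    Set.MapsTo (fun b : solidHandle m => radialProj b.1.1) {b | b.1.1 ≠ 0} {0}ᶜ := fun _ hb =>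
  ne_zero_of_sqNorm_eq_one (sqNorm_radialProj hb)

include hn in
theorem continuousOn_straighten :
    ContinuousOn (straighten (m := m) n) (Set.univ ×ˢ {b | b.1.1 ≠ 0}) := by
  have hpolar : ContinuousOn (fun q : I × solidHandle m =>
      (radialProj q.2.1.1, ((q.1 : ℝ) * euclNorm q.2.1.1) • q.2.1.2))
      (Set.univ ×ˢ {b | b.1.1 ≠ 0}) :=
    (continuousOn_radialProj_solidHandle.comp continuousOn_snd fun q hq => hq.2).prodMk
      (by fun_prop)
  have h := (continuousOn_tubePoint hn).comp hpolar fun q hq =>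
    ⟨sqNorm_radialProj hq.2, normalSq_smul_lt_one q.1 q.2⟩
  exact continuous_fst.comp_continuousOn h

include hn in
theorem exists_pathCoboundary_eq_degreeCocycleMod (m : ℕ) :
    ∃ b : (I → solidHandle m) → UnitAddCircle, PathAdditiveOn Set.univ b ∧
      ∀ s, IsCubeIn {b | b.1.1 ≠ 0} s →
        degreeCocycleMod n (fun t => (handleMap n (s t).1).1) = pathCoboundary b s := by
  have hpower := (pathAdditiveOn_powerCochain hn).pullback
    (continuousOn_radialProj_solidHandle (m := m)) mapsTo_radialProj_solidHandle
  have hprism := (squareAdditiveOn_degreeCocycleMod (n := n)).pathAdditiveOn_homotopy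
    (continuousOn_straighten (m := m) hn) (mapsTo_straighten hn)
  obtain ⟨b, hb, hbU⟩ := PathAdditiveOn.exists_extension (PathAdditiveOn.add hpower hprism)
  refine ⟨b, hb, fun s hs => ?_⟩
  have hone : (fun t => (handleMap n (s t).1).1) = fun t => straighten n (1, s t) :=
    funext fun t => (straighten_one (s t)).symm
  have hzero : (fun t => straighten n (0, s t)) = powerMap n ∘ fun t => radialProj (s t).1.1 :=
    funext fun t => straighten_zero hn (hs.2 t)
  rw [hone, isCocycleOn_degreeCocycleMod.apply_homotopy (continuousOn_straighten hn)
      (mapsTo_straighten hn) hs, hzero,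
    degreeCocycleMod_powerMap_comp hn (s := fun t => radialProj (s t).1.1)
      (hs.comp_continuousOn continuousOn_radialProj_solidHandle mapsTo_radialProj_solidHandle),
    pathCoboundary_congr hbU hs]
  simp only [pathCoboundary, Function.comp_def]
  abel

theorem continuousOn_retractLeft_fst :
    ContinuousOn (fun p : SurgeredManifold m hn => (Glue.retractLeft p).1.1)
      (Set.range (Glue.inl (attachingMap m hn))) := by
  have := Glue.continuousOn_retractLeft (e := attachingMap m hn)
  fun_prop

theorem mapsTo_retractLeft_fst :
    Set.MapsTo (fun p : SurgeredManifold m hn => (Glue.retractLeft p).1.1)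
      (Set.range (Glue.inl (attachingMap m hn))) {0}ᶜ := fun p _ =>
  ne_zero_of_sqNorm_eq_one (Glue.retractLeft p).2.1.1

theorem exists_surgeredManifold_cocycle (m : ℕ) :
    ∃ c : (I × I → SurgeredManifold m hn) → UnitAddCircle,
      SquareAdditiveOn Set.univ c ∧ IsCocycleOn Set.univ c ∧
      ∀ s, IsCubeIn (Set.range (Glue.inl _)) s →
        c s = degreeCocycleMod n fun t => (Glue.retractLeft (s t)).1.1 := by
  obtain ⟨b, hb, hbs⟩ := exists_pathCoboundary_eq_degreeCocycleMod hn m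
  obtain ⟨c, hc, hcocycle, hcA, -⟩ := SquareAdditiveOn.exists_glue_cocycle
    (U := Set.range (Glue.inl (attachingMap m hn))) (V := Set.range (Glue.inr (attachingMap m hn)))
    Glue.isOpenEmbedding_inl.isOpen_range Glue.isOpenEmbedding_inr.isOpen_range
    (squareAdditiveOn_degreeCocycleMod.pullback (continuousOn_retractLeft_fst hn)
      (mapsTo_retractLeft_fst hn))
    (hb.squareAdditiveOn_pathCoboundary.pullback Glue.continuousOn_retractRight
      (Set.mapsTo_univ _ _))
    (isCocycleOn_degreeCocycleMod.pullback (continuousOn_retractLeft_fst hn)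
      (mapsTo_retractLeft_fst hn))
    ((isCocycleOn_pathCoboundary b).pullback Glue.continuousOn_retractRight (Set.mapsTo_univ _ _))
    fun s hA hB => by
      have hov (t : I × I) := Glue.retract_of_mem_range (hA.2 t) (hB.2 t)
      rw [← hbs (Glue.retractRight ∘ s)
        ⟨Glue.continuousOn_retractRight.comp_continuous hB.1 hB.2, fun t => (hov t).1⟩]
      refine congrArg (degreeCocycleMod n) (funext fun t => ?_)
      rw [Function.comp_apply, Function.comp_apply, ← (hov t).2, coe_attachingMap hn (hov t).1]
  rw [Glue.range_inl_union_range_inr] at hc hcocycle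
  exact ⟨c, hc, hcocycle, hcA⟩

end Cocycle

/-! ### Null-homotopies in the sphere complement -/

section NullHomotopy

variable {m n : ℕ}

/-- The projection of the total space of the pulled back Hopf fibration, with both factors thickened
radially, onto the sphere complement; meaningful off `singularSet m n`. -/
def totalProj (p : (ℂ × ℂ) × SphereFactor m) : (ℂ × ℝ) × SphereFactor m :=
  ((sqNorm p.1)⁻¹ • hopfMap p.1, (√(sphereSq p.2))⁻¹ • p.2)

theorem notMem_singularSet_iff {p : (ℂ × ℂ) × SphereFactor m} : p ∉ singularSet m n ↔
    0 < sqNorm p.1 ∧ 0 < √(sphereSq p.2) ∧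
      (p.2.2 = 0 → euclNorm p.2.1 • hopfMap p.1 ≠ sqNorm p.1 • powerMap n p.2.1) := by
  rw [sqNorm_pos_iff, Real.sqrt_pos, sphereSq_pos_iff]
  simp only [singularSet, Set.mem_union, Set.mem_ofPred_eq, not_or, not_and, and_assoc, ne_eq]

section

variable (hn : 0 < n)
include hn

theorem mapsTo_totalProj : Set.MapsTo totalProj (singularSet m n)ᶜ (sphereComplement m n) := by
  intro p hp
  obtain ⟨h1, h2, h3⟩ := notMem_singularSet_iff.1 hp
  refine ⟨⟨?_, ?_⟩, ?_⟩
  · rw [totalProj, sqNorm_smul, sqNorm_hopfMap, Real.norm_of_nonneg (inv_nonneg.2 h1.le), ← mul_pow,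
      inv_mul_cancel₀ h1.ne', one_pow]
  · rw [totalProj, sphereSq_smul, ← Real.sq_sqrt (Real.sqrt_pos.1 h2).le, Real.sqrt_sq h2.le,
      ← mul_pow, inv_mul_cancel₀ h2.ne', one_pow]
  · rintro ⟨hr, heq⟩
    have hr' : p.2.2 = 0 := (smul_eq_zero.1 hr).resolve_left (inv_pos.2 h2).ne'
    have hnorm : √(sphereSq p.2) = euclNorm p.2.1 := by
      rw [sphereSq_of_snd_eq_zero hr', euclNorm]
    simp only [totalProj, Prod.smul_fst, powerMap_smul hn (inv_pos.2 h2).le] at heq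
    rw [hnorm] at h2 heq
    refine h3 hr' ?_
    rw [inv_smul_eq_iff₀ h1.ne'] at heq
    rw [heq, smul_comm (sqNorm p.1), smul_inv_smul₀ h2.ne']

theorem continuousOn_toSubtype_totalProj :
    ContinuousOn (fun p => toSubtype (sphereComplement m n) (totalProj p)) (singularSet m n)ᶜ := by
  refine continuousOn_toSubtype (.prodMk ?_ ?_) (mapsTo_totalProj hn)
  · exact .smul (.inv₀ (by fun_prop) fun p hp => (notMem_singularSet_iff.1 hp).1.ne') (by fun_prop)
  · exact .smul (.inv₀ (by fun_prop) fun p hp => (notMem_singularSet_iff.1 hp).2.1.ne')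
      (by fun_prop)

end

section Fibre

variable {a : sphereComplement m n} {ξ : ℂ × ℂ} (hξ : sqNorm ξ = 1) (hξa : hopfMap ξ = a.1.1)
include hξ hξa

theorem notMem_singularSet_of_hopfMap_eq : (ξ, a.1.2) ∉ singularSet m n := by
  have hsphere := a.2.1.2
  refine notMem_singularSet_iff.2
    ⟨by rw [hξ]; exact one_pos, by rw [hsphere, Real.sqrt_one]; exact one_pos,
      fun hr heq => a.2.2 ⟨hr, ?_⟩⟩
  rwa [euclNorm_eq_one_iff.2 (sphereSq_of_snd_eq_zero hr ▸ hsphere), hξ, one_smul, one_smul,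
    hξa] at heq

theorem toSubtype_totalProj_of_hopfMap_eq :
    toSubtype (sphereComplement m n) (totalProj (ξ, a.1.2)) = a := by
  have h : totalProj (ξ, a.1.2) = a.1 := by
    rw [totalProj, hξ, hξa, a.2.1.2, Real.sqrt_one, inv_one, one_smul, one_smul]
  exact Subtype.ext (by rw [h, coe_toSubtype a.2])

end Fibre

section

variable (hn : 0 < n)
include hn

theorem joined_sphereComplement (a a' : sphereComplement m n) : Joined a a' := by
  obtain ⟨α, θ, -, h⟩ := exists_hopfMap_polarPoint_eq a.2.1.1
  obtain ⟨α', θ', -, h'⟩ := exists_hopfMap_polarPoint_eq a'.2.1.1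
  have J := ((isConeThin_singularSet (N := Fin 0) (by simp) hn).joinedIn
    (notMem_singularSet_of_hopfMap_eq (sqNorm_polarPoint α θ) h)
    (notMem_singularSet_of_hopfMap_eq (sqNorm_polarPoint α' θ') h')).map_continuousOn
      (continuousOn_toSubtype_totalProj hn)
  rw [toSubtype_totalProj_of_hopfMap_eq (sqNorm_polarPoint α θ) h,
    toSubtype_totalProj_of_hopfMap_eq (sqNorm_polarPoint α' θ') h'] at J
  exact J.joined

theorem IsBasedAt.homotopicThrough_const_of_isHopfLift {N : Type*} [Fintype N] [Nonempty N]
    (hN : Fintype.card N ≤ 2) {a : sphereComplement m n}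
    {f : (N → I) → sphereComplement m n} (hf : Continuous f) (hb : IsBasedAt a f)
    {G : (N → I) → ℂ × ℂ} (hG : IsHopfLift (fun t => (f t).1.1) G) (hGb : IsBasedAt hopfBase G) :
    HomotopicThrough (IsBasedAt a) f (fun _ => a) := by
  classical
  have hcont : Continuous fun t => (G t, (f t).1.2) := hG.continuous.prodMk (by fun_prop)
  obtain ⟨y, H⟩ := IsConeThin.exists_homotopicThrough_const (isClosed_singularSet hn)
    (isConeThin_singularSet (m := m) hN hn) (x := (hopfBase, a.1.2)) hcont
    (fun t ht => by rw [hGb t ht, hb t ht])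
    fun t => notMem_singularSet_of_hopfMap_eq (hG.sqNorm_eq t) (hG.hopfMap_eq t)
  have hproj : ((fun p => toSubtype (sphereComplement m n) (totalProj p)) ∘
      fun t => (G t, (f t).1.2)) = f :=
    funext fun t => toSubtype_totalProj_of_hopfMap_eq (hG.sqNorm_eq t) (hG.hopfMap_eq t)
  have H' := H.map (continuousOn_toSubtype_totalProj hn)
    (P' := fun f => IsConstOnBoundary f ∧ ∀ t, f t ∈ Set.univ) (fun f hf => hf.2)
    fun f hf => ⟨fun t ht t' ht' => by
      rw [Function.comp_apply, hf.1 t ht t' ht', Function.comp_apply], fun _ => trivial⟩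
  rw [hproj] at H'
  exact (hb.homotopicThrough_const H').mono fun f hf => hf.1

theorem IsBasedAt.homotopicThrough_const_loop {a : sphereComplement m n} (ha : a.1.1 = southPole)
    {f : (Fin 1 → I) → sphereComplement m n} (hf : Continuous f) (hb : IsBasedAt a f) :
    HomotopicThrough (IsBasedAt a) f (fun _ => a) := by
  obtain ⟨G, hG, h0, h1⟩ := exists_isHopfLift_loop (f := fun t => (f fun _ => t).1.1)
    (by fun_prop) (fun t => (f _).2.1.1) (by rw [hb _ ⟨0, .inl rfl⟩, ha])
    (by rw [hb _ ⟨0, .inr rfl⟩, ha])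
  have hconst (t : Fin 1 → I) : (fun _ => t 0) = t :=
    funext fun i => congrArg t (Subsingleton.elim 0 i)
  refine hb.homotopicThrough_const_of_isHopfLift hn (by simp) hf (G := fun t => G (t 0))
    ⟨hG.continuous.comp (by fun_prop), fun t => hG.sqNorm_eq _,
      fun t => by rw [hG.hopfMap_eq, hconst]⟩ ?_
  rintro t ⟨i, hi⟩
  rw [Subsingleton.elim i 0] at hi
  rcases hi with hi | hi <;> simp only [hi, h0, h1]

end

theorem toSquare_apply {X : Type*} (f : (Fin 2 → I) → X) (t : Fin 2 → I) :
    toSquare f (t 0, t 1) = f t :=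
  congrArg f (List.ofFn_inj.1 rfl)

theorem IsBasedAt.isSquareBasedAt {X Y : Type*} {x : X} {f : (Fin 2 → I) → X} (hf : IsBasedAt x f)
    (g : X → Y) : IsSquareBasedAt (g x) fun t => g (toSquare f t) where
  zero_left _ := congrArg g (hf _ (mem_boundary_fst (.inl rfl)))
  one_left _ := congrArg g (hf _ (mem_boundary_fst (.inr rfl)))
  zero_right _ := congrArg g (hf _ (mem_boundary_snd (.inl rfl)))
  one_right _ := congrArg g (hf _ (mem_boundary_snd (.inr rfl)))

theorem IsSquareBasedAt.isBasedAt {X : Type*} {x : X} {f : I × I → X} (hf : IsSquareBasedAt x f) :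
    IsBasedAt x fun t : Fin 2 → I => f (t 0, t 1) := by
  rintro t ⟨i, hi⟩
  fin_cases i
  · rcases hi with hi | hi
    · exact (congrArg (fun s => f (s, t 1)) hi).trans (hf.zero_left _)
    · exact (congrArg (fun s => f (s, t 1)) hi).trans (hf.one_left _)
  · rcases hi with hi | hi
    · exact (congrArg (fun s => f (t 0, s)) hi).trans (hf.zero_right _)
    · exact (congrArg (fun s => f (t 0, s)) hi).trans (hf.one_right _)

section Square

variable {a : sphereComplement m n} (ha : a.1.1 = southPole)
  {f : (Fin 2 → I) → sphereComplement m n} (hf : Continuous f) (hb : IsBasedAt a f)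
include ha hf hb

theorem exists_degreeCocycle_toSquare_eq_intCast :
    ∃ k : ℤ, degreeCocycle (fun t => (toSquare f t).1.1) = k := by
  have := continuous_toSquare hf
  exact exists_degreeCocycle_eq_intCast (by fun_prop) (fun t => (toSquare f t).2.1.1)
    (ha ▸ hb.isSquareBasedAt fun a => a.1.1)

theorem IsBasedAt.homotopicThrough_const_of_degreeCocycle_eq_zero (hn : 0 < n)
    (hdeg : degreeCocycle (fun t => (toSquare f t).1.1) = 0) :
    HomotopicThrough (IsBasedAt a) f (fun _ => a) := by
  have := continuous_toSquare hf
  obtain ⟨G, hG, hGb⟩ := exists_isHopfLift_square (by fun_prop) (fun t => (toSquare f t).2.1.1)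
    (ha ▸ hb.isSquareBasedAt fun a => a.1.1) hdeg
  exact hb.homotopicThrough_const_of_isHopfLift hn (by simp) hf (G := fun t => G (t 0, t 1))
    ⟨hG.continuous.comp (by fun_prop), fun t => hG.sqNorm_eq _,
      fun t => by rw [hG.hopfMap_eq, toSquare_apply]⟩ hGb.isBasedAt

end Square

variable (hn : 0 < n)

theorem exists_joined_inl (x : SurgeredManifold m hn) :
    ∃ a, Joined (Glue.inl (attachingMap m hn) a) x := by
  induction x using Glue.induction with
  | hl a => exact ⟨a, .refl _⟩
  | hr b hb =>
    rw [notMem_attachingMap_source] at hb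
    have hmem (s : I) : (((s : ℝ) / 4) • southPole, b.1.2) ∈ solidHandle m := by
      refine ⟨?_, b.2.2⟩
      rw [sqNorm_smul, Real.norm_eq_abs, sq_abs,
        show sqNorm southPole = 1 by simp [sqNorm, southPole]]
      nlinarith [s.2.1, s.2.2]
    have hne : (⟨_, hmem 1⟩ : solidHandle m) ∈ (attachingMap m hn).source := by
      rw [mem_attachingMap_source]
      simp [southPole]
    refine ⟨attachingMap m hn ⟨_, hmem 1⟩, ?_⟩
    rw [← Glue.inr_eq_inl hne]
    have := Glue.continuous_inr (e := attachingMap m hn)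
    refine Joined.symm ⟨⟨⟨fun s => Glue.inr _ ⟨_, hmem s⟩, by fun_prop⟩, ?_, rfl⟩⟩
    exact congrArg (Glue.inr _) (Subtype.ext (Prod.ext (by simp [hb]) rfl))

theorem joined_surgeredManifold (x y : SurgeredManifold m hn) : Joined x y := by
  obtain ⟨a, ha⟩ := exists_joined_inl hn x
  obtain ⟨a', ha'⟩ := exists_joined_inl hn y
  exact ha.symm.trans (((joined_sphereComplement hn a a').map Glue.continuous_inl).trans ha')

end NullHomotopy

/-! ### Pushing cubes off the core of the handle -/

section Push

/-- A cutoff function on the line, equal to `1` up to `1/16` and to `0` from `1/8` on. -/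
def cutoff (r : ℝ) : ℝ := max 0 (min 1 (2 - 16 * r))

@[fun_prop]
theorem continuous_cutoff : Continuous cutoff := by
  unfold cutoff
  fun_prop

theorem cutoff_nonneg (r : ℝ) : 0 ≤ cutoff r := le_max_left _ _

theorem cutoff_le_one (r : ℝ) : cutoff r ≤ 1 := max_le zero_le_one (min_le_left _ _)

theorem cutoff_of_le {r : ℝ} (h : 1 / 8 ≤ r) : cutoff r = 0 :=
  max_eq_left ((min_le_right _ _).trans (by linarith))

theorem cutoff_of_ge {r : ℝ} (h : r ≤ 1 / 16) : cutoff r = 1 := by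
  rw [cutoff, min_eq_left (by linarith), max_eq_right zero_le_one]

section Normed

variable {E : Type*} [NormedAddCommGroup E] [NormedSpace ℝ E] {x h : E}

theorem norm_add_smul_sub_lt (hh : ‖h - cutoff ‖x‖ • x‖ < 1 / 64) (hx : ‖x‖ ≤ 1 / 8) {s : ℝ}
    (hs : s ∈ I) : ‖x + (s * cutoff ‖x‖) • (h - x)‖ < 9 / 64 := by
  have hh' : ‖h‖ < 9 / 64 := by
    have h1 := norm_add_le (h - cutoff ‖x‖ • x) (cutoff ‖x‖ • x)
    rw [sub_add_cancel, norm_smul _ x, Real.norm_of_nonneg (cutoff_nonneg _)] at h1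
    linarith [mul_le_of_le_one_left (norm_nonneg x) (cutoff_le_one ‖x‖)]
  exact mem_ball_zero_iff.1 ((convex_ball (0 : E) (9 / 64)).add_smul_sub_mem
    (mem_ball_zero_iff.2 (by linarith)) (mem_ball_zero_iff.2 hh')
    ⟨mul_nonneg hs.1 (cutoff_nonneg _), mul_le_one₀ hs.2 (cutoff_nonneg _) (cutoff_le_one _)⟩)

theorem add_cutoff_smul_sub_ne_zero (h0 : h ≠ 0) (hh : ‖h - cutoff ‖x‖ • x‖ < 1 / 64) :
    x + cutoff ‖x‖ • (h - x) ≠ 0 := by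
  intro hz
  rcases le_or_gt ‖x‖ (1 / 16) with hx | hx
  · rw [cutoff_of_ge hx, one_smul, add_sub_cancel] at hz
    exact h0 hz
  · have hc0 := cutoff_nonneg ‖x‖
    have hc1 := cutoff_le_one ‖x‖
    generalize cutoff ‖x‖ = c at *
    have hbalance : (1 - c + c ^ 2) • x = -(c • (h - c • x)) := by
      rw [eq_neg_iff_add_eq_zero, ← hz]
      module
    have hnorm := congrArg norm hbalance
    rw [norm_neg, norm_smul, norm_smul, Real.norm_of_nonneg (by nlinarith),
      Real.norm_of_nonneg hc0] at hnorm
    nlinarith [sq_nonneg (c - 1 / 2), norm_nonneg (h - c • x)]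

end Normed

variable {m n : ℕ}

/-- The point of `ℝ³ × S^(m+3)` obtained by moving the ball coordinate of `q` towards `h`, at time
`s`, as far as the cutoff allows. -/
def moveBallCoord (s : ℝ) (h : ℂ × ℝ) (q : (ℂ × ℝ) × NormalSpace m) : (ℂ × ℝ) × NormalSpace m :=
  (q.1 + (s * cutoff ‖q.1‖) • (h - q.1), q.2)

theorem moveBallCoord_eq_self {s : ℝ} {h : ℂ × ℝ} {q : (ℂ × ℝ) × NormalSpace m}
    (hs : s * cutoff ‖q.1‖ = 0) : moveBallCoord s h q = q := by
  rw [moveBallCoord, hs, zero_smul, add_zero]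

theorem moveBallCoord_mem_solidHandle {s : ℝ} (hs : s ∈ I) {h : ℂ × ℝ} (b : solidHandle m)
    (hh : ‖h - cutoff ‖b.1.1‖ • b.1.1‖ < 1 / 64) : moveBallCoord s h b.1 ∈ solidHandle m := by
  rcases le_or_gt ‖b.1.1‖ (1 / 8) with hb | hb
  · refine ⟨(sqNorm_le _).trans_lt ?_, b.2.2⟩
    have := pow_lt_pow_left₀ (norm_add_smul_sub_lt hh hb hs) (norm_nonneg _) two_ne_zero
    rw [moveBallCoord]
    linarith
  · rw [moveBallCoord_eq_self (by rw [cutoff_of_le hb.le, mul_zero])]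
    exact b.2

variable (hn : 0 < n)

/-- The closed neighbourhood of radius `1/8` of the core of the handle. -/
def coreNbhd (m : ℕ) : Set (SurgeredManifold m hn) := Glue.inr _ '' {b | ‖b.1.1‖ ≤ 1 / 8}

theorem isClosed_coreNbhd : IsClosed (coreNbhd hn m) := by
  have := t2Space_surgeredManifold (m := m) hn
  refine IsCompact.isClosed (.image ?_ Glue.continuous_inr)
  rw [IsInducing.subtypeVal.isCompact_iff]
  convert (isCompact_closedBall (0 : ℂ × ℝ) (1 / 8)).prod
    (isCompact_setOf_normalSq_eq_one (m := m)) using 1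
  ext q
  constructor
  · rintro ⟨b, hb, rfl⟩
    exact ⟨mem_closedBall_zero_iff.2 hb, b.2.2⟩
  · rintro ⟨hx, hv⟩
    have hx' := mem_closedBall_zero_iff.1 hx
    refine ⟨⟨q, ?_, hv⟩, hx', rfl⟩
    have := pow_le_pow_left₀ (norm_nonneg _) hx' 2
    linarith [sqNorm_le q.1]

theorem cutoff_of_notMem_coreNbhd {b : solidHandle m} (hb : Glue.inr _ b ∉ coreNbhd hn m) :
    cutoff ‖b.1.1‖ = 0 :=
  cutoff_of_le (le_of_lt (not_le.1 fun h => hb ⟨b, h, rfl⟩))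

theorem range_inr_union_compl_coreNbhd :
    Set.range (Glue.inr (attachingMap m hn)) ∪ (coreNbhd hn m)ᶜ = Set.univ :=
  Set.compl_subset_iff_union.1 (Set.compl_subset_compl.2 (Set.image_subset_range _ _))

theorem continuous_of_continuousOn_handle {T Y : Type*} [TopologicalSpace T] [TopologicalSpace Y]
    {p : T → SurgeredManifold m hn} (hp : Continuous p) {F : T → Y}
    (hB : ContinuousOn F (p ⁻¹' Set.range (Glue.inr _)))
    (hcore : ContinuousOn F (p ⁻¹' (coreNbhd hn m)ᶜ)) : Continuous F := by
  have h := hB.union_of_isOpen hcore (Glue.isOpenEmbedding_inr.isOpen_range.preimage hp)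
    ((isClosed_coreNbhd hn).isOpen_compl.preimage hp)
  rwa [← Set.preimage_union, range_inr_union_compl_coreNbhd, Set.preimage_univ,
    continuousOn_univ] at h

open Classical in
/-- The ball coordinate of a point of the handle, cut off so that it extends by zero. -/
def cutoffCoord (p : SurgeredManifold m hn) : ℂ × ℝ :=
  if p ∈ Set.range (Glue.inr (attachingMap m hn)) then
    cutoff ‖(Glue.retractRight p).1.1‖ • (Glue.retractRight p).1.1
  else 0

theorem cutoffCoord_inr (b : solidHandle m) :
    cutoffCoord hn (Glue.inr _ b) = cutoff ‖b.1.1‖ • b.1.1 := by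
  rw [cutoffCoord, if_pos ⟨b, rfl⟩, Glue.retractRight_inr]

theorem cutoffCoord_of_notMem_coreNbhd {p : SurgeredManifold m hn} (hp : p ∉ coreNbhd hn m) :
    cutoffCoord hn p = 0 := by
  rw [cutoffCoord]
  split_ifs with h
  · obtain ⟨b, rfl⟩ := h
    rw [Glue.retractRight_inr, cutoff_of_notMem_coreNbhd hn hp, zero_smul]
  · rfl

theorem continuous_cutoffCoord : Continuous (cutoffCoord (m := m) hn) := by
  refine continuous_of_continuousOn_handle hn continuous_id ?_ ?_
  · have h := Glue.continuousOn_retractRight (e := attachingMap m hn)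
    have hcut : ContinuousOn (fun p => cutoff ‖(Glue.retractRight p).1.1‖ •
        (Glue.retractRight p).1.1) (Set.range (Glue.inr (attachingMap m hn))) := by fun_prop
    exact hcut.congr fun p hp => if_pos hp
  · exact continuousOn_const.congr fun p hp => cutoffCoord_of_notMem_coreNbhd hn hp

open Classical in
/-- Moves the ball coordinate of points near the core of the handle towards `h`, at time `s`. -/
def pushOff (s : ℝ) (h : ℂ × ℝ) (p : SurgeredManifold m hn) : SurgeredManifold m hn :=
  if p ∈ Set.range (Glue.inr (attachingMap m hn)) then
    Glue.inr _ (toSubtype _ (moveBallCoord s h (Glue.retractRight p).1))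
  else p

theorem pushOff_inr (s : ℝ) (h : ℂ × ℝ) (b : solidHandle m) :
    pushOff hn s h (Glue.inr _ b) = Glue.inr _ (toSubtype _ (moveBallCoord s h b.1)) := by
  rw [pushOff, if_pos ⟨b, rfl⟩, Glue.retractRight_inr]

theorem pushOff_inr_eq_self {s : ℝ} (h : ℂ × ℝ) {b : solidHandle m}
    (hs : s * cutoff ‖b.1.1‖ = 0) : pushOff hn s h (Glue.inr _ b) = Glue.inr _ b := by
  rw [pushOff_inr, moveBallCoord_eq_self hs]
  exact congrArg _ (Subtype.ext (coe_toSubtype b.2))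

theorem pushOff_zero (h : ℂ × ℝ) (p : SurgeredManifold m hn) : pushOff hn 0 h p = p := by
  by_cases hp : p ∈ Set.range (Glue.inr (attachingMap m hn))
  · obtain ⟨b, rfl⟩ := hp
    exact pushOff_inr_eq_self hn h (zero_mul _)
  · exact if_neg hp

theorem pushOff_of_notMem_coreNbhd (s : ℝ) (h : ℂ × ℝ) {p : SurgeredManifold m hn}
    (hp : p ∉ coreNbhd hn m) : pushOff hn s h p = p := by
  by_cases hB : p ∈ Set.range (Glue.inr (attachingMap m hn))
  · obtain ⟨b, rfl⟩ := hB
    exact pushOff_inr_eq_self hn h (by rw [cutoff_of_notMem_coreNbhd hn hp, mul_zero])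
  · exact if_neg hB

theorem pushOff_one_mem_range_inl {h : ℂ × ℝ} (h0 : h ≠ 0) {p : SurgeredManifold m hn}
    (hh : ‖h - cutoffCoord hn p‖ < 1 / 64) : pushOff hn 1 h p ∈ Set.range (Glue.inl _) := by
  by_cases hp : p ∈ Set.range (Glue.inr (attachingMap m hn))
  · obtain ⟨b, rfl⟩ := hp
    rw [cutoffCoord_inr] at hh
    rw [pushOff_inr, Glue.inr_eq_inl]
    · exact ⟨_, rfl⟩
    rw [mem_attachingMap_source, coe_toSubtype (moveBallCoord_mem_solidHandle
      (Set.right_mem_Icc.2 zero_le_one) b hh), moveBallCoord, one_mul]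
    exact add_cutoff_smul_sub_ne_zero h0 hh
  · rw [pushOff, if_neg hp]
    exact (Glue.range_inl_union_range_inr.ge (Set.mem_univ p)).resolve_right hp

theorem continuous_pushOff {T : Type*} [TopologicalSpace T] {s : T → I} {h : T → ℂ × ℝ}
    {p : T → SurgeredManifold m hn} (hs : Continuous s) (hh : Continuous h) (hp : Continuous p)
    (hclose : ∀ t, ‖h t - cutoffCoord hn (p t)‖ < 1 / 64) :
    Continuous fun t => pushOff hn (s t) (h t) (p t) := by
  refine continuous_of_continuousOn_handle hn hp ?_
    (hp.continuousOn.congr fun t ht => pushOff_of_notMem_coreNbhd hn _ _ ht)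
  have hr : ContinuousOn (fun t => Glue.retractRight (p t)) (p ⁻¹' Set.range (Glue.inr _)) :=
    Glue.continuousOn_retractRight.comp hp.continuousOn fun t ht => ht
  have hmove : ContinuousOn (fun t => moveBallCoord (s t) (h t) (Glue.retractRight (p t)).1)
      (p ⁻¹' Set.range (Glue.inr _)) := by
    unfold moveBallCoord
    fun_prop
  refine (Glue.continuous_inr.comp_continuousOn (continuousOn_toSubtype hmove ?_)).congr
    fun t ht => if_pos ht
  rintro t ⟨b, hb⟩
  have hb' := hclose t
  rw [← hb, cutoffCoord_inr] at hb'
  simp only [← hb, Glue.retractRight_inr]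
  exact moveBallCoord_mem_solidHandle (s t).2 b hb'

theorem IsBasedAt.exists_homotopicThrough_range_inl {N : Type*} [Fintype N]
    (hN : Fintype.card N ≤ 2) {p : SurgeredManifold m hn} (hp : p ∉ coreNbhd hn m)
    {f : (N → I) → SurgeredManifold m hn} (hf : Continuous f) (hb : IsBasedAt p f) :
    ∃ f', HomotopicThrough (IsBasedAt p) f f' ∧ ∀ t, f' t ∈ Set.range (Glue.inl _) := by
  have hrank : Module.finrank ℝ (ℂ × ℝ) = 3 := by
    rw [Module.finrank_prod, Complex.finrank_real_complex, Module.finrank_self]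
  obtain ⟨h, hh, happrox⟩ := exists_continuous_ne_zero_approx (by omega)
    ((continuous_cutoffCoord hn).comp hf) (ε := 1 / 64) (by norm_num)
  refine ⟨fun t => pushOff hn 1 (h t) (f t),
    ⟨fun q => pushOff hn q.1 (h q.2) (f q.2), ?_, fun t => pushOff_zero hn _ _, fun t => rfl,
      fun s t ht => ?_⟩,
    fun t => pushOff_one_mem_range_inl hn (happrox t).1 (happrox t).2⟩
  · exact continuous_pushOff hn continuous_fst (by fun_prop) (by fun_prop)
      fun q => (happrox q.2).2
  · simp only [hb t ht, pushOff_of_notMem_coreNbhd hn _ _ hp]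

end Push

/-! ### Homotopy classes and induced homomorphisms -/

section InducedMap

variable {N X Y : Type*} [TopologicalSpace X] [TopologicalSpace Y] {F : X → Y} {x : X}

/-- The class in the homotopy group of a based map of the cube. -/
def IsBasedAt.homotopyClass {f : (N → I) → X} (hb : IsBasedAt x f) (hf : Continuous f) :
    HomotopyGroup N X x :=
  Quotient.mk _ ⟨⟨f, hf⟩, hb⟩

theorem exists_homotopyClass_eq (a : HomotopyGroup N X x) :
    ∃ (f : (N → I) → X) (hb : IsBasedAt x f) (hf : Continuous f), hb.homotopyClass hf = a :=
  Quotient.inductionOn a fun f => ⟨f, f.2, f.1.continuous, rfl⟩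

/-- The image of a generalized loop under a continuous map. -/
def genLoopMap (hF : Continuous F) (f : GenLoop N X x) : GenLoop N Y (F x) :=
  ⟨⟨F ∘ f, hF.comp f.1.continuous⟩, fun t ht => congrArg F (f.2 t ht)⟩

variable [DecidableEq N]

theorem genLoopMap_transAt (hF : Continuous F) (i : N) (f g : GenLoop N X x) :
    genLoopMap hF (GenLoop.transAt i f g) =
      GenLoop.transAt i (genLoopMap hF f) (genLoopMap hF g) := by
  ext t
  change F (GenLoop.transAt i f g t) = _
  simp only [GenLoop.transAt, GenLoop.coe_copy]
  split_ifs <;> rfl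

variable [Nonempty N]

/-- The homomorphism of homotopy groups induced by a continuous map. -/
def homotopyGroupMap (hF : Continuous F) (x : X) :
    HomotopyGroup N X x →* HomotopyGroup N Y (F x) :=
  MonoidHom.mk'
    (Quotient.map (genLoopMap hF) fun _ _ h => h.comp_continuousMap ⟨F, hF⟩)
    (by
      refine fun a b => Quotient.inductionOn₂ a b fun f g => ?_
      have i : N := Classical.arbitrary N
      refine (congrArg (Quotient.map _ _)
        (HomotopyGroup.mul_spec (i := i) (p := f) (q := g))).trans ?_
      refine Eq.trans ?_ (HomotopyGroup.mul_spec (i := i)).symm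
      exact congrArg (Quotient.mk _) (genLoopMap_transAt hF i g f))

theorem homotopyGroupMap_homotopyClass (hF : Continuous F) {f : (N → I) → X}
    (hb : IsBasedAt x f) (hf : Continuous f) :
    homotopyGroupMap hF x (hb.homotopyClass hf) = (hb.comp F).homotopyClass (hF.comp hf) :=
  rfl

theorem homotopyClass_eq_one_iff {f : (N → I) → X} (hb : IsBasedAt x f) (hf : Continuous f) :
    hb.homotopyClass hf = 1 ↔ HomotopicThrough (IsBasedAt x) f fun _ => x :=
  Quotient.eq.trans (genLoop_homotopic_iff _ GenLoop.const)

section Evaluation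

variable {D : Type*} [AddCommGroup D] {c : (I × I → X) → D} (hadd : SquareAdditiveOn Set.univ c)
  (hcocycle : IsCocycleOn Set.univ c)

theorem piTwoEval_homotopyClass {f : (Fin 2 → I) → X} (hb : IsBasedAt x f) (hf : Continuous f) :
    piTwoEval hadd hcocycle x (hb.homotopyClass hf) = Multiplicative.ofAdd (c (toSquare f)) :=
  rfl

theorem piTwoEval_injective (h : ∀ f : (Fin 2 → I) → X, Continuous f → IsBasedAt x f →
    c (toSquare f) = 0 → HomotopicThrough (IsBasedAt x) f fun _ => x) :
    Function.Injective (piTwoEval hadd hcocycle x) := by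
  refine (injective_iff_map_eq_one _).2 fun a ha => ?_
  obtain ⟨f, hb, hf, rfl⟩ := exists_homotopyClass_eq a
  exact (homotopyClass_eq_one_iff hb hf).2 (h f hf hb ha)

end Evaluation

end InducedMap

/-! ### Generators -/

section Generators

/-- A map of the square to the unit sphere of `ℝ³`, constant on the boundary, of degree one. -/
def unitHopfSquare (t : Fin 2 → I) : ℂ × ℝ := hopfMap (radialProj (hopfSquare (t 0, t 1)))

@[fun_prop]
theorem continuous_unitHopfSquare : Continuous unitHopfSquare :=
  continuous_hopfMap.comp (continuousOn_radialProj.comp_continuous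
    (continuous_hopfSquare.comp (by fun_prop)) fun _ => isCubeIn_hopfSquare.2 _)

theorem unitHopfSquare_eq (t : Fin 2 → I) :
    unitHopfSquare t = (sqNorm (hopfSquare (t 0, t 1)))⁻¹ • hopfMap (hopfSquare (t 0, t 1)) :=
  hopfMap_radialProj _

theorem sqNorm_unitHopfSquare (t : Fin 2 → I) : sqNorm (unitHopfSquare t) = 1 := by
  rw [unitHopfSquare, sqNorm_hopfMap, sqNorm_radialProj (isCubeIn_hopfSquare.2 _), one_pow]

theorem isBasedAt_hopfMap_hopfSquare :
    IsBasedAt southPole fun t : Fin 2 → I => hopfMap (hopfSquare (t 0, t 1)) := by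
  rintro t ⟨i, hi⟩
  fin_cases i <;> rcases hi with hi | hi <;> simp only [Fin.zero_eta, Fin.mk_one] at hi
  · simpa only [hi, hopfSquare_zero_left, hopfBase] using hopfMap_hopfBase
  · simp only [hi, hopfSquare_one_left]
    simp [hopfMap, southPole, Complex.norm_exp]
  · simpa only [hi, hopfSquare_zero_right, hopfBase] using hopfMap_hopfBase
  · simpa only [hi, hopfSquare_one_right, hopfBase] using hopfMap_hopfBase

theorem sqNorm_southPole : sqNorm southPole = 1 := by simp [sqNorm, southPole]

theorem sqNorm_eq_one_of_hopfMap_eq_southPole {ξ : ℂ × ℂ} (h : hopfMap ξ = southPole) :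
    sqNorm ξ = 1 := by
  have hsq := sqNorm_hopfMap ξ
  rw [h, sqNorm_southPole] at hsq
  exact (pow_eq_one_iff_of_nonneg (sqNorm_nonneg _) two_ne_zero).1 hsq.symm

theorem isBasedAt_unitHopfSquare : IsBasedAt southPole unitHopfSquare := fun t ht => by
  have h : hopfMap (hopfSquare (t 0, t 1)) = southPole := isBasedAt_hopfMap_hopfSquare t ht
  rw [unitHopfSquare_eq, h, sqNorm_eq_one_of_hopfMap_eq_southPole h, inv_one, one_smul]

variable {n : ℕ}

theorem homotopicThrough_powerMap_unitHopfSquare (hn : 0 < n) :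
    HomotopicThrough (fun f => IsConstOnBoundary f ∧ ∀ t, f t ∈ ({0} : Set (ℂ × ℝ))ᶜ)
      (fun t => powerMap n (unitHopfSquare t))
      (fun t : Fin 2 → I => powerMap n (hopfMap (hopfSquare (t 0, t 1)))) := by
  have hpow := continuous_powerMap hn
  have hpos (t : Fin 2 → I) : 0 < (sqNorm (hopfSquare (t 0, t 1)))⁻¹ :=
    inv_pos.2 (sqNorm_pos_iff.2 (isCubeIn_hopfSquare.2 _))
  have hinv : Continuous fun q : I × (Fin 2 → I) => (sqNorm (hopfSquare (q.2 0, q.2 1)))⁻¹ :=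
    Continuous.inv₀ (by fun_prop) fun q => (inv_pos.1 (hpos q.2)).ne'
  refine ⟨fun q => powerMap n (((1 - (q.1 : ℝ)) * (sqNorm (hopfSquare (q.2 0, q.2 1)))⁻¹ + q.1) •
    hopfMap (hopfSquare (q.2 0, q.2 1))), by fun_prop, ?_, ?_, fun s => ⟨?_, ?_⟩⟩
  · intro t
    simp [unitHopfSquare_eq]
  · intro t
    simp
  · refine (show IsBasedAt (powerMap n southPole) _ from fun t ht => ?_).isConstOnBoundary
    have h := isBasedAt_hopfMap_hopfSquare t ht
    simp only [h, sqNorm_eq_one_of_hopfMap_eq_southPole h]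
    simp
  · refine fun t => mapsTo_powerMap hn (smul_ne_zero (ne_of_gt ?_)
      (mapsTo_hopfMap (isCubeIn_hopfSquare.2 _)))
    simpa using convex_Ioi (0 : ℝ) (hpos t) (Set.mem_Ioi.2 one_pos) (sub_nonneg.2 s.2.2) s.2.1
      (sub_add_cancel 1 (s : ℝ))

theorem degreeCocycle_powerMap_unitHopfSquare (hn : 0 < n) :
    degreeCocycle (toSquare fun t => powerMap n (unitHopfSquare t)) = n :=
  (apply_toSquare_eq_of_homotopicThrough squareAdditiveOn_degreeCocycle
    isCocycleOn_degreeCocycle (homotopicThrough_powerMap_unitHopfSquare hn)).trans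
      (degreeCocycle_powerMap_hopfMap_hopfSquare hn)

theorem powerMap_one (v : ℂ × ℝ) : powerMap 1 v = v := by simp [powerMap, normPow]

theorem powerMap_southPole (hn : 0 < n) : powerMap n southPole = southPole := by
  have h0 : normPow n 0 = 0 := by simpa using normPow_ofReal hn le_rfl
  simp [powerMap, southPole, h0]

end Generators

/-! ### The second homotopy group of the surgered manifold -/

section BasePoint

variable {m n : ℕ}

/-- The base point of the unit sphere of `NormalSpace m`. -/
def normalBase (m : ℕ) : NormalSpace m := (0, EuclideanSpace.single 0 1)

theorem mk_normalBase_mem_solidHandle {v : ℂ × ℝ} (hv : sqNorm v < 1 / 4) :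
    (v, normalBase m) ∈ solidHandle m :=
  ⟨hv, by simp [normalBase, normalSq, sqNorm]⟩

theorem handleMap_smul_normalBase (hn : 0 < n) {r : ℝ} (hr : 0 < r) {u : ℂ × ℝ}
    (hu : sqNorm u = 1) : handleMap n (r • u, normalBase m) =
      (powerMap n u, √(1 - r ^ 2) • u, 0, r • EuclideanSpace.single 0 1) := by
  have hpow : sqNorm (powerMap n u) = 1 := (sqNorm_powerMap hn u).trans hu
  simp only [handleMap, tubePoint, normalBase, radialProj_smul hr hu, euclNorm_smul hr.le,
    euclNorm_eq_one_iff.2 hu, Prod.smul_fst, Prod.smul_snd, smul_zero, add_zero,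
    radialProj_eq_self hpow, euclNorm_eq_one_iff.2 hpow, mul_one, sub_self]
  simp [norm_smul]

theorem sqNorm_smul_lt_quarter {r : ℝ} (hr : r ∈ I) {u : ℂ × ℝ} (hu : sqNorm u = 1) :
    sqNorm ((r / 4) • u) < 1 / 4 := by
  rw [sqNorm_smul, hu, Real.norm_eq_abs, sq_abs]
  nlinarith [hr.1, hr.2]

/-- The point of the handle at distance `r / 4` from the core, in the direction of a point of the
unit sphere of `ℝ³`. -/
def handlePoint (m : ℕ) (r : I) (u : {u : ℂ × ℝ // sqNorm u = 1}) : solidHandle m :=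
  ⟨(((r : ℝ) / 4) • u.1, normalBase m),
    mk_normalBase_mem_solidHandle (sqNorm_smul_lt_quarter r.2 u.2)⟩

@[fun_prop]
theorem continuous_handlePoint {T : Type*} [TopologicalSpace T] {r : T → I}
    {u : T → {u : ℂ × ℝ // sqNorm u = 1}} (hr : Continuous r) (hu : Continuous u) :
    Continuous fun t => handlePoint m (r t) (u t) := by
  unfold handlePoint
  fun_prop

theorem handlePoint_one_fst_ne_zero (u : {u : ℂ × ℝ // sqNorm u = 1}) :
    (handlePoint m 1 u).1.1 ≠ 0 :=
  smul_ne_zero (by norm_num) (ne_zero_of_sqNorm_eq_one u.2)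

variable (hn : 0 < n)

theorem coe_attachingMap_handlePoint (u : {u : ℂ × ℝ // sqNorm u = 1}) :
    (attachingMap m hn (handlePoint m 1 u) : (ℂ × ℝ) × SphereFactor m) =
      (powerMap n u, √(1 - (1 / 4) ^ 2) • u.1, 0, (1 / 4 : ℝ) • EuclideanSpace.single 0 1) :=
  (coe_attachingMap hn (handlePoint_one_fst_ne_zero u)).trans
    (handleMap_smul_normalBase hn (by norm_num) u.2)

/-- The base point of the sphere complement, which lies in the image of the attaching map. -/
def complementBase (m : ℕ) {n : ℕ} (hn : 0 < n) : sphereComplement m n :=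
  attachingMap m hn (handlePoint m 1 ⟨southPole, sqNorm_southPole⟩)

theorem complementBase_fst : (complementBase m hn).1.1 = southPole :=
  (congrArg Prod.fst (coe_attachingMap_handlePoint hn _)).trans (powerMap_southPole hn)

theorem mk_complementBase_mem_sphereComplement {u : ℂ × ℝ} (hu : sqNorm u = 1) :
    (u, (complementBase m hn).1.2) ∈ sphereComplement m n := by
  refine ⟨⟨hu, (complementBase m hn).2.1.2⟩, fun h => ?_⟩
  have h0 : (complementBase m hn).1.2.2.2 = 0 := congrArg Prod.snd h.1
  rw [complementBase, coe_attachingMap_handlePoint] at h0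
  simpa using congrArg norm h0

/-- The base point of the surgered manifold. -/
def surgeredBase (m : ℕ) {n : ℕ} (hn : 0 < n) : SurgeredManifold m hn :=
  Glue.inl _ (complementBase m hn)

theorem inr_handlePoint_one (u : {u : ℂ × ℝ // sqNorm u = 1}) :
    Glue.inr (attachingMap m hn) (handlePoint m 1 u) =
      Glue.inl _ (attachingMap m hn (handlePoint m 1 u)) :=
  Glue.inr_eq_inl ((mem_attachingMap_source hn).2 (handlePoint_one_fst_ne_zero u))

theorem surgeredBase_notMem_coreNbhd : surgeredBase m hn ∉ coreNbhd hn m := by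
  rintro ⟨b, hb, h⟩
  rw [surgeredBase, complementBase, ← inr_handlePoint_one] at h
  rw [Glue.inr_injective h] at hb
  norm_num [handlePoint, norm_smul, southPole, Prod.norm_def] at hb

end BasePoint

section Nullhomotopy

variable {m n : ℕ} (hn : 0 < n)

theorem IsBasedAt.exists_homotopicThrough_inl_comp {N : Type*} [Fintype N]
    (hN : Fintype.card N ≤ 2) {f : (N → I) → SurgeredManifold m hn} (hf : Continuous f)
    (hb : IsBasedAt (surgeredBase m hn) f) :
    ∃ g : (N → I) → sphereComplement m n, Continuous g ∧ IsBasedAt (complementBase m hn) g ∧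
      HomotopicThrough (IsBasedAt (surgeredBase m hn)) f (Glue.inl _ ∘ g) := by
  obtain ⟨f', H, hrange⟩ :=
    hb.exists_homotopicThrough_range_inl hn hN (surgeredBase_notMem_coreNbhd hn) hf
  obtain ⟨hb', hf'⟩ := H.right
  refine ⟨fun t => Glue.retractLeft (f' t),
    Glue.continuousOn_retractLeft.comp_continuous hf' hrange, fun t ht => ?_, ?_⟩
  · simp only [hb' t ht, surgeredBase, Glue.retractLeft_inl]
  · convert H using 1
    ext1 t
    obtain ⟨a, ha⟩ := hrange t
    simp only [Function.comp_apply, ← ha, Glue.retractLeft_inl]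

theorem HomotopicThrough.inl_comp {N : Type*} {f g : (N → I) → sphereComplement m n}
    (H : HomotopicThrough (IsBasedAt (complementBase m hn)) f g) :
    HomotopicThrough (IsBasedAt (surgeredBase m hn)) (Glue.inl (attachingMap m hn) ∘ f)
      (Glue.inl _ ∘ g) :=
  H.map Glue.continuous_inl.continuousOn (U := Set.univ) (fun _ _ _ => Set.mem_univ _)
    fun _ hf => hf.comp _

theorem homotopicThrough_const_loop_surgeredManifold {f : (Fin 1 → I) → SurgeredManifold m hn}
    (hf : Continuous f) (hb : IsBasedAt (surgeredBase m hn) f) :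
    HomotopicThrough (IsBasedAt (surgeredBase m hn)) f fun _ => surgeredBase m hn := by
  obtain ⟨g, hg, hgb, H⟩ := hb.exists_homotopicThrough_inl_comp hn (by simp) hf
  exact H.trans ((hgb.homotopicThrough_const_loop hn (complementBase_fst hn) hg).inl_comp hn)

theorem IsBasedAt.homotopicThrough_const_of_joined {N X : Type*} [Finite N] [Nonempty N]
    [TopologicalSpace X] {x y : X} (hxy : Joined x y) {P : ((N → I) → X) → Prop}
    (hnull : ∀ f, Continuous f → IsBasedAt x f → P f →
      HomotopicThrough (IsBasedAt x) f fun _ => x)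
    (hP : ∀ f g, HomotopicThrough IsConstOnBoundary f g → P g → P f)
    {f : (N → I) → X} (hf : Continuous f) (hb : IsBasedAt y f) (hPf : P f) :
    HomotopicThrough (IsBasedAt y) f fun _ => y := by
  obtain ⟨f', hb', H⟩ := hb.exists_homotopicThrough_of_path hf hxy.some
  have hfree : HomotopicThrough IsConstOnBoundary f fun _ => x :=
    H.symm.trans ((hnull f' H.left.2 hb' (hP _ _ H hPf)).mono
      fun _ hf => hf.isConstOnBoundary)
  exact (hb.homotopicThrough_const (A := Set.univ) (hfree.mono
    fun _ hf => ⟨hf, fun _ => Set.mem_univ _⟩)).mono fun _ hf => hf.1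

theorem simplyConnectedSpace_surgeredManifold :
    SimplyConnectedSpace (SurgeredManifold m hn) := by
  rw [simply_connected_iff_loops_nullhomotopic]
  refine ⟨⟨⟨surgeredBase m hn⟩, joined_surgeredManifold hn⟩, fun x γ => ?_⟩
  have hb : IsBasedAt x fun t : Fin 1 → I => γ (t 0) := by
    rintro t ⟨i, hi⟩
    rw [Subsingleton.elim i 0] at hi
    rcases hi with hi | hi <;> simp [hi]
  obtain ⟨H, hH, h0, h1, hP⟩ := IsBasedAt.homotopicThrough_const_of_joined
    (joined_surgeredManifold hn (surgeredBase m hn) x) (P := fun _ => True)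
    (fun f hf hb _ => homotopicThrough_const_loop_surgeredManifold hn hf hb)
    (fun _ _ _ _ => trivial) (γ.continuous.comp (continuous_apply 0)) hb trivial
  refine ⟨⟨⟨⟨fun p => H (p.1, fun _ => p.2), by fun_prop⟩, fun _ => h0 _, fun _ => h1 _⟩, ?_⟩⟩
  rintro s t ht
  have ht' : t = 0 ∨ t = 1 := by simpa using ht
  refine (hP s (fun _ => t) ⟨0, ht'⟩).trans ?_
  rcases ht' with rfl | rfl <;> simp

end Nullhomotopy

section ComplementDegree

variable {m n : ℕ}

/-- The degree cocycle of the first factor, as a cochain on the sphere complement. -/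
def complementCocycle (s : I × I → sphereComplement m n) : ℝ := degreeCocycle fun t => (s t).1.1

theorem squareAdditiveOn_complementCocycle :
    SquareAdditiveOn Set.univ (complementCocycle (m := m) (n := n)) :=
  squareAdditiveOn_degreeCocycle.pullback (f := fun a : sphereComplement m n => a.1.1)
    (by fun_prop) fun a _ => ne_zero_of_sqNorm_eq_one a.2.1.1

theorem isCocycleOn_complementCocycle :
    IsCocycleOn Set.univ (complementCocycle (m := m) (n := n)) :=
  isCocycleOn_degreeCocycle.pullback (f := fun a : sphereComplement m n => a.1.1)
    (by fun_prop) fun a _ => ne_zero_of_sqNorm_eq_one a.2.1.1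

variable (hn : 0 < n)

theorem exists_complementCocycle_eq_one (m : ℕ) :
    ∃ g : (Fin 2 → I) → sphereComplement m n, Continuous g ∧ IsBasedAt (complementBase m hn) g ∧
      complementCocycle (toSquare g) = 1 := by
  refine ⟨fun t => ⟨(unitHopfSquare t, (complementBase m hn).1.2),
      mk_complementBase_mem_sphereComplement hn (sqNorm_unitHopfSquare t)⟩, by fun_prop,
    fun t ht => Subtype.ext (Prod.ext ?_ rfl), ?_⟩
  · exact (isBasedAt_unitHopfSquare t ht).trans (complementBase_fst hn).symm
  · have h := degreeCocycle_powerMap_unitHopfSquare one_pos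
    simp only [powerMap_one, Nat.cast_one] at h
    exact h

/-- The map `unitHopfSquare`, with values in the unit sphere. -/
def unitSphereSquare (t : Fin 2 → I) : {u : ℂ × ℝ // sqNorm u = 1} :=
  ⟨unitHopfSquare t, sqNorm_unitHopfSquare t⟩

@[fun_prop]
theorem continuous_unitSphereSquare : Continuous unitSphereSquare :=
  continuous_unitHopfSquare.subtype_mk _

theorem isBasedAt_unitSphereSquare :
    IsBasedAt ⟨southPole, sqNorm_southPole⟩ unitSphereSquare :=
  fun t ht => Subtype.ext (isBasedAt_unitHopfSquare t ht)

theorem homotopicThrough_const_inl_attachingMap :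
    HomotopicThrough (IsBasedAt (surgeredBase m hn))
      (Glue.inl _ ∘ fun t => attachingMap m hn (handlePoint m 1 (unitSphereSquare t)))
      fun _ => surgeredBase m hn := by
  let core : SurgeredManifold m hn := Glue.inr _ (handlePoint m 0 ⟨southPole, sqNorm_southPole⟩)
  have hbase : IsBasedAt (surgeredBase m hn)
      (Glue.inl _ ∘ fun t => attachingMap m hn (handlePoint m 1 (unitSphereSquare t))) :=
    isBasedAt_unitSphereSquare.comp fun u => Glue.inl _ (attachingMap m hn (handlePoint m 1 u))
  refine (hbase.homotopicThrough_const (A := Set.univ) (y := core)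
    ⟨fun q => Glue.inr _ (handlePoint m (σ q.1) (unitSphereSquare q.2)), ?_, ?_, ?_,
      fun s => ⟨?_, fun _ => Set.mem_univ _⟩⟩).mono fun _ hf => hf.1
  · have := Glue.continuous_inr (e := attachingMap m hn)
    fun_prop
  · intro t
    simp only [unitInterval.symm_zero]
    exact inr_handlePoint_one hn _
  · intro t
    simp [core, handlePoint]
  · exact (isBasedAt_unitSphereSquare.comp
      fun u => Glue.inr (attachingMap m hn) (handlePoint m (σ s) u)).isConstOnBoundary

theorem exists_complementCocycle_eq_natCast (m : ℕ) :
    ∃ g : (Fin 2 → I) → sphereComplement m n, Continuous g ∧ IsBasedAt (complementBase m hn) g ∧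
      complementCocycle (toSquare g) = n ∧
      HomotopicThrough (IsBasedAt (surgeredBase m hn)) (Glue.inl (attachingMap m hn) ∘ g)
        fun _ => surgeredBase m hn := by
  refine ⟨fun t => attachingMap m hn (handlePoint m 1 (unitSphereSquare t)), ?_,
    isBasedAt_unitSphereSquare.comp fun u => attachingMap m hn (handlePoint m 1 u), ?_,
    homotopicThrough_const_inl_attachingMap hn⟩
  · exact (attachingMap m hn).continuousOn.comp_continuous (by fun_prop)
      fun t => (mem_attachingMap_source hn).2 (handlePoint_one_fst_ne_zero _)
  · rw [← degreeCocycle_powerMap_unitHopfSquare hn, complementCocycle]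
    congr 1
    ext1 t
    exact congrArg Prod.fst (coe_attachingMap_handlePoint hn _)

theorem injective_piTwoEval_complementCocycle : Function.Injective (piTwoEval
    squareAdditiveOn_complementCocycle isCocycleOn_complementCocycle (complementBase m hn)) :=
  piTwoEval_injective _ _ fun _ hf hb h0 =>
    hb.homotopicThrough_const_of_degreeCocycle_eq_zero (complementBase_fst hn) hf hn h0

theorem homotopicThrough_const_inl_comp {g : (Fin 2 → I) → sphereComplement m n}
    (hg : Continuous g) (hb : IsBasedAt (complementBase m hn) g) {j : ℤ}
    (hdeg : complementCocycle (toSquare g) = j * n) :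
    HomotopicThrough (IsBasedAt (surgeredBase m hn)) (Glue.inl (attachingMap m hn) ∘ g)
      fun _ => surgeredBase m hn := by
  obtain ⟨δ, hδ, hδb, hδdeg, hδnull⟩ := exists_complementCocycle_eq_natCast hn m
  have hpow : hb.homotopyClass hg = hδb.homotopyClass hδ ^ j := by
    apply injective_piTwoEval_complementCocycle hn
    rw [map_zpow, piTwoEval_homotopyClass, piTwoEval_homotopyClass, ← ofAdd_zsmul, hdeg, hδdeg,
      zsmul_eq_mul]
  have hone := (homotopyClass_eq_one_iff (hδb.comp (Glue.inl (attachingMap m hn)))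
    (Glue.continuous_inl.comp hδ)).2 hδnull
  have hmap := congrArg (homotopyGroupMap
    (Glue.continuous_inl (e := attachingMap m hn)) (complementBase m hn)) hpow
  rw [map_zpow, homotopyGroupMap_homotopyClass, homotopyGroupMap_homotopyClass, hone,
    one_zpow] at hmap
  exact (homotopyClass_eq_one_iff _ _).1 hmap

end ComplementDegree

theorem nonempty_mulEquiv_zmod {G : Type*} [Group G] {n : ℕ} (hn : 0 < n)
    {E : G →* Multiplicative UnitAddCircle} (hE : Function.Injective E) {γ : G}
    (hγ : E γ = .ofAdd ((1 / n : ℝ) : UnitAddCircle))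
    (hrange : ∀ a, ∃ k : ℤ, E a = .ofAdd ((k / n : ℝ) : UnitAddCircle)) :
    Nonempty (G ≃* Multiplicative (ZMod n)) := by
  have hgen (a : G) : a ∈ Subgroup.zpowers γ := by
    obtain ⟨k, hk⟩ := hrange a
    refine Subgroup.mem_zpowers_iff.2 ⟨k, hE ?_⟩
    rw [map_zpow, hγ, hk, ← ofAdd_zsmul, ← AddCircle.coe_zsmul, zsmul_eq_mul, mul_one_div]
  have hcard : Nat.card G = n := by
    rw [← orderOf_eq_card_of_forall_mem_zpowers hgen, ← orderOf_injective E hE, hγ,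
      orderOf_ofAdd_eq_addOrderOf]
    exact AddCircle.addOrderOf_period_div hn
  exact ⟨(zmodMulEquivOfGenerator hgen hcard).symm⟩

section Evaluation

variable {m n : ℕ} (hn : 0 < n) {c : (I × I → SurgeredManifold m hn) → UnitAddCircle}
  (hc : ∀ s, IsCubeIn (Set.range (Glue.inl _)) s →
    c s = degreeCocycleMod n fun t => (Glue.retractLeft (s t)).1.1)

include hc in
theorem apply_toSquare_inl_comp {g : (Fin 2 → I) → sphereComplement m n} (hg : Continuous g) :
    c (toSquare (Glue.inl _ ∘ g)) =
      ((complementCocycle (toSquare g) / n : ℝ) : UnitAddCircle) := by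
  rw [hc _ ⟨continuous_toSquare (Glue.continuous_inl.comp hg), fun _ => ⟨_, rfl⟩⟩]
  simp only [toSquare, Function.comp_apply, Glue.retractLeft_inl, degreeCocycleMod,
    complementCocycle]

variable (hadd : SquareAdditiveOn Set.univ c) (hcocycle : IsCocycleOn Set.univ c)

include hadd hcocycle in
theorem apply_toSquare_eq_of_isConstOnBoundary {f g : (Fin 2 → I) → SurgeredManifold m hn}
    (H : HomotopicThrough IsConstOnBoundary f g) : c (toSquare f) = c (toSquare g) :=
  apply_toSquare_eq_of_homotopicThrough hadd hcocycle
    (H.mono fun _ hf => ⟨hf, fun _ => Set.mem_univ _⟩)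

include hc hadd hcocycle

theorem exists_intCast_degree {f : (Fin 2 → I) → SurgeredManifold m hn} (hf : Continuous f)
    (hb : IsBasedAt (surgeredBase m hn) f) :
    ∃ g : (Fin 2 → I) → sphereComplement m n, ∃ k : ℤ,
      Continuous g ∧ IsBasedAt (complementBase m hn) g ∧
      HomotopicThrough (IsBasedAt (surgeredBase m hn)) f (Glue.inl _ ∘ g) ∧
      complementCocycle (toSquare g) = k ∧ c (toSquare f) = ((k / n : ℝ) : UnitAddCircle) := by
  obtain ⟨g, hg, hgb, H⟩ := hb.exists_homotopicThrough_inl_comp hn (by simp) hf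
  obtain ⟨k, hk⟩ := exists_degreeCocycle_toSquare_eq_intCast (complementBase_fst hn) hg hgb
  refine ⟨g, k, hg, hgb, H, hk, ?_⟩
  rw [apply_toSquare_eq_of_isConstOnBoundary hn hadd hcocycle
    (H.mono fun _ hf => hf.isConstOnBoundary), apply_toSquare_inl_comp hn hc hg]
  exact congrArg (fun r : ℝ => ((r / n : ℝ) : UnitAddCircle)) hk

theorem homotopicThrough_const_of_apply_toSquare_eq_zero
    {f : (Fin 2 → I) → SurgeredManifold m hn} (hf : Continuous f)
    (hb : IsBasedAt (surgeredBase m hn) f) (h0 : c (toSquare f) = 0) :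
    HomotopicThrough (IsBasedAt (surgeredBase m hn)) f fun _ => surgeredBase m hn := by
  obtain ⟨g, k, hg, hgb, H, hk, hck⟩ := exists_intCast_degree hn hc hadd hcocycle hf hb
  obtain ⟨j, hj⟩ := (AddCircle.coe_eq_zero_iff (1 : ℝ)).1 (hck.symm.trans h0)
  rw [zsmul_eq_mul, mul_one, eq_div_iff (Nat.cast_ne_zero.2 hn.ne')] at hj
  exact H.trans (homotopicThrough_const_inl_comp hn hg hgb (hk.trans hj.symm))

theorem piTwoEval_injective_surgeredManifold (x : SurgeredManifold m hn) :
    Function.Injective (piTwoEval hadd hcocycle x) :=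
  piTwoEval_injective _ _ fun _ hf hb h0 => hb.homotopicThrough_const_of_joined
    (joined_surgeredManifold hn (surgeredBase m hn) x) (P := fun f => c (toSquare f) = 0)
    (fun _ => homotopicThrough_const_of_apply_toSquare_eq_zero hn hc hadd hcocycle)
    (fun _ _ H h => (apply_toSquare_eq_of_isConstOnBoundary hn hadd hcocycle H).trans h) hf h0

theorem exists_piTwoEval_eq_div (x : SurgeredManifold m hn) (a : π_ 2 (SurgeredManifold m hn) x) :
    ∃ k : ℤ, piTwoEval hadd hcocycle x a = .ofAdd ((k / n : ℝ) : UnitAddCircle) := by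
  obtain ⟨f, hb, hf, rfl⟩ := exists_homotopyClass_eq a
  obtain ⟨f', hb', H⟩ := hb.exists_homotopicThrough_of_path hf
    (joined_surgeredManifold hn (surgeredBase m hn) x).some
  obtain ⟨-, k, -, -, -, -, hk⟩ := exists_intCast_degree hn hc hadd hcocycle H.left.2 hb'
  exact ⟨k, congrArg Multiplicative.ofAdd
    ((apply_toSquare_eq_of_isConstOnBoundary hn hadd hcocycle H).symm.trans hk)⟩

theorem exists_piTwoEval_eq_one_div (x : SurgeredManifold m hn) :
    ∃ γ, piTwoEval hadd hcocycle x γ = .ofAdd ((1 / n : ℝ) : UnitAddCircle) := by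
  obtain ⟨g, hg, hgb, hdeg⟩ := exists_complementCocycle_eq_one hn m
  obtain ⟨f, hb, H⟩ := (hgb.comp (Glue.inl (attachingMap m hn))).exists_homotopicThrough_of_path
    (Glue.continuous_inl.comp hg) (joined_surgeredManifold hn x (surgeredBase m hn)).some
  refine ⟨hb.homotopyClass H.left.2, ?_⟩
  rw [piTwoEval_homotopyClass, apply_toSquare_eq_of_isConstOnBoundary hn hadd hcocycle H,
    apply_toSquare_inl_comp hn hc hg, hdeg]

end Evaluation

theorem nonempty_piTwo_surgeredManifold_mulEquiv {m n : ℕ} (hn : 0 < n)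
    (x : SurgeredManifold m hn) :
    Nonempty (π_ 2 (SurgeredManifold m hn) x ≃* Multiplicative (ZMod n)) := by
  obtain ⟨c, hadd, hcocycle, hc⟩ := exists_surgeredManifold_cocycle hn m
  obtain ⟨γ, hγ⟩ := exists_piTwoEval_eq_one_div hn hc hadd hcocycle x
  exact nonempty_mulEquiv_zmod hn (piTwoEval_injective_surgeredManifold hn hc hadd hcocycle x) hγ
    (exists_piTwoEval_eq_div hn hc hadd hcocycle x)

end SphereSurgery

end

/-- For every `d ≥ 6` and every positive integer `n` there is a closed (compact,
boundaryless) simply connected topological `d`-manifold `M` with `π₂(M) ≅ ℤ/nℤ`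
(the `d ≥ 6` case of Proposition 3.1(2) of the paper). -/
theorem exists_closed_manifold_pi_two_zmod (d : ℕ) (hd : 6 ≤ d) (n : ℕ) (hn : 0 < n) :
    ∃ (M : Type) (ts : TopologicalSpace M),
      letI := ts
      ∃ _ : ChartedSpace (EuclideanSpace ℝ (Fin d)) M,
        CompactSpace M ∧ T2Space M ∧ SimplyConnectedSpace M ∧
        ∀ x : M, Nonempty (π_ 2 M x ≃* Multiplicative (ZMod n)) := by
  obtain ⟨m, rfl⟩ := Nat.exists_eq_add_of_le' hd
  exact ⟨SphereSurgery.SurgeredManifold m hn, inferInstance,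
    (SphereSurgery.isLocallyModelled_surgeredManifold hn).chartedSpace,
    SphereSurgery.compactSpace_surgeredManifold hn, SphereSurgery.t2Space_surgeredManifold hn,
    SphereSurgery.simplyConnectedSpace_surgeredManifold hn,
    SphereSurgery.nonempty_piTwo_surgeredManifold_mulEquiv hn⟩
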